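/- (Rigidity Theorem I) Let m be a Radon measure on ℝ^n such that (ℝ^n, d_Euclid, m) is a Lipschitz differentiability space, where d_Euclid is the Euclidean metric. Then m is absolutely continuous with respect to the Lebesgue measure on ℝ^n. -/

import Mathlib

open MeasureTheory
open scoped ENNReal NNReal

/-- The local Lipschitz constant (slope) `lip f (x) = limsup_{y → x} |f y - f x| / d(y,x)`,
equal to `0` at isolated points. -/
noncomputable def lip {M : Type*} [PseudoMetricSpace M] (f : M → ℝ) (x : M) : ℝ :=
  Filter.limsup (fun y => |f y - f x| / dist y x) (nhdsWithin x {x}ᶜ)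

/-- `q` is a norm on `ℝ^k`. -/
def IsNormOn {k : ℕ} (q : (Fin k → ℝ) → ℝ) : Prop :=
  (∀ a, 0 ≤ q a) ∧ (∀ a, q a = 0 ↔ a = 0) ∧
  (∀ (c : ℝ) (a : Fin k → ℝ), q (c • a) = |c| * q a) ∧
  (∀ a b : Fin k → ℝ, q (a + b) ≤ q a + q b)

/-- Lipschitz functions `f 0, …, f (k-1)` are independent on `A`: for `μ`-a.e. `x ∈ A` the map
`a ↦ lip (Σ i, a i * f i) (x)` is a norm on `ℝ^k`. -/
def IndependentOn {M : Type*} [PseudoMetricSpace M] [MeasurableSpace M] (μ : Measure M)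
    {k : ℕ} (f : Fin k → M → ℝ) (A : Set M) : Prop :=
  ∀ᵐ x ∂(μ.restrict A),
    IsNormOn (fun a : Fin k → ℝ => lip (fun y => ∑ i, a i * f i y) x)

/-- `(M,d,μ)` is a (Lipschitz) differentiability space: there is `N` such that no family of
more than `N` Lipschitz functions is independent on a Borel set of positive measure. -/
def IsDiffSpace {M : Type*} [PseudoMetricSpace M] [MeasurableSpace M] (μ : Measure M) : Prop :=
  ∃ N : ℕ, ∀ (k : ℕ) (f : Fin k → M → ℝ) (A : Set M), MeasurableSet A → 0 < μ A →
    (∀ i, ∃ K : ℝ≥0, LipschitzWith K (f i)) → IndependentOn μ f A → k ≤ N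

/-!
Fix a bounded piece `μ` of `m` and a unit vector `e`. If for some `δ > 0` there are `C¹` functions
`g` with `‖∇g‖ ≤ 1` and `‖g‖_∞` arbitrarily small but `∫ ∂ₑg dμ ≥ δ`, then suitable sums of such
functions are arbitrarily large independent Lipschitz families on a compact set of positive measure,
which a differentiability space does not admit. Otherwise, for every `δ > 0`,
`|∫ ∂ₑg dμ| ≤ δ ‖∇g‖_∞ + C_δ ‖g‖_∞`, so that by duality `∂ₑμ = σ + div T` with measures `σ` and `T`,
where `T` has mass at most `δ`.

The difference of the mollifications of `μ` at two scales is the convolution of `μ` with the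
divergence of a kernel `k`, hence up to sign `∑ᵢ (k * σ + ∇k * T)` over the coordinate directions.
Here `k * σ` is small in `L¹` at small scales, and `∇k` is a Calderón–Zygmund kernel with constants
independent of the scales, so `∇k * T` is small in weak `L¹`. Since the mollifications are
nonnegative, this controls their loss of mass in `L¹`. If `μ` lived on a compact null set, then the
mollifications would converge to `0` almost everywhere, losing all their mass.
-/

open Filter Metric Set Topology Module
open scoped ContDiff

section LocalLipschitz

variable {M : Type*} [PseudoMetricSpace M] {f g : M → ℝ} {C D : ℝ≥0} {x : M}

lemma slope_le_of_lipschitzWith (hf : LipschitzWith C f) (x y : M) :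
    |f y - f x| / dist y x ≤ C :=
  div_le_of_le_mul₀ dist_nonneg C.2 (hf.dist_le_mul y x)

lemma isBoundedUnder_slope (hf : LipschitzWith C f) (x : M) (l : Filter M) :
    IsBoundedUnder (· ≤ ·) l fun y ↦ |f y - f x| / dist y x :=
  isBoundedUnder_of ⟨C, slope_le_of_lipschitzWith hf x⟩

lemma isBoundedUnder_ge_slope (f : M → ℝ) (x : M) (l : Filter M) :
    IsBoundedUnder (· ≥ ·) l fun y ↦ |f y - f x| / dist y x :=
  isBoundedUnder_of ⟨0, fun y ↦ by positivity⟩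

lemma le_lip_of_frequently (hf : LipschitzWith C f) {b : ℝ}
    (h : ∃ᶠ y in 𝓝[≠] x, b ≤ |f y - f x| / dist y x) : b ≤ lip f x :=
  le_limsup_of_frequently_le h (isBoundedUnder_slope hf x _)

lemma lip_nonneg [NeBot (𝓝[≠] x)] (hf : LipschitzWith C f) : 0 ≤ lip f x :=
  le_lip_of_frequently hf (Frequently.of_forall fun y ↦ by positivity)

lemma lip_add_le [NeBot (𝓝[≠] x)] (hf : LipschitzWith C f) (hg : LipschitzWith D g) :
    lip (fun y ↦ f y + g y) x ≤ lip f x + lip g x := by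
  have hslope : ∀ y, |f y + g y - (f x + g x)| / dist y x
      ≤ |f y - f x| / dist y x + |g y - g x| / dist y x := fun y ↦ by
    rw [← add_div, add_sub_add_comm]
    exact div_le_div_of_nonneg_right (abs_add_le _ _) dist_nonneg
  calc lip (fun y ↦ f y + g y) x
      ≤ limsup (fun y ↦ |f y - f x| / dist y x + |g y - g x| / dist y x) (𝓝[≠] x) :=
        limsup_le_limsup (Eventually.of_forall hslope)
          (isBoundedUnder_ge_slope (fun y ↦ f y + g y) x _).isCoboundedUnder_le
          (isBoundedUnder_of ⟨C + D, fun y ↦ add_le_add (slope_le_of_lipschitzWith hf x y)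
            (slope_le_of_lipschitzWith hg x y)⟩)
    _ ≤ lip f x + lip g x :=
        limsup_add_le (isBoundedUnder_ge_slope f x _) (isBoundedUnder_slope hf x _)
          (isBoundedUnder_ge_slope g x _).isCoboundedUnder_le (isBoundedUnder_slope hg x _)

lemma lip_const_mul [NeBot (𝓝[≠] x)] (hf : LipschitzWith C f) (c : ℝ) :
    lip (fun y ↦ c * f y) x = |c| * lip f x := by
  have hslope : (fun y ↦ |c * f y - c * f x| / dist y x)
      = fun y ↦ |c| * (|f y - f x| / dist y x) := by
    funext y
    rw [← mul_sub, abs_mul, mul_div_assoc]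
  rw [lip, hslope]
  exact ((monotone_mul_left_of_nonneg (abs_nonneg c)).map_limsup_of_continuousAt _
    (continuous_const_mul |c|).continuousAt (isBoundedUnder_slope hf x _)
    (isBoundedUnder_ge_slope f x _).isCoboundedUnder_le).symm

lemma exists_lipschitzWith_linearCombination {ι : Type*} [Fintype ι] {f : ι → M → ℝ}
    (hf : ∀ i, ∃ K : ℝ≥0, LipschitzWith K (f i)) (a : ι → ℝ) :
    ∃ K : ℝ≥0, LipschitzWith K fun y ↦ ∑ i, a i * f i y := by
  have hsum : ∃ K : ℝ≥0, LipschitzWith K (∑ i, fun y ↦ a i * f i y) := by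
    refine Finset.sum_induction _ (fun g : M → ℝ ↦ ∃ K : ℝ≥0, LipschitzWith K g)
      (fun g h ⟨K, hg⟩ ⟨L, hh⟩ ↦ ⟨K + L, hg.add hh⟩) ⟨0, LipschitzWith.const 0⟩ fun i _ ↦ ?_
    obtain ⟨K, hK⟩ := hf i
    exact ⟨‖a i‖₊ * K, (lipschitzWith_smul (a i)).comp hK⟩
  simpa only [Finset.sum_fn] using hsum

lemma isNormOn_lip [NeBot (𝓝[≠] x)] {k : ℕ} {f : Fin k → M → ℝ}
    (hf : ∀ i, ∃ K : ℝ≥0, LipschitzWith K (f i))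
    (hpos : ∀ a : Fin k → ℝ, a ≠ 0 → 0 < lip (fun y ↦ ∑ i, a i * f i y) x) :
    IsNormOn fun a : Fin k → ℝ ↦ lip (fun y ↦ ∑ i, a i * f i y) x := by
  have hsmul (c : ℝ) (a : Fin k → ℝ) :
      lip (fun y ↦ ∑ i, (c • a) i * f i y) x = |c| * lip (fun y ↦ ∑ i, a i * f i y) x := by
    obtain ⟨C, hC⟩ := exists_lipschitzWith_linearCombination hf a
    simp only [← lip_const_mul hC, Pi.smul_apply, smul_eq_mul, mul_assoc, Finset.mul_sum]
  refine ⟨fun a ↦ ?_, fun a ↦ ⟨fun h ↦ ?_, ?_⟩, hsmul, fun a b ↦ ?_⟩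
  · obtain ⟨C, hC⟩ := exists_lipschitzWith_linearCombination hf a
    exact lip_nonneg hC
  · by_contra ha
    exact (hpos a ha).ne' h
  · rintro rfl
    simpa only [zero_smul, abs_zero, zero_mul] using hsmul 0 0
  · obtain ⟨C, hC⟩ := exists_lipschitzWith_linearCombination hf a
    obtain ⟨D, hD⟩ := exists_lipschitzWith_linearCombination hf b
    simpa only [Pi.add_apply, add_mul, Finset.sum_add_distrib] using lip_add_le hC hD

/-- On `K` there are Lipschitz families of every size whose nontrivial linear combinations all
have positive local Lipschitz constant at each point of `K`: the obstruction to being a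
differentiability space. -/
def HasIndependentFamilies (K : Set M) : Prop :=
  ∀ k : ℕ, ∃ f : Fin k → M → ℝ, (∀ i, ∃ C : ℝ≥0, LipschitzWith C (f i)) ∧
    ∀ x ∈ K, ∀ a : Fin k → ℝ, a ≠ 0 → 0 < lip (fun y ↦ ∑ i, a i * f i y) x

theorem IsDiffSpace.measure_eq_zero [MeasurableSpace M] [∀ x : M, NeBot (𝓝[≠] x)] {μ : Measure M}
    (hμ : IsDiffSpace μ) {K : Set M} (hKm : MeasurableSet K) (hK : HasIndependentFamilies K) :
    μ K = 0 := by
  obtain ⟨N, hN⟩ := hμ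
  obtain ⟨f, hf, hpos⟩ := hK (N + 1)
  by_contra h
  refine (N.lt_succ_self).not_ge (hN _ f K hKm (pos_iff_ne_zero.2 h) hf ?_)
  exact (ae_restrict_iff' hKm).2 (Eventually.of_forall fun x hx ↦ isNormOn_lip hf (hpos x hx))

end LocalLipschitz

section WavePacket

variable {E : Type*} [NormedAddCommGroup E] [NormedSpace ℝ E]

lemma exists_cutoff [FiniteDimensional ℝ E] {K : Set E} (hK : IsCompact K) {d : ℝ} (hd : 0 < d) :
    ∃ (χ : E → ℝ) (B : ℝ), ContDiff ℝ 1 χ ∧ (∀ x, χ x ∈ Icc 0 1) ∧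
      (∀ x ∉ thickening (d / 2) K, χ x = 0) ∧ (∀ x ∈ cthickening (d / 4) K, χ x = 1) ∧
      0 < B ∧ ∀ x, ‖fderiv ℝ χ x‖ ≤ B := by
  obtain ⟨χ, hχ, hmem, hzero, hone⟩ := exists_contMDiff_zero_iff_one_iff_of_isClosed
    (modelWithCornersSelf ℝ E) (n := 1) (s := (thickening (d / 2) K)ᶜ) (t := cthickening (d / 4) K)
    isOpen_thickening.isClosed_compl isClosed_cthickening
    (disjoint_compl_left_iff_subset.2
      (cthickening_subset_thickening' (by linarith) (by linarith) K))
  have hsupp : HasCompactSupport χ := HasCompactSupport.intro (K := cthickening (d / 2) K)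
    hK.cthickening fun x hx ↦ (hzero x).1 fun h ↦ hx (thickening_subset_cthickening _ _ h)
  obtain ⟨B, hB⟩ := (hsupp.fderiv (𝕜 := ℝ)).exists_bound_of_continuous
    ((contMDiff_iff_contDiff.1 hχ).continuous_fderiv one_ne_zero)
  exact ⟨χ, max B 1, contMDiff_iff_contDiff.1 hχ, fun x ↦ hmem ⟨x, rfl⟩, fun x hx ↦ (hzero x).1 hx,
    fun x hx ↦ (hone x).1 hx, by positivity, fun x ↦ (hB x).trans (le_max_left _ _)⟩

lemma mul_le_sub_of_fderiv_near {g : E → ℝ} (hg : Differentiable ℝ g) {x e : E} (he : ‖e‖ = 1)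
    {c ε t : ℝ} (ht : 0 ≤ t) (hc : c ≤ fderiv ℝ g x e)
    (hε : ∀ y ∈ closedBall x t, ‖fderiv ℝ g y - fderiv ℝ g x‖ ≤ ε) :
    (c - ε) * t ≤ g (x + t • e) - g x := by
  have hte : ‖t • e‖ = t := by rw [norm_smul, he, mul_one, Real.norm_of_nonneg ht]
  have hmv := (convex_closedBall x t).norm_image_sub_le_of_norm_hasFDerivWithin_le'
    (fun y _ ↦ (hg y).hasFDerivAt.hasFDerivWithinAt) hε (mem_closedBall_self ht)
    (y := x + t • e) (by simp only [mem_closedBall, dist_self_add_left, hte, le_refl])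
  simp only [add_sub_cancel_left, hte, map_smul, smul_eq_mul, Real.norm_eq_abs] at hmv
  nlinarith [(abs_le.1 hmv).1]

/-- A wave packet of height `κ` for the direction `e`: a function `w` of slope at most `3` that is
flat off the `d`-thickening of `K` and nearly flat on its `d'`-thickening, yet oscillates with slope
at least `c` along `e` at the single scale `τ` at every point of `K`. -/
structure IsWavePacket (K : Set E) (e : E) (c d κ : ℝ) (w : E → ℝ) (τ d' : ℝ) : Prop where
  differentiable : Differentiable ℝ w
  abs_le : ∀ x, |w x| ≤ κ
  norm_fderiv_le : ∀ x, ‖fderiv ℝ w x‖ ≤ 3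
  fderiv_eq_zero : ∀ x ∉ thickening d K, fderiv ℝ w x = 0
  scale_pos : 0 < τ
  scale_lt : τ < d
  inner_pos : 0 < d'
  norm_fderiv_le_of_mem : ∀ x ∈ thickening d' K, ‖fderiv ℝ w x‖ ≤ κ
  oscillation : ∀ x ∈ K, c * τ ≤ |w (x + τ • e) - w x|

lemma norm_fderiv_mul_le {χ G : E → ℝ} {x : E} {B b : ℝ} (hχ : DifferentiableAt ℝ χ x)
    (hG : DifferentiableAt ℝ G x) (hχmem : χ x ∈ Icc 0 1) (hχB : ‖fderiv ℝ χ x‖ ≤ B)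
    (hGb : |G x| ≤ b) : ‖fderiv ℝ (fun y ↦ χ y * G y) x‖ ≤ ‖fderiv ℝ G x‖ + b * B := by
  rw [fderiv_fun_mul hχ hG]
  refine (norm_add_le _ _).trans ?_
  rw [norm_smul, norm_smul, Real.norm_eq_abs, Real.norm_eq_abs, abs_of_nonneg hχmem.1]
  gcongr
  · exact mul_le_of_le_one_left (norm_nonneg _) hχmem.2
  · exact (abs_nonneg _).trans hGb

/-- A sequence of test functions that tend to `0` uniformly although their derivatives, which
converge uniformly on `K`, stay at least `c` in direction `e` there. -/
structure IsVanishingSteepSeq (K : Set E) (e : E) (c : ℝ) (g : ℕ → E → ℝ) : Prop where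
  contDiff : ∀ l, ContDiff ℝ 1 (g l)
  hasCompactSupport : ∀ l, HasCompactSupport (g l)
  norm_fderiv_le : ∀ l x, ‖fderiv ℝ (g l) x‖ ≤ 1
  tendstoUniformly : TendstoUniformly g 0 atTop
  uniformCauchySeqOn : UniformCauchySeqOn (fun l ↦ fderiv ℝ (g l)) atTop K
  steep : ∀ᶠ l in atTop, ∀ x ∈ K, c ≤ fderiv ℝ (g l) x e

namespace IsVanishingSteepSeq

variable {K : Set E} {e : E} {c : ℝ} {g : ℕ → E → ℝ}

lemma eventually_abs_le (hg : IsVanishingSteepSeq K e c g) {ε : ℝ} (hε : 0 < ε) :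
    ∀ᶠ l in atTop, ∀ x, |g l x| ≤ ε :=
  (tendstoUniformly_iff.1 hg.tendstoUniformly ε hε).mono fun l hl x ↦ by
    simpa only [Pi.zero_apply, dist_zero_left, Real.norm_eq_abs] using (hl x).le

lemma differentiable (hg : IsVanishingSteepSeq K e c g) (l : ℕ) : Differentiable ℝ (g l) :=
  (hg.contDiff l).differentiable one_ne_zero

-- The difference `g l - g l'` of two late members is small and has small derivative on `K`, but at
-- a scale `τ` adapted to `g l` it inherits the increments of `g l`, since `g l'` is far smaller.
lemma exists_oscillating_sub (hg : IsVanishingSteepSeq K e c g) (hc : 0 < c) (he : ‖e‖ = 1)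
    {ε κ ρ : ℝ} (hε : 0 < ε) (hκ : 0 < κ) (hρ : 0 < ρ) :
    ∃ (G : E → ℝ) (τ : ℝ), ContDiff ℝ 1 G ∧ (∀ x, |G x| ≤ ε) ∧ (∀ x, ‖fderiv ℝ G x‖ ≤ 2) ∧
      (∀ x ∈ K, ‖fderiv ℝ G x‖ < κ) ∧ 0 < τ ∧ τ ≤ ρ ∧
      ∀ x ∈ K, c / 2 * τ ≤ |G (x + τ • e) - G x| := by
  obtain ⟨N, hN⟩ := Metric.uniformCauchySeqOn_iff.1 hg.uniformCauchySeqOn κ hκ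
  obtain ⟨l, hlN, hlε, hlc⟩ := ((eventually_ge_atTop N).and
    ((hg.eventually_abs_le (half_pos hε)).and hg.steep)).exists
  obtain ⟨τ₀, hτ₀, huc⟩ := Metric.uniformContinuous_iff.1
    (((hg.hasCompactSupport l).fderiv (𝕜 := ℝ)).uniformContinuous_of_continuous
      ((hg.contDiff l).continuous_fderiv one_ne_zero)) (c / 4) (by positivity)
  set τ := min (τ₀ / 2) ρ
  have hτ : 0 < τ := by positivity
  have hττ₀ : τ < τ₀ := (min_le_left _ _).trans_lt (half_lt_self hτ₀)
  obtain ⟨l', hlN', hlε', hlτ'⟩ := ((eventually_ge_atTop N).and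
    ((hg.eventually_abs_le (half_pos hε)).and
      (hg.eventually_abs_le (ε := c * τ / 8) (by positivity)))).exists
  have hfderiv (x : E) :
      fderiv ℝ (fun y ↦ g l y - g l' y) x = fderiv ℝ (g l) x - fderiv ℝ (g l') x :=
    fderiv_fun_sub (hg.differentiable l x) (hg.differentiable l' x)
  refine ⟨fun y ↦ g l y - g l' y, τ, (hg.contDiff l).sub (hg.contDiff l'), fun x ↦ ?_, fun x ↦ ?_,
    fun x hx ↦ ?_, hτ, min_le_right _ _, fun x hx ↦ ?_⟩
  · linarith [abs_sub (g l x) (g l' x), hlε x, hlε' x]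
  · rw [hfderiv]
    linarith [norm_sub_le (fderiv ℝ (g l) x) (fderiv ℝ (g l') x), hg.norm_fderiv_le l x,
      hg.norm_fderiv_le l' x]
  · rw [hfderiv, ← dist_eq_norm]
    exact hN l hlN l' hlN' x hx
  · have hincr : (c - c / 4) * τ ≤ g l (x + τ • e) - g l x :=
      mul_le_sub_of_fderiv_near (hg.differentiable l) he hτ.le (hlc x hx) fun y hy ↦ by
        rw [← dist_eq_norm]
        exact (huc ((mem_closedBall.1 hy).trans_lt hττ₀)).le
    refine le_trans ?_ (le_abs_self _)
    linarith [abs_le.1 (hlτ' x), abs_le.1 (hlτ' (x + τ • e))]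

lemma exists_isWavePacket [FiniteDimensional ℝ E] (hg : IsVanishingSteepSeq K e c g)
    (hK : IsCompact K) (hc : 0 < c) (he : ‖e‖ = 1) {d κ : ℝ} (hd : 0 < d) (hκ : 0 < κ) :
    ∃ (w : E → ℝ) (τ d' : ℝ), IsWavePacket K e (c / 2) d κ w τ d' := by
  obtain ⟨χ, B, hχ, hχmem, hχzero, hχone, hB, hχB⟩ := exists_cutoff hK hd
  obtain ⟨G, τ, hG, hGε, hGfderiv, hGK, hτ, hτd, hosc⟩ :=
    hg.exists_oscillating_sub hc he (ε := min κ (1 / B)) (ρ := d / 4) (by positivity) hκ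
      (by positivity)
  have hχnhds {x : E} (hx : x ∈ K) : χ =ᶠ[𝓝 x] fun _ ↦ 1 := by
    filter_upwards [isOpen_thickening.mem_nhds
      (self_subset_thickening (show 0 < d / 4 by positivity) K hx)] with y hy
    exact hχone y (thickening_subset_cthickening _ _ hy)
  have hw : ContDiff ℝ 1 fun y ↦ χ y * G y := hχ.mul hG
  obtain ⟨d', hd', hd'K⟩ := hK.exists_thickening_subset_open
    (t := {x | ‖fderiv ℝ (fun y ↦ χ y * G y) x‖ < κ})
    (isOpen_lt (hw.continuous_fderiv one_ne_zero).norm continuous_const) fun x hx ↦ by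
      have hwG : (fun y ↦ χ y * G y) =ᶠ[𝓝 x] G :=
        (hχnhds hx).mono fun y hy ↦ by simp only [hy, one_mul]
      simpa only [mem_ofPred_eq, hwG.fderiv_eq] using hGK x hx
  refine ⟨fun y ↦ χ y * G y, τ, d', hw.differentiable one_ne_zero, fun x ↦ ?_, fun x ↦ ?_,
    fun x hx ↦ ?_, hτ, by linarith, hd', fun x hx ↦ (hd'K hx).le, fun x hx ↦ ?_⟩
  · rw [abs_mul, abs_of_nonneg (hχmem x).1]
    exact (mul_le_of_le_one_left (abs_nonneg _) (hχmem x).2).trans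
      ((hGε x).trans (min_le_left _ _))
  · have := norm_fderiv_mul_le (hχ.differentiable one_ne_zero x) (hG.differentiable one_ne_zero x)
      (hχmem x) (hχB x) ((hGε x).trans (min_le_right _ _))
    linarith [hGfderiv x, one_div_mul_cancel hB.ne']
  · have hx' : x ∈ (cthickening (d / 2) K)ᶜ := fun h ↦
      hx (cthickening_subset_thickening' hd (by linarith) K h)
    have hzero : (fun y ↦ χ y * G y) =ᶠ[𝓝 x] fun _ ↦ 0 := by
      filter_upwards [isClosed_cthickening.isOpen_compl.mem_nhds hx'] with y hy
      rw [hχzero y fun h ↦ hy (thickening_subset_cthickening _ _ h), zero_mul]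
    rw [hzero.fderiv_eq, fderiv_const_apply]
  · have hxe : x + τ • e ∈ cthickening (d / 4) K := mem_cthickening_of_dist_le _ x _ _ hx <| by
      rwa [dist_self_add_left, norm_smul, he, mul_one, Real.norm_of_nonneg hτ.le]
    simpa only [(hχnhds hx).eq_of_nhds, hχone _ hxe, one_mul] using hosc x hx

end IsVanishingSteepSeq

end WavePacket

section PacketSeries

variable {E : Type*} [NormedAddCommGroup E] [NormedSpace ℝ E]

/-- Wave packets `w r` at rapidly decreasing scales: the `r`-th packet lives where all earlier ones
are already nearly flat, and the later ones are negligible at its scale `τ r`. -/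
structure IsPacketSeq (K : Set E) (e : E) (c : ℝ) (w : ℕ → E → ℝ) (κ d τ d' : ℕ → ℝ) : Prop where
  packet : ∀ r, IsWavePacket K e c (d r) (κ r) (w r) (τ r) (d' r)
  height_pos : ∀ r, 0 < κ r
  height_zero : κ 0 ≤ c / 8
  height_succ : ∀ r, κ (r + 1) ≤ 1 / 2 * κ r
  height_succ_le_scale : ∀ r, κ (r + 1) ≤ c / 16 * τ r
  radius_zero : d 0 ≤ 1
  radius_succ : ∀ r, d (r + 1) ≤ 1 / 2 * d r
  radius_succ_le_inner : ∀ r, d (r + 1) ≤ d' r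

lemma exists_isPacketSeq {K : Set E} {e : E} {c : ℝ} (hc : 0 < c)
    (hpacket : ∀ d κ : ℝ, 0 < d → 0 < κ →
      ∃ (w : E → ℝ) (τ d' : ℝ), IsWavePacket K e c d κ w τ d') :
    ∃ (w : ℕ → E → ℝ) (κ d τ d' : ℕ → ℝ), IsPacketSeq K e c w κ d τ d' := by
  have hpacket' (p : {p : ℝ × ℝ // 0 < p.1 ∧ 0 < p.2}) :
      ∃ (w : E → ℝ) (τ d' : ℝ), IsWavePacket K e c p.1.1 p.1.2 w τ d' :=
    hpacket _ _ p.2.1 p.2.2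
  choose W T D hW using hpacket'
  let s : ℕ → {p : ℝ × ℝ // 0 < p.1 ∧ 0 < p.2} := fun r ↦
    Nat.rec ⟨(1, c / 8), by positivity, by positivity⟩
      (fun _ p ↦ ⟨(min (D p) (1 / 2 * p.1.1), min (1 / 2 * p.1.2) (c / 16 * T p)),
        lt_min (hW p).inner_pos (mul_pos one_half_pos p.2.1),
        lt_min (mul_pos one_half_pos p.2.2) (mul_pos (by positivity) (hW p).scale_pos)⟩) r
  exact ⟨fun r ↦ W (s r), fun r ↦ (s r).1.2, fun r ↦ (s r).1.1, fun r ↦ T (s r), fun r ↦ D (s r),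
    fun r ↦ hW (s r), fun r ↦ (s r).2.2, le_rfl, fun r ↦ min_le_left _ _, fun r ↦ min_le_right _ _,
    le_rfl, fun r ↦ min_le_right _ _, fun r ↦ min_le_left _ _⟩

namespace IsPacketSeq

variable {K : Set E} {e : E} {c : ℝ} {w : ℕ → E → ℝ} {κ d τ d' : ℕ → ℝ}

lemma radius_antitone (hw : IsPacketSeq K e c w κ d τ d') : Antitone d :=
  antitone_nat_of_succ_le fun r ↦ (hw.radius_succ r).trans
    (by linarith [(hw.packet r).scale_pos, (hw.packet r).scale_lt])

lemma norm_fderiv_le_of_lt (hw : IsPacketSeq K e c w κ d τ d') {q r : ℕ} (hqr : q < r) {x : E}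
    (hx : x ∈ thickening (d r) K) : ‖fderiv ℝ (w q) x‖ ≤ κ q :=
  (hw.packet q).norm_fderiv_le_of_mem x <|
    thickening_mono ((hw.radius_antitone hqr).trans (hw.radius_succ_le_inner q)) K hx

lemma height_add_le (hw : IsPacketSeq K e c w κ d τ d') (r q : ℕ) :
    κ (q + r) ≤ (1 / 2) ^ q * κ r := by
  simpa only [zero_add] using le_geom (u := fun q ↦ κ (q + r)) one_half_pos.le q fun k _ ↦ by
    simpa only [add_right_comm] using hw.height_succ (k + r)

lemma summable_height (hw : IsPacketSeq K e c w κ d τ d') : Summable κ :=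
  Summable.of_nonneg_of_le (fun r ↦ (hw.height_pos r).le) (hw.height_add_le 0)
    (summable_geometric_two.mul_right _)

lemma tsum_height_add_le (hw : IsPacketSeq K e c w κ d τ d') (r : ℕ) :
    ∑' q, κ (q + r) ≤ 2 * κ r := by
  rw [← tsum_geometric_two, ← tsum_mul_right]
  exact ((summable_nat_add_iff r).2 hw.summable_height).tsum_le_tsum (hw.height_add_le r)
    (summable_geometric_two.mul_right _)

lemma sum_range_height_le (hw : IsPacketSeq K e c w κ d τ d') (r : ℕ) :
    ∑ q ∈ Finset.range r, κ q ≤ c / 4 :=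
  calc ∑ q ∈ Finset.range r, κ q ≤ ∑' q, κ q :=
        hw.summable_height.sum_le_tsum _ fun r _ ↦ (hw.height_pos r).le
    _ ≤ 2 * κ 0 := by simpa only [add_zero] using hw.tsum_height_add_le 0
    _ ≤ c / 4 := by linarith [hw.height_zero]

lemma tendsto_scale (hw : IsPacketSeq K e c w κ d τ d') : Tendsto τ atTop (𝓝 0) := by
  refine squeeze_zero (fun r ↦ (hw.packet r).scale_pos.le)
    (fun r ↦ (hw.packet r).scale_lt.le.trans ?_)
    (tendsto_pow_atTop_nhds_zero_of_lt_one one_half_pos.le one_half_lt_one)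
  exact (le_geom one_half_pos.le r fun k _ ↦ hw.radius_succ k).trans
    (mul_le_of_le_one_right (by positivity) hw.radius_zero)

variable {α : ℕ → ℝ} {A : ℝ}

lemma summable_mul (hw : IsPacketSeq K e c w κ d τ d') (hα : ∀ r, |α r| ≤ A) (x : E) :
    Summable fun r ↦ α r * w r x :=
  (hw.summable_height.mul_left A).of_norm_bounded fun r ↦ by
    rw [Real.norm_eq_abs, abs_mul]
    exact mul_le_mul (hα r) ((hw.packet r).abs_le x) (abs_nonneg _) ((abs_nonneg _).trans (hα r))

-- Only the last packet that is active at `x` can be steep there.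
lemma sum_norm_fderiv_le (hw : IsPacketSeq K e c w κ d τ d') (x : E) (N : ℕ) :
    ∑ r ∈ Finset.range N, ‖fderiv ℝ (w r) x‖ ≤ 3 + ∑ r ∈ Finset.range N, κ r := by
  induction N with
  | zero => simp only [Finset.range_zero, Finset.sum_empty, add_zero, Nat.ofNat_nonneg]
  | succ N ih =>
    rw [Finset.sum_range_succ, Finset.sum_range_succ]
    by_cases hx : x ∈ thickening (d N) K
    · have : ∑ r ∈ Finset.range N, ‖fderiv ℝ (w r) x‖ ≤ ∑ r ∈ Finset.range N, κ r :=
        Finset.sum_le_sum fun q hq ↦ hw.norm_fderiv_le_of_lt (Finset.mem_range.1 hq) hx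
      linarith [(hw.packet N).norm_fderiv_le x, hw.height_pos N]
    · rw [(hw.packet N).fderiv_eq_zero x hx, norm_zero]
      linarith [hw.height_pos N]

lemma exists_lipschitzWith_tsum (hw : IsPacketSeq K e c w κ d τ d') (hα : ∀ r, |α r| ≤ A) :
    ∃ C : ℝ≥0, LipschitzWith C fun x ↦ ∑' r, α r * w r x := by
  have hA : 0 ≤ A := (abs_nonneg _).trans (hα 0)
  have hderiv (r : ℕ) (x : E) : DifferentiableAt ℝ (fun y ↦ α r * w r y) x :=
    ((hw.packet r).differentiable x).const_mul _
  have hpartial (N : ℕ) : LipschitzWith (A * (3 + c / 4)).toNNReal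
      fun x ↦ ∑ r ∈ Finset.range N, α r * w r x := by
    refine lipschitzWith_of_nnnorm_fderiv_le (𝕜 := ℝ)
      (fun x ↦ DifferentiableAt.fun_sum fun r _ ↦ hderiv r x) fun x ↦ ?_
    rw [← NNReal.coe_le_coe, coe_nnnorm, fderiv_fun_sum fun r _ ↦ hderiv r x]
    calc ‖∑ r ∈ Finset.range N, fderiv ℝ (fun y ↦ α r * w r y) x‖
        ≤ ∑ r ∈ Finset.range N, A * ‖fderiv ℝ (w r) x‖ := norm_sum_le_of_le _ fun r _ ↦ by
          rw [fderiv_const_mul ((hw.packet r).differentiable x), norm_smul]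
          exact mul_le_mul_of_nonneg_right (hα r) (norm_nonneg _)
      _ ≤ A * (3 + c / 4) := by
          rw [← Finset.mul_sum]
          exact mul_le_mul_of_nonneg_left ((hw.sum_norm_fderiv_le x N).trans
            (add_le_add_right (hw.sum_range_height_le N) 3)) hA
      _ ≤ _ := Real.le_coe_toNNReal _
  refine ⟨(A * (3 + c / 4)).toNNReal, LipschitzWith.of_dist_le_mul fun x y ↦ ?_⟩
  have htendsto (z : E) := (hw.summable_mul hα z).hasSum.tendsto_sum_nat
  exact le_of_tendsto ((htendsto x).dist (htendsto y))
    (Eventually.of_forall fun N ↦ (hpartial N).dist_le_mul x y)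

lemma norm_scale_smul (hw : IsPacketSeq K e c w κ d τ d') (he : ‖e‖ = 1) (r : ℕ) :
    ‖τ r • e‖ = τ r := by
  rw [norm_smul, he, mul_one, Real.norm_of_nonneg (hw.packet r).scale_pos.le]

lemma abs_sub_le_of_lt (hw : IsPacketSeq K e c w κ d τ d') (he : ‖e‖ = 1) {q r : ℕ} (hqr : q < r)
    {x : E} (hx : x ∈ K) : |w q (x + τ r • e) - w q x| ≤ κ q * τ r := by
  have hmem : x + τ r • e ∈ ball x (d r) := by
    rw [mem_ball, dist_self_add_left, hw.norm_scale_smul he]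
    exact (hw.packet r).scale_lt
  have := (convex_ball x (d r)).norm_image_sub_le_of_norm_fderiv_le (𝕜 := ℝ)
    (fun z _ ↦ (hw.packet q).differentiable z)
    (fun z hz ↦ hw.norm_fderiv_le_of_lt hqr (mem_thickening_iff.2 ⟨x, hx, hz⟩))
    (mem_ball_self ((hw.packet r).scale_pos.trans (hw.packet r).scale_lt)) hmem
  rwa [add_sub_cancel_left, hw.norm_scale_smul he] at this

lemma abs_sum_range_sub_le (hw : IsPacketSeq K e c w κ d τ d') (he : ‖e‖ = 1)
    (hα : ∀ r, |α r| ≤ A) (r : ℕ) {x : E} (hx : x ∈ K) :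
    |∑ q ∈ Finset.range r, (α q * w q (x + τ r • e) - α q * w q x)| ≤ A * (c / 4 * τ r) := by
  have hA : 0 ≤ A := (abs_nonneg _).trans (hα 0)
  have hτ := (hw.packet r).scale_pos.le
  calc _ ≤ ∑ q ∈ Finset.range r, A * (κ q * τ r) :=
        (Finset.abs_sum_le_sum_abs _ _).trans <| Finset.sum_le_sum fun q hq ↦ by
          rw [← mul_sub, abs_mul]
          exact mul_le_mul (hα q) (hw.abs_sub_le_of_lt he (Finset.mem_range.1 hq) hx)
            (abs_nonneg _) hA
    _ ≤ A * (c / 4 * τ r) := by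
        rw [← Finset.mul_sum, ← Finset.sum_mul]
        gcongr
        exact hw.sum_range_height_le r

lemma abs_tsum_tail_sub_le (hw : IsPacketSeq K e c w κ d τ d') (hα : ∀ r, |α r| ≤ A) (r : ℕ)
    (x y : E) :
    |∑' q, (α (q + (r + 1)) * w (q + (r + 1)) y - α (q + (r + 1)) * w (q + (r + 1)) x)|
      ≤ A * (c / 4 * τ r) := by
  have hA : 0 ≤ A := (abs_nonneg _).trans (hα 0)
  have hsum : Summable fun q ↦ A * (2 * κ (q + (r + 1))) :=
    (((summable_nat_add_iff (r + 1)).2 hw.summable_height).mul_left 2).mul_left A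
  rw [← Real.norm_eq_abs]
  refine (tsum_of_norm_bounded hsum.hasSum fun q ↦ ?_).trans ?_
  · rw [Real.norm_eq_abs, ← mul_sub, abs_mul]
    refine mul_le_mul (hα _) ?_ (abs_nonneg _) hA
    linarith [abs_sub (w (q + (r + 1)) y) (w (q + (r + 1)) x),
      (hw.packet (q + (r + 1))).abs_le x, (hw.packet (q + (r + 1))).abs_le y]
  · rw [tsum_mul_left, tsum_mul_left]
    refine mul_le_mul_of_nonneg_left ?_ hA
    linarith [hw.tsum_height_add_le (r + 1), hw.height_succ_le_scale r]

lemma le_abs_tsum_sub (hw : IsPacketSeq K e c w κ d τ d') (he : ‖e‖ = 1) (hα : ∀ r, |α r| ≤ A)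
    {r : ℕ} (hr : |α r| = A) {x : E} (hx : x ∈ K) :
    A * (c / 2) * τ r ≤ |∑' q, α q * w q (x + τ r • e) - ∑' q, α q * w q x| := by
  have hsx := hw.summable_mul hα x
  have hsy := hw.summable_mul hα (x + τ r • e)
  have hmain : A * (c * τ r) ≤ |α r * w r (x + τ r • e) - α r * w r x| := by
    rw [← mul_sub, abs_mul, hr]
    exact mul_le_mul_of_nonneg_left ((hw.packet r).oscillation x hx) (hr ▸ abs_nonneg _)
  have hearly := hw.abs_sum_range_sub_le he hα r hx
  have hlate := hw.abs_tsum_tail_sub_le hα r x (x + τ r • e)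
  rw [← hsy.tsum_sub hsx, ← (hsy.sub hsx).sum_add_tsum_nat_add (r + 1), Finset.sum_range_succ]
  set S₁ := ∑ q ∈ Finset.range r, (α q * w q (x + τ r • e) - α q * w q x)
  set S₂ := α r * w r (x + τ r • e) - α r * w r x
  set S₃ := ∑' q, (α (q + (r + 1)) * w (q + (r + 1)) (x + τ r • e)
    - α (q + (r + 1)) * w (q + (r + 1)) x)
  have htriangle : |S₂| ≤ |S₁ + S₂ + S₃| + |S₁| + |S₃| := by
    calc |S₂| = |S₁ + S₂ + S₃ - S₁ - S₃| := by ring_nf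
      _ ≤ |S₁ + S₂ + S₃ - S₁| + |S₃| := abs_sub _ _
      _ ≤ _ := add_le_add_left (abs_sub _ _) _
  linarith

lemma lip_tsum_pos (hw : IsPacketSeq K e c w κ d τ d') (hc : 0 < c) (he : ‖e‖ = 1) (hA : 0 < A)
    (hα : ∀ r, |α r| ≤ A) (hfreq : ∃ᶠ r in atTop, |α r| = A) {x : E} (hx : x ∈ K) :
    0 < lip (fun y ↦ ∑' r, α r * w r y) x := by
  obtain ⟨C, hC⟩ := hw.exists_lipschitzWith_tsum hα
  have hnear : Tendsto (fun r ↦ x + τ r • e) atTop (𝓝[≠] x) := by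
    refine tendsto_nhdsWithin_iff.2 ⟨?_, Eventually.of_forall fun r hr ↦ ?_⟩
    · simpa only [zero_smul, add_zero] using (hw.tendsto_scale.smul_const e).const_add x
    · have h0 : τ r • e = 0 := by simpa only [mem_singleton_iff, add_eq_left] using hr
      exact (hw.packet r).scale_pos.ne (by rw [← hw.norm_scale_smul he r, h0, norm_zero])
  refine lt_of_lt_of_le (b := A * (c / 2)) (by positivity)
    (le_lip_of_frequently hC (hnear.frequently (hfreq.mono fun r hr ↦ ?_)))
  rw [dist_self_add_left, hw.norm_scale_smul he, le_div_iff₀ (hw.packet r).scale_pos]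
  exact hw.le_abs_tsum_sub he hα hr hx

-- The packets are distributed over `k` functions by residue class; a combination of these is
-- again a packet series, whose largest coefficient occurs at infinitely many scales.
lemma hasIndependentFamilies (hw : IsPacketSeq K e c w κ d τ d') (hc : 0 < c) (he : ‖e‖ = 1) :
    HasIndependentFamilies K := by
  intro k
  rcases eq_or_ne k 0 with rfl | hk
  · exact ⟨0, fun i ↦ i.elim0, fun x _ a ha ↦ (ha (Subsingleton.elim _ _)).elim⟩
  have : NeZero k := ⟨hk⟩
  have hind (i : Fin k) (r : ℕ) : |if Fin.ofNat k r = i then (1 : ℝ) else 0| ≤ 1 := by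
    split_ifs <;> norm_num
  refine ⟨fun i x ↦ ∑' r, (if Fin.ofNat k r = i then 1 else 0) * w r x,
    fun i ↦ hw.exists_lipschitzWith_tsum (hind i), fun x hx a ha ↦ ?_⟩
  obtain ⟨j, -, hj⟩ := Finset.exists_max_image Finset.univ (fun i ↦ |a i|) ⟨0, Finset.mem_univ _⟩
  have hja : 0 < |a j| := by
    obtain ⟨i, hi⟩ := Function.ne_iff.1 ha
    exact (abs_pos.2 hi).trans_le (hj i (Finset.mem_univ _))
  have hcomb (y : E) : ∑ i, a i * ∑' r, (if Fin.ofNat k r = i then (1 : ℝ) else 0) * w r y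
      = ∑' r, a (Fin.ofNat k r) * w r y := by
    simp_rw [← tsum_mul_left]
    rw [← Summable.tsum_finsetSum fun i _ ↦ (hw.summable_mul (hind i) y).mul_left _]
    simp only [ite_mul, one_mul, zero_mul, mul_ite, mul_zero, Finset.sum_ite_eq, Finset.mem_univ,
      if_true]
  simp only [hcomb]
  exact hw.lip_tsum_pos hc he hja (fun r ↦ hj _ (Finset.mem_univ _))
    ((Nat.frequently_mod_eq j.2).mono fun r hr ↦ by
      rw [show Fin.ofNat k r = j from Fin.ext hr]) hx

end IsPacketSeq

theorem IsVanishingSteepSeq.hasIndependentFamilies [FiniteDimensional ℝ E] {K : Set E} {e : E}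
    {c : ℝ} {g : ℕ → E → ℝ} (hg : IsVanishingSteepSeq K e c g) (hK : IsCompact K) (hc : 0 < c)
    (he : ‖e‖ = 1) : HasIndependentFamilies K := by
  obtain ⟨w, κ, d, τ, d', hw⟩ := exists_isPacketSeq (half_pos hc) fun d κ hd hκ ↦
    hg.exists_isWavePacket hK hc he hd hκ
  exact hw.hasIndependentFamilies (half_pos hc) he

end PacketSeries

section SteepFunctions

-- Elements of almost minimal norm form a Cauchy sequence, by the parallelogram law.
lemma exists_cauchySeq_of_antitone_convex {H : Type*} [NormedAddCommGroup H]
    [InnerProductSpace ℝ H] {C : ℕ → Set H} (hC : Antitone C) (hconvex : ∀ N, Convex ℝ (C N))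
    (hne : ∀ N, (C N).Nonempty) (hbdd : Bornology.IsBounded (C 0)) :
    ∃ x : ℕ → H, (∀ N, x N ∈ C N) ∧ CauchySeq x := by
  set D : ℕ → ℝ := fun N ↦ infDist 0 (C N)
  have hDnn (N : ℕ) : 0 ≤ D N := infDist_nonneg
  have hDle {N : ℕ} {y : H} (hy : y ∈ C N) : D N ≤ ‖y‖ := by
    simpa only [dist_zero_left] using infDist_le_dist_of_mem (x := 0) hy
  have hDmono : Monotone D := fun N M hNM ↦ infDist_le_infDist_of_subset (hC hNM) (hne M)
  have hDbdd : BddAbove (range D) := by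
    obtain ⟨R, hR⟩ := hbdd.exists_norm_le
    refine ⟨R, forall_mem_range.2 fun N ↦ ?_⟩
    obtain ⟨y, hy⟩ := hne N
    exact (hDle hy).trans (hR y (hC N.zero_le hy))
  set S := ⨆ N, D N
  have hDS : Tendsto D atTop (𝓝 S) := tendsto_atTop_ciSup hDmono hDbdd
  choose x hxC hx using fun N : ℕ ↦ (infDist_lt_iff (hne N)).1
    (lt_add_of_pos_right (D N) (Nat.one_div_pos_of_nat (α := ℝ) (n := N)))
  have hnorm {N p : ℕ} (hp : N ≤ p) : ‖x p‖ ≤ S + 1 / (N + 1 : ℝ) := by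
    have := hx p
    rw [dist_zero_left] at this
    exact this.le.trans (add_le_add (le_ciSup hDbdd p) (Nat.one_div_le_one_div hp))
  refine ⟨x, hxC, cauchySeq_of_le_tendsto_0
    (fun N : ℕ ↦ √(4 * (S + 1 / (N + 1 : ℝ)) ^ 2 - 4 * D N ^ 2)) (fun p q N hp hq ↦ ?_) ?_⟩
  · refine Real.le_sqrt_of_sq_le ?_
    have hmid : D N ≤ ‖x p + x q‖ / 2 := by
      have := hDle <| (hconvex N).midpoint_mem (hC hp (hxC p)) (hC hq (hxC q))
      rwa [midpoint_eq_smul_add, norm_smul, invOf_eq_inv, Real.norm_of_nonneg (by norm_num),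
        inv_mul_eq_div] at this
    have hmid_sq : 4 * D N ^ 2 ≤ ‖x p + x q‖ ^ 2 := by nlinarith [hDnn N]
    have hp_sq := pow_le_pow_left₀ (norm_nonneg _) (hnorm hp) 2
    have hq_sq := pow_le_pow_left₀ (norm_nonneg _) (hnorm hq) 2
    rw [dist_eq_norm]
    linarith [parallelogram_law_with_norm ℝ (x p) (x q)]
  · have hlim := ((tendsto_one_div_add_atTop_nhds_zero_nat (𝕜 := ℝ)).const_add S).pow 2
    simpa only [add_zero, sub_self, Real.sqrt_zero] using
      ((hlim.const_mul 4).sub ((hDS.pow 2).const_mul 4)).sqrt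

lemma norm_lincomb_le {F : Type*} [NormedAddCommGroup F] [NormedSpace ℝ F] {u v : F} {r a b : ℝ}
    (hu : ‖u‖ ≤ r) (hv : ‖v‖ ≤ r) (ha : 0 ≤ a) (hb : 0 ≤ b) (hab : a + b = 1) :
    ‖a • u + b • v‖ ≤ r :=
  mem_closedBall_zero_iff.1 <| convex_closedBall (0 : F) r (mem_closedBall_zero_iff.2 hu)
    (mem_closedBall_zero_iff.2 hv) ha hb hab

lemma fderiv_lincomb {E : Type*} [NormedAddCommGroup E] [NormedSpace ℝ E] {f g : E → ℝ}
    (hf : ContDiff ℝ 1 f) (hg : ContDiff ℝ 1 g) (a b : ℝ) (x : E) :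
    fderiv ℝ (a • f + b • g) x = a • fderiv ℝ f x + b • fderiv ℝ g x := by
  have hf' := hf.differentiable one_ne_zero x
  have hg' := hg.differentiable one_ne_zero x
  rw [fderiv_add (hf'.const_smul a) (hg'.const_smul b), fderiv_const_smul hf',
    fderiv_const_smul hg']

lemma integrable_fderiv_apply {E : Type*} [NormedAddCommGroup E] [NormedSpace ℝ E]
    [MeasurableSpace E] [OpensMeasurableSpace E] {μ : Measure E} [IsFiniteMeasureOnCompacts μ]
    {g : E → ℝ} (hg : ContDiff ℝ 1 g) (hgc : HasCompactSupport g) (v : E) :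
    Integrable (fun x ↦ fderiv ℝ g x v) μ :=
  ((hg.continuous_fderiv one_ne_zero).clm_apply continuous_const).integrable_of_hasCompactSupport
    (hgc.fderiv_apply ℝ v)

variable {E : Type*} [NormedAddCommGroup E] [InnerProductSpace ℝ E] [MeasurableSpace E]

/-- The test functions with Lipschitz constant at most `1` and sup norm at most `ε` whose derivative
in direction `e` integrates to at least `δ`. If these exist for a fixed `δ > 0` and arbitrarily
small `ε`, then `μ` carries arbitrarily large independent families of Lipschitz functions. -/
def steepFunctions (μ : Measure E) (e : E) (δ ε : ℝ) : Set (E → ℝ) :=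
  {g | ContDiff ℝ 1 g ∧ HasCompactSupport g ∧ (∀ x, |g x| ≤ ε) ∧ (∀ x, ‖fderiv ℝ g x‖ ≤ 1) ∧
    δ ≤ ∫ x, fderiv ℝ g x e ∂μ}

variable {μ : Measure E} {e : E} {δ ε : ℝ}

lemma steepFunctions_subset {ε' : ℝ} (h : ε ≤ ε') :
    steepFunctions μ e δ ε ⊆ steepFunctions μ e δ ε' :=
  fun _ hg ↦ ⟨hg.1, hg.2.1, fun x ↦ (hg.2.2.1 x).trans h, hg.2.2.2⟩

variable [BorelSpace E] [IsFiniteMeasure μ]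

lemma convex_steepFunctions [FiniteDimensional ℝ E] : Convex ℝ (steepFunctions μ e δ ε) := by
  rintro f ⟨hf, hfc, hfε, hf1, hfδ⟩ g ⟨hg, hgc, hgε, hg1, hgδ⟩ a b ha hb hab
  refine ⟨(hf.const_smul a).add (hg.const_smul b), (hfc.smul_left).add hgc.smul_left,
    fun x ↦ ?_, fun x ↦ ?_, ?_⟩
  · exact norm_lincomb_le (u := f x) (v := g x) (hfε x) (hgε x) ha hb hab
  · rw [fderiv_lincomb hf hg]
    exact norm_lincomb_le (hf1 x) (hg1 x) ha hb hab
  · simp only [fderiv_lincomb hf hg, add_apply, smul_apply, smul_eq_mul]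
    rw [integral_add ((integrable_fderiv_apply hf hfc e).const_mul a)
      ((integrable_fderiv_apply hg hgc e).const_mul b), integral_const_mul, integral_const_mul]
    calc δ = a * δ + b * δ := by rw [← add_mul, hab, one_mul]
      _ ≤ _ := by gcongr

lemma exists_seq_steepFunctions_tendsto_ae [FiniteDimensional ℝ E]
    (hne : ∀ ε > 0, (steepFunctions μ e δ ε).Nonempty) :
    ∃ (g : ℕ → E → ℝ) (ε : ℕ → ℝ) (G : E → E →L[ℝ] ℝ),
      Tendsto ε atTop (𝓝 0) ∧ (∀ l, g l ∈ steepFunctions μ e δ (ε l)) ∧ StronglyMeasurable G ∧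
      ∀ᵐ x ∂μ, Tendsto (fun l ↦ fderiv ℝ (g l) x) atTop (𝓝 (G x)) := by
  let ε (N : ℕ) : ℝ := 1 / (N + 1)
  let C (N : ℕ) : Set (Lp E 2 μ) := {φ | ∃ g ∈ steepFunctions μ e δ (ε N), φ =ᵐ[μ] gradient g}
  have hnorm (g : E → ℝ) (x : E) : ‖gradient g x‖ = ‖fderiv ℝ g x‖ :=
    (InnerProductSpace.toDual ℝ E).symm.norm_map _
  have hanti : Antitone C := fun N M hNM φ ⟨g, hg, hφ⟩ ↦
    ⟨g, steepFunctions_subset (Nat.one_div_le_one_div hNM) hg, hφ⟩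
  have hconvex (N : ℕ) : Convex ℝ (C N) := by
    rintro φ ⟨f, hf, hφ⟩ ψ ⟨g, hg, hψ⟩ a b ha hb hab
    refine ⟨a • f + b • g, convex_steepFunctions hf hg ha hb hab, ?_⟩
    filter_upwards [hφ, hψ, Lp.coeFn_add (a • φ) (b • ψ), Lp.coeFn_smul a φ, Lp.coeFn_smul b ψ]
      with x hφx hψx hadd ha' hb'
    rw [hadd, Pi.add_apply, ha', hb', Pi.smul_apply, Pi.smul_apply, hφx, hψx]
    simp only [gradient, fderiv_lincomb hf.1 hg.1, map_add, map_smul]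
  have hneC (N : ℕ) : (C N).Nonempty := by
    obtain ⟨g, hg⟩ := hne (ε N) Nat.one_div_pos_of_nat
    have hcont : Continuous (gradient g) :=
      (InnerProductSpace.toDual ℝ E).symm.continuous.comp (hg.1.continuous_fderiv one_ne_zero)
    have hmem : MemLp (gradient g) 2 μ := MemLp.of_bound hcont.aestronglyMeasurable 1
      (Eventually.of_forall fun x ↦ (hnorm g x).trans_le (hg.2.2.2.1 x))
    exact ⟨hmem.toLp, g, hg, hmem.coeFn_toLp⟩
  have hbdd : Bornology.IsBounded (C 0) := by
    refine isBounded_iff_forall_norm_le.2 ⟨_, fun φ ⟨g, hg, hφ⟩ ↦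
      Lp.norm_le_of_ae_bound zero_le_one (hφ.mono fun x hx ↦ ?_)⟩
    rw [hx, hnorm]
    exact hg.2.2.2.1 x
  obtain ⟨φ, hφC, hφ⟩ := exists_cauchySeq_of_antitone_convex hanti hconvex hneC hbdd
  obtain ⟨Φ, hΦ⟩ := cauchySeq_tendsto_of_complete hφ
  obtain ⟨ns, hns, hae⟩ := (tendstoInMeasure_of_tendsto_Lp hΦ).exists_seq_tendsto_ae
  choose g hg hφg using hφC
  refine ⟨fun l ↦ g (ns l), fun l ↦ ε (ns l), fun x ↦ InnerProductSpace.toDual ℝ E (Φ x),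
    tendsto_one_div_add_atTop_nhds_zero_nat.comp hns.tendsto_atTop, fun l ↦ hg _,
    (InnerProductSpace.toDual ℝ E).continuous.comp_stronglyMeasurable (Lp.stronglyMeasurable Φ), ?_⟩
  filter_upwards [hae, ae_all_iff.2 hφg] with x hx hgx
  simp only [hgx] at hx
  simpa only [gradient, Function.comp_def, LinearIsometryEquiv.apply_symm_apply] using
    ((InnerProductSpace.toDual ℝ E).continuous.tendsto (Φ x)).comp hx

lemma sub_le_measureReal_of_mem_steepFunctions [FiniteDimensional ℝ E] {g : E → ℝ}
    (hg : g ∈ steepFunctions μ e δ ε) (he : ‖e‖ ≤ 1) {c : ℝ} (hc : 0 ≤ c) :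
    δ - c * μ.real univ ≤ μ.real {x | c < fderiv ℝ g x e} := by
  obtain ⟨hg, hgc, -, hg1, hgδ⟩ := hg
  have hcont : Continuous fun x ↦ fderiv ℝ g x e :=
    (hg.continuous_fderiv one_ne_zero).clm_apply continuous_const
  set A := {x | c < fderiv ℝ g x e}
  have hAm : MeasurableSet A := (isOpen_lt continuous_const hcont).measurableSet
  have hind : Integrable (A.indicator fun _ ↦ (1 : ℝ)) μ := (integrable_const 1).indicator hAm
  have hle (x : E) : fderiv ℝ g x e ≤ c + A.indicator (fun _ ↦ 1) x := by
    by_cases hx : x ∈ A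
    · rw [indicator_of_mem hx]
      have := (le_abs_self _).trans ((fderiv ℝ g x).le_of_opNorm_le_of_le (hg1 x) he)
      linarith
    · rw [indicator_of_notMem hx, add_zero]
      exact not_lt.1 hx
  have hint := integral_mono (integrable_fderiv_apply hg hgc e) ((integrable_const c).add hind) hle
  rw [integral_add' (integrable_const c) hind, integral_const, integral_indicator_const _ hAm,
    smul_eq_mul, smul_eq_mul, mul_one] at hint
  linarith

theorem exists_isVanishingSteepSeq [FiniteDimensional ℝ E] (hδ : 0 < δ) (he : ‖e‖ ≤ 1)
    (hne : ∀ ε > 0, (steepFunctions μ e δ ε).Nonempty) :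
    ∃ (K : Set E) (c : ℝ) (g : ℕ → E → ℝ),
      IsCompact K ∧ 0 < μ K ∧ 0 < c ∧ IsVanishingSteepSeq K e c g := by
  obtain ⟨g, ε, G, hε, hg, hG, hae⟩ := exists_seq_steepFunctions_tendsto_ae hne
  obtain ⟨c, hc, hcμ⟩ : ∃ c > 0, c * μ.real univ ≤ δ / 2 :=
    (exists_pos_mul_lt (half_pos hδ) (μ.real univ)).imp fun c hc ↦
      ⟨hc.1, mul_comm c _ ▸ hc.2.le⟩
  obtain ⟨t, -, htδ, hunif⟩ := tendstoUniformlyOn_of_ae_tendsto'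
    (fun l ↦ ((hg l).1.continuous_fderiv one_ne_zero).stronglyMeasurable) hG hae
    (show 0 < δ / 4 by positivity)
  obtain ⟨N, hN⟩ := uniformCauchySeqOn_iff.1 hunif.uniformCauchySeqOn (c / 2) (half_pos hc)
  set A := {x | c < fderiv ℝ (g N) x e}
  have hAm : MeasurableSet A := (isOpen_lt continuous_const
    (((hg N).1.continuous_fderiv one_ne_zero).clm_apply continuous_const)).measurableSet
  have hAt : μ (toMeasurable μ t) < μ A := by
    rw [measure_toMeasurable]
    refine htδ.trans_lt ?_
    rw [ENNReal.ofReal_lt_iff_lt_toReal (by positivity) (measure_ne_top _ _)]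
    have := sub_le_measureReal_of_mem_steepFunctions (hg N) he hc.le
    exact lt_of_lt_of_le (by linarith) this
  obtain ⟨K, hKA, hK, hKμ⟩ :=
    (hAm.diff (measurableSet_toMeasurable μ t)).exists_lt_isCompact_of_ne_top (measure_ne_top _ _)
      ((tsub_pos_of_lt hAt).trans_le le_measure_sdiff)
  have hKt : K ⊆ tᶜ := fun x hx ht ↦ (hKA hx).2 (subset_toMeasurable μ t ht)
  refine ⟨K, c / 2, g, hK, hKμ, half_pos hc, fun l ↦ (hg l).1, fun l ↦ (hg l).2.1,
    fun l ↦ (hg l).2.2.2.1, ?_, hunif.uniformCauchySeqOn.mono hKt, ?_⟩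
  · refine tendstoUniformly_iff.2 fun η hη ↦ (hε.eventually_lt_const hη).mono fun l hl x ↦ ?_
    simpa only [Pi.zero_apply, dist_zero_left, Real.norm_eq_abs] using ((hg l).2.2.1 x).trans_lt hl
  · filter_upwards [eventually_ge_atTop N] with l hl x hx
    have hclose := (hN l hl N le_rfl x (hKt hx)).le
    rw [dist_eq_norm] at hclose
    have happly := (fderiv ℝ (g l) x - fderiv ℝ (g N) x).le_of_opNorm_le_of_le hclose he
    rw [sub_apply, Real.norm_eq_abs] at happly
    have hsteep : c < fderiv ℝ (g N) x e := (hKA hx).1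
    linarith [(abs_le.1 happly).1]

end SteepFunctions

section DerivBound

/-- One-sided form of `|∫ ∂ₑg dμ| ≤ a ‖∇g‖_∞ + c ‖g‖_∞` for all test functions `g`. By duality this
says that `∂ₑμ` is the sum of a measure of mass at most `c` and the divergence of a vector measure
of mass at most `a`. -/
def IsDerivBound {E : Type*} [NormedAddCommGroup E] [NormedSpace ℝ E] [MeasurableSpace E]
    (μ : Measure E) (e : E) (a c : ℝ) : Prop :=
  ∀ ⦃g : E → ℝ⦄, ContDiff ℝ 1 g → HasCompactSupport g → ∀ ⦃A B : ℝ⦄,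
    (∀ x, ‖fderiv ℝ g x‖ ≤ A) → (∀ x, |g x| ≤ B) → ∫ x, fderiv ℝ g x e ∂μ ≤ a * A + c * B

lemma IsDerivBound.mono {E : Type*} [NormedAddCommGroup E] [NormedSpace ℝ E] [MeasurableSpace E]
    {μ : Measure E} {e : E} {a c c' : ℝ} (hμ : IsDerivBound μ e a c) (hc : c ≤ c') :
    IsDerivBound μ e a c' := fun g hg hgc A B hA hB ↦ by
  have hB0 : 0 ≤ B := (abs_nonneg _).trans (hB 0)
  exact (hμ hg hgc hA hB).trans (by gcongr)

lemma isDerivBound_of_steepFunctions_eq_empty {E : Type*} [NormedAddCommGroup E]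
    [InnerProductSpace ℝ E] [MeasurableSpace E] {μ : Measure E} {e : E} {δ ε : ℝ} (hδ : 0 < δ)
    (hε : 0 < ε) (h : steepFunctions μ e δ ε = ∅) : IsDerivBound μ e δ (δ / ε) := by
  intro g hg hgc A B hA hB
  have hA0 : 0 ≤ A := (norm_nonneg _).trans (hA 0)
  have hB0 : 0 ≤ B := (abs_nonneg _).trans (hB 0)
  refine le_of_forall_pos_le_add fun t ht ↦ ?_
  set s : ℝ := A + B / ε + t / δ with hs
  have ht' : 0 < t / δ := by positivity
  have hB' : 0 ≤ B / ε := by positivity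
  have hs0 : 0 < s := by positivity
  have hder (x : E) : fderiv ℝ (s⁻¹ • g) x = s⁻¹ • fderiv ℝ g x :=
    fderiv_const_smul (hg.differentiable one_ne_zero x) _
  have hint : ¬ δ ≤ ∫ x, fderiv ℝ (s⁻¹ • g) x e ∂μ := by
    refine fun hδs ↦ (h ▸ notMem_empty (s⁻¹ • g) : s⁻¹ • g ∉ steepFunctions μ e δ ε)
      ⟨hg.const_smul s⁻¹, hgc.smul_left (f := fun _ ↦ s⁻¹), fun x ↦ ?_, fun x ↦ ?_, hδs⟩
    · have : B ≤ s * ε := by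
        calc B = B / ε * ε := by field_simp
          _ ≤ s * ε := by gcongr; linarith
      rw [Pi.smul_apply, smul_eq_mul, abs_mul, abs_of_pos (inv_pos.2 hs0), inv_mul_le_iff₀ hs0]
      exact (hB x).trans this
    · rw [hder, norm_smul, Real.norm_of_nonneg (inv_pos.2 hs0).le, inv_mul_le_iff₀ hs0]
      exact (hA x).trans (by linarith)
  simp only [hder, smul_apply, smul_eq_mul, integral_const_mul, not_le,
    inv_mul_lt_iff₀ hs0] at hint
  have : s * δ = δ * A + δ / ε * B + t := by rw [hs]; field_simp
  linarith

-- Hahn–Banach on `W × Z` for the seminorm `(w, z) ↦ p (T w - z)`, which vanishes on the graph.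
lemma exists_linearMap_comp_eq_of_le_seminorm {W Z : Type*} [AddCommGroup W] [Module ℝ W]
    [AddCommGroup Z] [Module ℝ Z] (T : W →ₗ[ℝ] Z) (p : Seminorm ℝ Z) (ℓ : W →ₗ[ℝ] ℝ)
    (h : ∀ w, ℓ w ≤ p (T w)) :
    ∃ Λ : Z →ₗ[ℝ] ℝ, (∀ z, |Λ z| ≤ p z) ∧ ∀ w, Λ (T w) = ℓ w := by
  let q : Seminorm ℝ (W × Z) := p.comp (T ∘ₗ LinearMap.fst ℝ W Z - LinearMap.snd ℝ W Z)
  have hq (w : W) (z : Z) : q (w, z) = p (T w - z) := rfl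
  let S : Submodule ℝ (W × Z) := LinearMap.range (LinearMap.inl ℝ W Z)
  obtain ⟨g, hgS, hgq⟩ := Dual.exists_extension_of_le_seminorm_real S
    (ℓ ∘ₗ LinearMap.fst ℝ W Z ∘ₗ S.subtype) (p := q) <| by
      rintro ⟨_, w, rfl⟩
      exact (h w).trans_eq (congrArg p (sub_zero (T w)).symm)
  refine ⟨-(g ∘ₗ LinearMap.inr ℝ W Z), fun z ↦ ?_, fun w ↦ ?_⟩
  · simpa only [LinearMap.neg_apply, LinearMap.comp_apply, LinearMap.inr_apply, abs_neg, hq,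
      map_zero, zero_sub, map_neg_eq_map] using hgq (0, z)
  · have hgraph : g (w, T w) = 0 := by
      simpa only [hq, sub_self, map_zero, abs_nonpos_iff] using hgq (w, T w)
    have hℓ : g (w, 0) = ℓ w := hgS ⟨(w, 0), w, rfl⟩
    have hadd : g (w, T w) = g (w, 0) + g (0, T w) := by
      rw [← map_add, Prod.mk_add_mk, add_zero, zero_add]
    rw [LinearMap.neg_apply, LinearMap.comp_apply, LinearMap.inr_apply]
    linarith

lemma exists_sum_approx_of_linearMap_lp {S P F : Type*} [Fintype P] [NormedAddCommGroup F]
    [NormedSpace ℝ F] (Λ : lp (fun _ : S ↦ F) ∞ →ₗ[ℝ] ℝ) {a : ℝ} (ha : 0 ≤ a)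
    (hΛ : ∀ f, |Λ f| ≤ a * ‖f‖) (p : S → P) (c : P → S) :
    ∃ α : P → F →ₗ[ℝ] ℝ, (∀ v, ∑ z, |α z v| ≤ a * ‖v‖) ∧ ∀ f, ∀ η ≥ 0,
      (∀ s, ‖f s - f (c (p s))‖ ≤ η) → |Λ f - ∑ z, α z (f (c z))| ≤ a * η := by
  classical
  let J : (P → F) →ₗ[ℝ] lp (fun _ : S ↦ F) ∞ :=
    { toFun u := ⟨fun s ↦ u (p s), memℓp_infty
        ⟨‖u‖, forall_mem_range.2 fun s ↦ norm_le_pi_norm u (p s)⟩⟩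
      map_add' _ _ := rfl
      map_smul' _ _ := rfl }
  have hJ (u : P → F) (s : S) : J u s = u (p s) := rfl
  have hsum (u : P → F) : ∑ z, Λ (J (Pi.single z (u z))) = Λ (J u) := by
    rw [← map_sum, ← map_sum, Finset.univ_sum_single]
  refine ⟨fun z ↦ Λ ∘ₗ J ∘ₗ LinearMap.single ℝ (fun _ ↦ F) z, fun v ↦ ?_, fun f η hη hf ↦ ?_⟩
  · set u : P → F := fun z ↦ (SignType.sign (Λ (J (Pi.single z v))) : ℝ) • v with hu
    have hsign (z : P) : |Λ (J (Pi.single z v))| = Λ (J (Pi.single z (u z))) := by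
      simp only [hu, Pi.single_smul, map_smul, smul_eq_mul, sign_mul_self]
    have hJu : ‖J u‖ ≤ ‖v‖ := lp.norm_le_of_forall_le (norm_nonneg v) fun s ↦ by
      rw [hJ, hu, norm_smul]
      refine mul_le_of_le_one_left (norm_nonneg v) ?_
      rcases lt_trichotomy (Λ (J (Pi.single (p s) v))) 0 with h | h | h <;> simp [h]
    calc ∑ z, |Λ (J (Pi.single z v))| = Λ (J u) := by simp only [hsign, hsum]
      _ ≤ a * ‖J u‖ := (le_abs_self _).trans (hΛ _)
      _ ≤ a * ‖v‖ := by gcongr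
  · have hfη : ‖f - J (fun z ↦ f (c z))‖ ≤ η := lp.norm_le_of_forall_le hη hf
    calc |Λ f - ∑ z, Λ (J (Pi.single z (f (c z))))| = |Λ (f - J (fun z ↦ f (c z)))| := by
          rw [hsum fun z ↦ f (c z), map_sub]
      _ ≤ a * ‖f - J (fun z ↦ f (c z))‖ := hΛ _
      _ ≤ a * η := by gcongr

variable {E : Type*} [NormedAddCommGroup E] [NormedSpace ℝ E] {L : Set E}

/-- The `C¹` functions vanishing outside `L`; for compact `L`, the test functions against which
`∂ₑμ` is represented by point masses. -/
def testFunctions (L : Set E) : Submodule ℝ (E → ℝ) where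
  carrier := {w | ContDiff ℝ 1 w ∧ ∀ x ∉ L, w x = 0}
  add_mem' := fun ⟨hf, hf0⟩ ⟨hg, hg0⟩ ↦
    ⟨hf.add hg, fun x hx ↦ by rw [Pi.add_apply, hf0 x hx, hg0 x hx, add_zero]⟩
  zero_mem' := ⟨contDiff_const, fun _ _ ↦ rfl⟩
  smul_mem' := fun c _ ⟨hf, hf0⟩ ↦
    ⟨hf.const_smul c, fun x hx ↦ by rw [Pi.smul_apply, hf0 x hx, smul_zero]⟩

lemma hasCompactSupport_of_mem_testFunctions (hL : IsCompact L) {w : E → ℝ}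
    (hw : w ∈ testFunctions L) : HasCompactSupport w :=
  .intro hL hw.2

/-- The gradient of a test function, as a bounded function on `L`. -/
noncomputable def fderivLp (hL : IsCompact L) :
    testFunctions L →ₗ[ℝ] lp (fun _ : L ↦ E →L[ℝ] ℝ) ∞ where
  toFun w := ⟨fun x ↦ fderiv ℝ w.1 x, memℓp_infty <|
    (((w.2.1.continuous_fderiv one_ne_zero).bounded_above_of_compact_support
      ((hasCompactSupport_of_mem_testFunctions hL w.2).fderiv ℝ)).imp fun _ hC ↦
        forall_mem_range.2 fun x ↦ hC x)⟩
  map_add' f g := lp.ext <| funext fun x ↦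
    fderiv_add (f.2.1.differentiable one_ne_zero x) (g.2.1.differentiable one_ne_zero x)
  map_smul' c f := lp.ext <| funext fun x ↦
    fderiv_const_smul (f.2.1.differentiable one_ne_zero x) c

/-- A test function, as a bounded function on `L`. -/
noncomputable def restrictLp (hL : IsCompact L) : testFunctions L →ₗ[ℝ] lp (fun _ : L ↦ ℝ) ∞ where
  toFun w := ⟨fun x ↦ w.1 x, memℓp_infty <|
    ((w.2.1.continuous.bounded_above_of_compact_support
      (hasCompactSupport_of_mem_testFunctions hL w.2)).imp fun _ hC ↦
        forall_mem_range.2 fun x ↦ hC x)⟩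
  map_add' _ _ := rfl
  map_smul' _ _ := rfl

lemma norm_fderiv_le_norm_fderivLp (hL : IsCompact L) (w : testFunctions L) (x : E) :
    ‖fderiv ℝ w.1 x‖ ≤ ‖fderivLp hL w‖ := by
  by_cases hx : x ∈ L
  · exact lp.norm_apply_le_norm ENNReal.top_ne_zero (fderivLp hL w) ⟨x, hx⟩
  · have : w.1 =ᶠ[𝓝 x] fun _ ↦ 0 :=
      eventually_of_mem (hL.isClosed.isOpen_compl.mem_nhds hx) w.2.2
    rw [this.fderiv_eq, fderiv_fun_const, Pi.zero_apply, norm_zero]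
    exact norm_nonneg _

lemma abs_le_norm_restrictLp (hL : IsCompact L) (w : testFunctions L) (x : E) :
    |w.1 x| ≤ ‖restrictLp hL w‖ := by
  by_cases hx : x ∈ L
  · exact lp.norm_apply_le_norm ENNReal.top_ne_zero (restrictLp hL w) ⟨x, hx⟩
  · rw [w.2.2 x hx, abs_zero]
    exact norm_nonneg _

variable [MeasurableSpace E] [OpensMeasurableSpace E] {μ : Measure E}
  [IsFiniteMeasureOnCompacts μ] {e : E} {a c : ℝ}

lemma IsDerivBound.exists_linearMap_lp (hμ : IsDerivBound μ e a c) (ha : 0 ≤ a) (hc : 0 ≤ c)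
    (hL : IsCompact L) :
    ∃ (Λ : lp (fun _ : L ↦ E →L[ℝ] ℝ) ∞ →ₗ[ℝ] ℝ) (Γ : lp (fun _ : L ↦ ℝ) ∞ →ₗ[ℝ] ℝ),
      (∀ f, |Λ f| ≤ a * ‖f‖) ∧ (∀ f, |Γ f| ≤ c * ‖f‖) ∧
      ∀ w, Λ (fderivLp hL w) + Γ (restrictLp hL w) = ∫ x, fderiv ℝ w.1 x e ∂μ := by
  have hint (w : testFunctions L) : Integrable (fun x ↦ fderiv ℝ w.1 x e) μ :=
    integrable_fderiv_apply w.2.1 (hasCompactSupport_of_mem_testFunctions hL w.2) e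
  let ℓ : testFunctions L →ₗ[ℝ] ℝ :=
    { toFun w := ∫ x, fderiv ℝ w.1 x e ∂μ
      map_add' f g := by
        rw [← integral_add (hint f) (hint g)]
        exact integral_congr_ae (.of_forall fun x ↦ DFunLike.congr_fun (fderiv_add
          (f.2.1.differentiable one_ne_zero x) (g.2.1.differentiable one_ne_zero x)) e)
      map_smul' r f := by
        rw [RingHom.id_apply, smul_eq_mul, ← integral_const_mul]
        exact integral_congr_ae (.of_forall fun x ↦ DFunLike.congr_fun (fderiv_const_smul
          (f.2.1.differentiable one_ne_zero x) r) e) }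
  let p : Seminorm ℝ (lp (fun _ : L ↦ E →L[ℝ] ℝ) ∞ × lp (fun _ : L ↦ ℝ) ∞) :=
    .of (fun u ↦ a * ‖u.1‖ + c * ‖u.2‖)
      (fun u v ↦ by
        have h₁ := mul_le_mul_of_nonneg_left (norm_add_le u.1 v.1) ha
        have h₂ := mul_le_mul_of_nonneg_left (norm_add_le u.2 v.2) hc
        rw [Prod.fst_add, Prod.snd_add]
        linarith)
      (fun r u ↦ by rw [Prod.smul_fst, Prod.smul_snd, norm_smul, norm_smul]; ring)
  have hp (u) (v) : p (u, v) = a * ‖u‖ + c * ‖v‖ := rfl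
  obtain ⟨Φ, hΦp, hΦ⟩ := exists_linearMap_comp_eq_of_le_seminorm
    ((fderivLp hL).prod (restrictLp hL)) p ℓ fun w ↦
      hμ w.2.1 (hasCompactSupport_of_mem_testFunctions hL w.2)
        (norm_fderiv_le_norm_fderivLp hL w) (abs_le_norm_restrictLp hL w)
  refine ⟨Φ ∘ₗ LinearMap.inl ℝ _ _, Φ ∘ₗ LinearMap.inr ℝ _ _, fun f ↦ ?_, fun f ↦ ?_, fun w ↦ ?_⟩
  · exact (hΦp (f, 0)).trans_eq (by rw [hp, norm_zero, mul_zero, add_zero])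
  · exact (hΦp (0, f)).trans_eq (by rw [hp, norm_zero, mul_zero, zero_add])
  · refine Eq.trans ?_ (hΦ w)
    rw [LinearMap.comp_apply, LinearMap.comp_apply, ← map_add, LinearMap.inl_apply,
      LinearMap.inr_apply, Prod.mk_add_mk, add_zero, zero_add]
    rfl

theorem IsDerivBound.exists_finset_approx (hμ : IsDerivBound μ e a c) (ha : 0 ≤ a) (hc : 0 ≤ c)
    (hL : IsCompact L) {τ : ℝ} (hτ : 0 < τ) :
    ∃ (t : Finset E) (α : t → (E →L[ℝ] ℝ) →ₗ[ℝ] ℝ) (β : t → ℝ),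
      (∀ v, ∑ z, |α z v| ≤ a * ‖v‖) ∧ ∑ z, |β z| ≤ c ∧
      ∀ w ∈ testFunctions L, ∀ η ≥ 0,
        (∀ x y, dist x y ≤ τ → ‖fderiv ℝ w x - fderiv ℝ w y‖ ≤ η) →
        (∀ x y, dist x y ≤ τ → |w x - w y| ≤ η) →
        |∫ x, fderiv ℝ w x e ∂μ - ∑ z, α z (fderiv ℝ w z) - ∑ z, β z * w z| ≤ (a + c) * η := by
  obtain ⟨Λ, Γ, hΛ, hΓ, hrep⟩ := hμ.exists_linearMap_lp ha hc hL
  obtain ⟨t, htL, hcover⟩ := hL.elim_nhds_subcover (ball · τ) fun x _ ↦ ball_mem_nhds x hτ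
  have hnear (x : L) : ∃ z : t, dist (x : E) z ≤ τ := by
    obtain ⟨z, hz, hxz⟩ := mem_iUnion₂.1 (hcover x.2)
    exact ⟨⟨z, hz⟩, (mem_ball.1 hxz).le⟩
  choose p hp using hnear
  let ι (z : t) : L := ⟨z, htL z z.2⟩
  obtain ⟨α, hα, hαΛ⟩ := exists_sum_approx_of_linearMap_lp Λ ha hΛ p ι
  obtain ⟨β, hβ, hβΓ⟩ := exists_sum_approx_of_linearMap_lp Γ hc hΓ p ι
  have hβ_apply (z : t) (r : ℝ) : β z r = β z 1 * r := by
    rw [← mul_one r, ← smul_eq_mul, map_smul, smul_eq_mul, smul_eq_mul, mul_one, mul_comm]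
  refine ⟨t, α, fun z ↦ β z 1, hα, by simpa only [norm_one, mul_one] using hβ 1,
    fun w hw η hη hdw hw' ↦ ?_⟩
  have hΛη := hαΛ (fderivLp hL ⟨w, hw⟩) η hη fun x ↦ hdw _ _ (hp x)
  have hΓη := hβΓ (restrictLp hL ⟨w, hw⟩) η hη fun x ↦ hw' _ _ (hp x)
  simp only [hβ_apply _ (restrictLp hL ⟨w, hw⟩ _)] at hΓη
  calc _ = |(Λ (fderivLp hL ⟨w, hw⟩) - ∑ z, α z (fderiv ℝ w z)) +
        (Γ (restrictLp hL ⟨w, hw⟩) - ∑ z, β z 1 * w z)| := by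
        rw [← hrep ⟨w, hw⟩]; ring_nf
    _ ≤ a * η + c * η := (abs_add_le _ _).trans (add_le_add hΛη hΓη)
    _ = (a + c) * η := (add_mul a c η).symm

end DerivBound

section CalderonZygmund

variable {E : Type*} [NormedAddCommGroup E] [MeasurableSpace E] {ι : Type*}

section Carving

variable [NormedSpace ℝ E] [FiniteDimensional ℝ E] [BorelSpace E]
  (μ : Measure E) [μ.IsAddHaarMeasure]

lemma continuousOn_measureReal_closedBall (x : E) :
    ContinuousOn (fun ρ ↦ μ.real (closedBall x ρ)) (Ici 0) := by
  refine ContinuousOn.congr (f := fun ρ ↦ ρ ^ finrank ℝ E * μ.real (ball (0 : E) 1))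
    (by fun_prop) fun ρ hρ ↦ ?_
  rw [Measure.real, Measure.addHaar_closedBall μ x hρ, ENNReal.toReal_mul,
    ENNReal.toReal_ofReal (pow_nonneg hρ _), Measure.real]

lemma continuousOn_measureReal_closedBall_sdiff (U : Set E) (x : E) :
    ContinuousOn (fun ρ ↦ μ.real (closedBall x ρ \ U)) (Ici 0) := by
  have hfin (ρ : ℝ) : μ (closedBall x ρ) ≠ ⊤ := measure_closedBall_lt_top.ne
  have hfin' (ρ : ℝ) : μ (closedBall x ρ \ U) ≠ ⊤ := measure_ne_top_of_subset sdiff_subset (hfin ρ)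
  have hincr {ρ ρ' : ℝ} (h : ρ ≤ ρ') :
      |μ.real (closedBall x ρ' \ U) - μ.real (closedBall x ρ \ U)| ≤
        |μ.real (closedBall x ρ') - μ.real (closedBall x ρ)| := by
    have hsub : closedBall x ρ ⊆ closedBall x ρ' := closedBall_subset_closedBall h
    rw [abs_of_nonneg (sub_nonneg.2 (measureReal_mono (sdiff_subset_sdiff_left hsub) (hfin' ρ')))]
    refine le_trans ?_ (le_abs_self _)
    rw [← measureReal_sdiff hsub measurableSet_closedBall (hfin ρ'), sub_le_iff_le_add']
    refine (measureReal_mono ?_ (measure_union_ne_top (hfin' ρ)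
      (measure_ne_top_of_subset sdiff_subset (hfin ρ')))).trans (measureReal_union_le _ _)
    exact fun y hy ↦ (em (y ∈ closedBall x ρ)).imp (⟨·, hy.2⟩) (⟨hy.1, ·⟩)
  intro ρ hρ
  rw [Metric.continuousWithinAt_iff]
  intro ε hε
  obtain ⟨d, hd, hclose⟩ :=
    Metric.continuousWithinAt_iff.1 (continuousOn_measureReal_closedBall μ x ρ hρ) ε hε
  refine ⟨d, hd, fun ρ' hρ' hdist ↦ lt_of_le_of_lt ?_ (hclose hρ' hdist)⟩
  rw [Real.dist_eq, Real.dist_eq]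
  rcases le_total ρ ρ' with h | h
  · exact hincr h
  · simpa only [abs_sub_comm] using hincr h

lemma tendsto_measure_closedBall_atTop [Nontrivial E] (x : E) :
    Tendsto (fun ρ : ℝ ↦ μ (closedBall x ρ)) atTop (𝓝 ⊤) := by
  have hmono : Monotone fun ρ : ℝ ↦ closedBall x ρ := fun _ _ h ↦ closedBall_subset_closedBall h
  have hlim := tendsto_measure_iUnion_atTop (μ := μ) hmono
  have huniv : ⋃ ρ : ℝ, closedBall x ρ = univ :=
    eq_univ_of_forall fun y ↦ mem_iUnion.2 ⟨dist y x, mem_closedBall.2 le_rfl⟩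
  rwa [huniv, measure_univ_of_isAddLeftInvariant] at hlim

lemma exists_measure_closedBall_sdiff_eq [Nontrivial E] {U : Set E} (hU : μ U ≠ ⊤) (x : E)
    (a : ℝ≥0) : ∃ ρ : ℝ, 0 ≤ ρ ∧ μ (closedBall x ρ \ U) = a := by
  have hfin (ρ : ℝ) : μ (closedBall x ρ \ U) ≠ ⊤ :=
    measure_ne_top_of_subset sdiff_subset measure_closedBall_lt_top.ne
  obtain ⟨R, hR, hR0⟩ := (((tendsto_measure_closedBall_atTop μ x).eventually
    (lt_mem_nhds (show a + μ U < ⊤ by finiteness))).and (eventually_ge_atTop 0)).exists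
  have haR : (a : ℝ) ≤ μ.real (closedBall x R \ U) := by
    rw [Measure.real, ← ENNReal.coe_toReal, ENNReal.toReal_le_toReal ENNReal.coe_ne_top (hfin R)]
    exact (ENNReal.le_sub_of_add_le_right hU hR.le).trans le_measure_sdiff
  have h0 : μ.real (closedBall x 0 \ U) = 0 := by
    rw [Measure.real, measure_mono_null sdiff_subset (by simp), ENNReal.toReal_zero]
  obtain ⟨ρ, hρ, hρa⟩ := intermediate_value_Icc hR0
    ((continuousOn_measureReal_closedBall_sdiff μ U x).mono Icc_subset_Ici_self)
    ⟨h0.trans_le a.2, haR⟩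
  exact ⟨ρ, hρ.1, (ENNReal.toReal_eq_toReal_iff' (hfin ρ) ENNReal.coe_ne_top).1 hρa⟩

lemma exists_pairwiseDisjoint_subset_closedBall [Nontrivial E] (x : ι → E) (a : ι → ℝ≥0)
    (S : Finset ι) :
    ∃ (ρ : ι → ℝ) (A : ι → Set E), (S : Set ι).PairwiseDisjoint A ∧ ∀ j ∈ S, 0 ≤ ρ j ∧
      MeasurableSet (A j) ∧ μ (A j) = a j ∧ A j ⊆ closedBall (x j) (ρ j) ∧
        closedBall (x j) (ρ j) ⊆ ⋃ i ∈ S, A i := by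
  classical
  induction S using Finset.induction_on with
  | empty => exact ⟨0, fun _ ↦ ∅, by simp, by simp⟩
  | insert j S hj ih =>
    obtain ⟨ρ, A, hdisj, hA⟩ := ih
    set U := ⋃ i ∈ S, A i
    have hUm : MeasurableSet U := Finset.measurableSet_biUnion S fun i hi ↦ (hA i hi).2.1
    have hUfin : μ U ≠ ⊤ := (measure_biUnion_lt_top S.finite_toSet fun i hi ↦ by
      rw [(hA i hi).2.2.1]
      exact ENNReal.coe_lt_top).ne
    obtain ⟨r, hr, hra⟩ := exists_measure_closedBall_sdiff_eq μ hUfin (x j) (a j)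
    set A' := Function.update A j (closedBall (x j) r \ U)
    have hne {i} (hi : i ∈ S) : i ≠ j := ne_of_mem_of_not_mem hi hj
    have hA'j : A' j = closedBall (x j) r \ U := Function.update_self ..
    have hA' {i} (hi : i ∈ S) : A' i = A i := Function.update_of_ne (hne hi) ..
    have hunion : ⋃ i ∈ insert j S, A' i = closedBall (x j) r ∪ U := by
      rw [Finset.set_biUnion_insert, hA'j, iUnion₂_congr fun i (hi : i ∈ S) ↦ hA' hi,
        sdiff_union_self]
    refine ⟨Function.update ρ j r, A', ?_, fun i hi ↦ ?_⟩
    · rw [Finset.coe_insert, pairwiseDisjoint_insert_of_notMem (by simpa using hj)]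
      refine ⟨fun i hi i' hi' hii' ↦ ?_, fun i hi ↦ ?_⟩
      · simpa only [Function.onFun, hA' hi, hA' hi'] using hdisj hi hi' hii'
      · rw [hA'j, hA' hi]
        exact disjoint_sdiff_left.mono_right (subset_biUnion_of_mem (u := A) hi)
    · rw [hunion]
      rcases Finset.mem_insert.1 hi with rfl | hi
      · rw [hA'j, Function.update_self]
        exact ⟨hr, measurableSet_closedBall.diff hUm, hra, sdiff_subset, subset_union_left⟩
      · obtain ⟨hρi, hmeas, hvol, hball, hsub⟩ := hA i hi
        rw [hA' hi, Function.update_of_ne (hne hi)]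
        exact ⟨hρi, hmeas, hvol, hball, hsub.trans subset_union_right⟩

-- The Vitali covering lemma, with enlargement factor 5, is applied to the doubled balls.
lemma measure_iUnion_closedBall_two_mul_le [Finite ι] {x : ι → E} {ρ : ι → ℝ}
    (hρ : ∀ j, 0 ≤ ρ j) {V : Set E} (hV : ∀ j, closedBall (x j) (ρ j) ⊆ V) :
    μ (⋃ j, closedBall (x j) (2 * ρ j)) ≤ 10 ^ finrank ℝ E * μ V := by
  classical
  cases nonempty_fintype ι
  obtain ⟨u, -, hdisj, hcover⟩ := Vitali.exists_disjoint_subfamily_covering_enlargement_closedBall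
    univ x (fun j ↦ 2 * ρ j) (∑ j, 2 * ρ j)
    (fun j _ ↦ Finset.single_le_sum (f := fun j ↦ 2 * ρ j)
      (fun i _ ↦ mul_nonneg zero_le_two (hρ i)) (Finset.mem_univ j)) 5 (by norm_num)
  have hsub : ⋃ j, closedBall (x j) (2 * ρ j) ⊆
      ⋃ b ∈ u.toFinset, closedBall (x b) (10 * ρ b) := by
    refine iUnion_subset fun j ↦ ?_
    obtain ⟨b, hb, hjb⟩ := hcover j trivial
    rw [← mul_assoc, show (5 * 2 : ℝ) = 10 by norm_num] at hjb
    exact hjb.trans (subset_biUnion_of_mem (u := fun b ↦ closedBall (x b) (10 * ρ b))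
      (mem_toFinset.2 hb))
  have hscale (b : ι) :
      μ (closedBall (x b) (10 * ρ b)) = 10 ^ finrank ℝ E * μ (closedBall (x b) (ρ b)) := by
    rw [Measure.addHaar_closedBall_mul μ _ (by norm_num) (hρ b),
      ← Measure.addHaar_closedBall_center μ (x b) (ρ b), ENNReal.ofReal_pow (by norm_num),
      ENNReal.ofReal_ofNat]
  calc μ (⋃ j, closedBall (x j) (2 * ρ j))
      ≤ ∑ b ∈ u.toFinset, μ (closedBall (x b) (10 * ρ b)) :=
        (measure_mono hsub).trans (measure_biUnion_finset_le _ _)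
    _ = 10 ^ finrank ℝ E * μ (⋃ b ∈ u.toFinset, closedBall (x b) (ρ b)) := by
        rw [measure_biUnion_finset _ fun _ _ ↦ measurableSet_closedBall, Finset.mul_sum,
          Finset.sum_congr rfl fun b _ ↦ hscale b]
        intro i hi j hj hij
        refine (hdisj (by simpa using hi) (by simpa using hj) hij).mono ?_ ?_ <;>
        exact closedBall_subset_closedBall (le_mul_of_one_le_left (hρ _) one_le_two)
    _ ≤ 10 ^ finrank ℝ E * μ V := by
        gcongr
        exact iUnion₂_subset fun b _ ↦ hV b

end Carving

/-- Scalar Calderón–Zygmund kernels with constant `C`, truncated so as to be continuous and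
compactly supported: convolution with `k` has norm at most `√C` on `L²`, and `k` satisfies
Hörmander's regularity condition. -/
structure IsCZKernel (μ : Measure E) (C : ℝ≥0) (k : E → ℝ) : Prop where
  continuous : Continuous k
  hasCompactSupport : HasCompactSupport k
  lintegral_sq_le : ∀ ⦃σ : E → ℝ⦄, Measurable σ → (∃ B, ∀ x, |σ x| ≤ B) → HasCompactSupport σ →
    ∫⁻ x, ‖∫ y, k (x - y) * σ y ∂μ‖ₑ ^ 2 ∂μ ≤ C * ∫⁻ x, ‖σ x‖ₑ ^ 2 ∂μ
  hormander : ∀ ⦃r : ℝ⦄ ⦃w : E⦄, 0 ≤ r → ‖w‖ ≤ r / 2 →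
    ∫⁻ x in {x | r ≤ ‖x‖}, ‖k x - k (x - w)‖ₑ ∂μ ≤ C

lemma setLIntegral_enorm_le_add_lintegral_sq {X : Type*} [MeasurableSpace X] (μ : Measure X)
    {f : X → ℝ} (hf : Measurable f) {l : ℝ≥0} (hl : l ≠ 0) (Q : Set X) :
    ∫⁻ x in Q, ‖f x‖ₑ ∂μ ≤ l * μ Q + (l : ℝ≥0∞)⁻¹ * ∫⁻ x, ‖f x‖ₑ ^ 2 ∂μ := by
  have hpt (x : X) : ‖f x‖ₑ ≤ l + (l : ℝ≥0∞)⁻¹ * ‖f x‖ₑ ^ 2 := by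
    rcases le_total ‖f x‖ₑ l with h | h
    · exact h.trans le_self_add
    · refine le_trans ?_ le_add_self
      calc ‖f x‖ₑ = (l : ℝ≥0∞)⁻¹ * l * ‖f x‖ₑ := by
            rw [ENNReal.inv_mul_cancel (by simpa) ENNReal.coe_ne_top, one_mul]
        _ ≤ (l : ℝ≥0∞)⁻¹ * ‖f x‖ₑ ^ 2 := by rw [mul_assoc, sq]; gcongr
  calc ∫⁻ x in Q, ‖f x‖ₑ ∂μ ≤ ∫⁻ x in Q, (l + (l : ℝ≥0∞)⁻¹ * ‖f x‖ₑ ^ 2) ∂μ := lintegral_mono hpt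
    _ = l * μ Q + (l : ℝ≥0∞)⁻¹ * ∫⁻ x in Q, ‖f x‖ₑ ^ 2 ∂μ := by
        rw [lintegral_add_left measurable_const, setLIntegral_const,
          lintegral_const_mul _ (hf.enorm.pow_const 2)]
    _ ≤ _ := by
        gcongr
        exact Measure.restrict_le_self

lemma lintegral_enorm_sq_sum_indicator {X : Type*} [MeasurableSpace X] {μ : Measure X}
    [Fintype ι] {A : ι → Set X} (hA : ∀ j, MeasurableSet (A j))
    (hdisj : Pairwise (Function.onFun Disjoint A)) (c : ι → ℝ) :
    ∫⁻ y, ‖∑ j, (A j).indicator (fun _ ↦ c j) y‖ₑ ^ 2 ∂μ = ∑ j, ‖c j‖ₑ ^ 2 * μ (A j) := by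
  classical
  have hpt (y : X) : ‖∑ j, (A j).indicator (fun _ ↦ c j) y‖ₑ ^ 2 =
      ∑ j, (A j).indicator (fun _ ↦ ‖c j‖ₑ ^ 2) y := by
    by_cases hy : ∃ i, y ∈ A i
    · obtain ⟨i, hi⟩ := hy
      have hne (j : ι) (hj : j ≠ i) : y ∉ A j := fun h ↦ (hdisj hj).notMem_of_mem_left h hi
      rw [Fintype.sum_eq_single i fun j hj ↦ indicator_of_notMem (hne j hj) _,
        Fintype.sum_eq_single i fun j hj ↦ indicator_of_notMem (hne j hj) _,
        indicator_of_mem hi, indicator_of_mem hi]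
    · push Not at hy
      simp [hy]
  simp only [hpt]
  rw [lintegral_finsetSum _ fun j _ ↦ measurable_const.indicator (hA j)]
  exact Finset.sum_congr rfl fun j _ ↦ lintegral_indicator_const (hA j) _

namespace IsCZKernel

variable [BorelSpace E] {μ : Measure E} {C : ℝ≥0} {k : E → ℝ}

lemma integrableOn_comp_sub_left [IsFiniteMeasureOnCompacts μ] [μ.IsAddLeftInvariant]
    [μ.IsNegInvariant] (hk : IsCZKernel μ C k) (z : E) (S : Set E) :
    IntegrableOn (fun y ↦ k (z - y)) S μ :=
  ((hk.continuous.integrable_of_hasCompactSupport hk.hasCompactSupport).comp_sub_left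
    z).integrableOn

lemma integral_mul_sum_indicator [IsFiniteMeasureOnCompacts μ] [μ.IsAddLeftInvariant]
    [μ.IsNegInvariant] [Fintype ι] (hk : IsCZKernel μ C k) {A : ι → Set E}
    (hA : ∀ j, MeasurableSet (A j)) (c : ι → ℝ) (z : E) :
    ∫ y, k (z - y) * ∑ j, (A j).indicator (fun _ ↦ c j) y ∂μ =
      ∑ j, c j * ∫ y in A j, k (z - y) ∂μ := by
  have hind (j : ι) (y : E) : k (z - y) * (A j).indicator (fun _ ↦ c j) y =
      (A j).indicator (fun y ↦ c j * k (z - y)) y := by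
    by_cases hy : y ∈ A j
    · rw [indicator_of_mem hy, indicator_of_mem hy, mul_comm]
    · rw [indicator_of_notMem hy, indicator_of_notMem hy, mul_zero]
  simp only [Finset.mul_sum, hind]
  rw [integral_finsetSum _ fun j _ ↦
    (IntegrableOn.integrable_indicator ((hk.integrableOn_comp_sub_left z (A j)).const_mul (c j))
      (hA j))]
  exact Finset.sum_congr rfl fun j _ ↦ by rw [integral_indicator (hA j), integral_const_mul]

lemma measurable_integral_sub [SFinite μ] [SecondCountableTopology E] (hk : IsCZKernel μ C k)
    (x : E) (A : Set E) : Measurable fun z ↦ ∫ y in A, (k (z - x) - k (z - y)) ∂μ := by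
  have := hk.continuous
  have hcont : Continuous fun p : E × E ↦ k (p.1 - x) - k (p.1 - p.2) := by fun_prop
  exact (hcont.stronglyMeasurable.integral_prod_right' (ν := μ.restrict A)).measurable

-- Hörmander's condition, integrated over the positions `y ∈ A` of a unit mass moved to `x`.
lemma setLIntegral_enorm_integral_sub_le [SFinite μ] [μ.IsAddRightInvariant]
    [SecondCountableTopology E] (hk : IsCZKernel μ C k) {A : Set E} {x : E} {ρ : ℝ} (hρ : 0 ≤ ρ)
    (hA : A ⊆ closedBall x ρ) :
    ∫⁻ z in (closedBall x (2 * ρ))ᶜ, ‖∫ y in A, (k (z - x) - k (z - y)) ∂μ‖ₑ ∂μ ≤ C * μ A := by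
  have := hk.continuous
  have hmeas : Measurable (Function.uncurry fun z y ↦ ‖k (z - x) - k (z - y)‖ₑ) :=
    Continuous.measurable (by unfold Function.uncurry; fun_prop)
  have hfar : (closedBall x (2 * ρ))ᶜ ⊆ (· - x) ⁻¹' {z | 2 * ρ ≤ ‖z‖} := fun z hz ↦ by
    rw [mem_compl_iff, mem_closedBall, not_le, dist_eq_norm] at hz
    exact hz.le
  have hfarm : MeasurableSet {z : E | 2 * ρ ≤ ‖z‖} :=
    (isClosed_le continuous_const continuous_norm).measurableSet
  have hinner : ∀ y ∈ A, ∫⁻ z in (closedBall x (2 * ρ))ᶜ,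
      ‖k (z - x) - k (z - y)‖ₑ ∂μ ≤ C := fun y hy ↦ by
    have hyx : ‖y - x‖ ≤ 2 * ρ / 2 := by
      rw [mul_div_cancel_left₀ _ two_ne_zero, ← dist_eq_norm]
      exact hA hy
    refine (lintegral_mono_set hfar).trans (le_of_eq_of_le ?_ (hk.hormander (by positivity) hyx))
    rw [← (measurePreserving_sub_right μ x).setLIntegral_comp_preimage hfarm (by fun_prop)]
    simp only [sub_sub_sub_cancel_right]
  calc ∫⁻ z in (closedBall x (2 * ρ))ᶜ, ‖∫ y in A, (k (z - x) - k (z - y)) ∂μ‖ₑ ∂μ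
      ≤ ∫⁻ z in (closedBall x (2 * ρ))ᶜ, ∫⁻ y in A, ‖k (z - x) - k (z - y)‖ₑ ∂μ ∂μ :=
        lintegral_mono fun z ↦ enorm_integral_le_lintegral_enorm _
    _ = ∫⁻ y in A, ∫⁻ z in (closedBall x (2 * ρ))ᶜ, ‖k (z - x) - k (z - y)‖ₑ ∂μ ∂μ :=
        lintegral_lintegral_swap hmeas.aemeasurable
    _ ≤ ∫⁻ _ in A, C ∂μ := setLIntegral_mono measurable_const hinner
    _ = C * μ A := setLIntegral_const _ _

section WeakType

variable [NormedSpace ℝ E] [FiniteDimensional ℝ E] [μ.IsAddHaarMeasure] [Fintype ι]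
  {x : ι → E} {ρ : ι → ℝ} {A : ι → Set E} {c : ι → ℝ} {l : ℝ≥0}

lemma setLIntegral_enorm_integral_sum_indicator_le (hk : IsCZKernel μ C k)
    (hA : ∀ j, MeasurableSet (A j)) (hdisj : Pairwise (Function.onFun Disjoint A))
    (hball : ∀ j, A j ⊆ closedBall (x j) (ρ j)) (hl : l ≠ 0) (hc : ∀ j, ‖c j‖ₑ ≤ l) (Q : Set E) :
    ∫⁻ z in Q, ‖∫ y, k (z - y) * ∑ j, (A j).indicator (fun _ ↦ c j) y ∂μ‖ₑ ∂μ ≤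
      l * μ Q + C * (l * ∑ j, μ (A j)) := by
  set σ : E → ℝ := fun y ↦ ∑ j, (A j).indicator (fun _ ↦ c j) y
  have hσ : Measurable σ := Finset.measurable_fun_sum _ fun j _ ↦ measurable_const.indicator (hA j)
  have hσbdd : ∃ B, ∀ y, |σ y| ≤ B := by
    refine ⟨∑ j, |c j|, fun y ↦ (Finset.abs_sum_le_sum_abs _ _).trans ?_⟩
    exact Finset.sum_le_sum fun j _ ↦ norm_indicator_le_norm_self (fun _ ↦ c j) y
  have hσsupp : HasCompactSupport σ := by
    refine .intro (isCompact_iUnion fun j ↦ isCompact_closedBall (x j) (ρ j)) fun y hy ↦ ?_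
    exact Finset.sum_eq_zero fun j _ ↦
      indicator_of_notMem (fun hyj ↦ hy (mem_iUnion.2 ⟨j, hball j hyj⟩)) _
  have hσsq : ∫⁻ y, ‖σ y‖ₑ ^ 2 ∂μ ≤ l * (l * ∑ j, μ (A j)) := by
    rw [lintegral_enorm_sq_sum_indicator hA hdisj, ← mul_assoc, ← sq, Finset.mul_sum]
    gcongr with j
    exact hc j
  have hT : Measurable fun z ↦ ∫ y, k (z - y) * σ y ∂μ := by
    have hkσ : Measurable fun p : E × E ↦ k (p.1 - p.2) * σ p.2 :=
      (hk.continuous.measurable.comp measurable_sub).mul (hσ.comp measurable_snd)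
    exact hkσ.stronglyMeasurable.integral_prod_right'.measurable
  refine (setLIntegral_enorm_le_add_lintegral_sq μ hT hl Q).trans (add_le_add_right ?_ _)
  calc (l : ℝ≥0∞)⁻¹ * ∫⁻ z, ‖∫ y, k (z - y) * σ y ∂μ‖ₑ ^ 2 ∂μ
      ≤ (l : ℝ≥0∞)⁻¹ * (C * (l * (l * ∑ j, μ (A j)))) := by
        gcongr
        exact (hk.lintegral_sq_le hσ hσbdd hσsupp).trans (by gcongr)
    _ = (l : ℝ≥0∞)⁻¹ * l * (C * (l * ∑ j, μ (A j))) := by ring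
    _ = C * (l * ∑ j, μ (A j)) := by
        rw [ENNReal.inv_mul_cancel (by simpa) ENNReal.coe_ne_top, one_mul]

-- Spreading each point mass uniformly over `A j` costs Hörmander's bound away from the doubled
-- balls, and the spread-out density has the good `L²` bound.
lemma setLIntegral_enorm_sum_measureReal_mul_le (hk : IsCZKernel μ C k) (hρ : ∀ j, 0 ≤ ρ j)
    (hA : ∀ j, MeasurableSet (A j)) (hdisj : Pairwise (Function.onFun Disjoint A))
    (hball : ∀ j, A j ⊆ closedBall (x j) (ρ j)) (hl : l ≠ 0) (hc : ∀ j, ‖c j‖ₑ ≤ l) (Q : Set E) :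
    ∫⁻ z in Q \ ⋃ j, closedBall (x j) (2 * ρ j), ‖∑ j, c j * μ.real (A j) * k (z - x j)‖ₑ ∂μ ≤
      l * μ Q + 2 * C * (l * ∑ j, μ (A j)) := by
  set Ω := ⋃ j, closedBall (x j) (2 * ρ j)
  set T : E → ℝ := fun z ↦ ∫ y, k (z - y) * ∑ j, (A j).indicator (fun _ ↦ c j) y ∂μ
  set D : ι → E → ℝ := fun j z ↦ ∫ y in A j, (k (z - x j) - k (z - y)) ∂μ
  have hD (j : ι) : Measurable (D j) := hk.measurable_integral_sub (x j) (A j)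
  have hsplit (z : E) : ∑ j, c j * μ.real (A j) * k (z - x j) = T z + ∑ j, c j * D j z := by
    simp only [T, D]
    rw [hk.integral_mul_sum_indicator hA, ← Finset.sum_add_distrib]
    refine Finset.sum_congr rfl fun j _ ↦ ?_
    have hfin : μ (A j) ≠ ⊤ := measure_ne_top_of_subset (hball j) measure_closedBall_lt_top.ne
    have hconst : IntegrableOn (fun _ ↦ k (z - x j)) (A j) μ := integrableOn_const hfin
    rw [integral_sub hconst (hk.integrableOn_comp_sub_left z (A j)),
      setIntegral_const, smul_eq_mul]
    ring
  have hpt (z : E) : ‖∑ j, c j * μ.real (A j) * k (z - x j)‖ₑ ≤ ‖T z‖ₑ + ∑ j, l * ‖D j z‖ₑ := by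
    rw [hsplit]
    refine (enorm_add_le _ _).trans (add_le_add_right ((enorm_sum_le _ _).trans ?_) _)
    gcongr with j
    exact (enorm_mul _ _).trans_le (by gcongr; exact hc j)
  have hDj (j : ι) : ∫⁻ z in Q \ Ω, ‖D j z‖ₑ ∂μ ≤ C * μ (A j) := by
    refine (lintegral_mono_set fun z hz ↦ ?_).trans
      (hk.setLIntegral_enorm_integral_sub_le (hρ j) (hball j))
    exact fun hzj ↦ hz.2 (mem_iUnion.2 ⟨j, hzj⟩)
  calc ∫⁻ z in Q \ Ω, ‖∑ j, c j * μ.real (A j) * k (z - x j)‖ₑ ∂μ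
      ≤ ∫⁻ z in Q \ Ω, (‖T z‖ₑ + ∑ j, l * ‖D j z‖ₑ) ∂μ := lintegral_mono hpt
    _ = ∫⁻ z in Q \ Ω, ‖T z‖ₑ ∂μ + ∑ j, l * ∫⁻ z in Q \ Ω, ‖D j z‖ₑ ∂μ := by
        have hlD (j : ι) : Measurable fun z ↦ l * ‖D j z‖ₑ := (hD j).enorm.const_mul _
        rw [lintegral_add_right _ (Finset.measurable_fun_sum _ fun j _ ↦ hlD j),
          lintegral_finsetSum _ fun j _ ↦ hlD j]
        simp only [lintegral_const_mul _ (hD _).enorm]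
    _ ≤ l * μ Q + C * (l * ∑ j, μ (A j)) + ∑ j, l * (C * μ (A j)) := by
        gcongr with j
        · exact (lintegral_mono_set sdiff_subset).trans
            (hk.setLIntegral_enorm_integral_sum_indicator_le hA hdisj hball hl hc Q)
        · exact hDj j
    _ = l * μ Q + 2 * C * (l * ∑ j, μ (A j)) := by
        rw [← Finset.mul_sum, ← Finset.mul_sum]
        ring

/-- The weak-type (1,1) estimate for a finite sum of point masses, with an exceptional set `Ω` in
place of the level sets. -/
theorem exists_setLIntegral_enorm_sum_le [Nontrivial E] (hk : IsCZKernel μ C k) (x : ι → E)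
    (α : ι → ℝ) (hl : l ≠ 0) :
    ∃ Ω : Set E, MeasurableSet Ω ∧ l * μ Ω ≤ 10 ^ finrank ℝ E * ∑ j, ‖α j‖ₑ ∧
      ∀ Q, ∫⁻ z in Q \ Ω, ‖∑ j, α j * k (z - x j)‖ₑ ∂μ ≤ l * μ Q + 2 * C * ∑ j, ‖α j‖ₑ := by
  obtain ⟨ρ, A, hdisj, hA⟩ :=
    exists_pairwiseDisjoint_subset_closedBall μ x (fun j ↦ ‖α j‖₊ / l) Finset.univ
  simp only [Finset.mem_univ, iUnion_true, forall_const] at hA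
  choose hρ hAm hvol hball hcover using hA
  rw [Finset.coe_univ, PairwiseDisjoint, pairwise_univ] at hdisj
  set c : ι → ℝ := fun j ↦ SignType.sign (α j) * l
  have hc (j : ι) : ‖c j‖ₑ ≤ l := by
    have hsign : ‖(SignType.sign (α j) : ℝ)‖ₑ ≤ 1 := by
      rcases lt_trichotomy (α j) 0 with h | h | h <;> simp [h]
    calc ‖c j‖ₑ = ‖(SignType.sign (α j) : ℝ)‖ₑ * l := by simp [c, enorm_mul]
      _ ≤ l := mul_le_of_le_one_left' hsign
  have hcα (j : ι) : c j * μ.real (A j) = α j := by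
    rw [Measure.real, hvol, ENNReal.coe_toReal, NNReal.coe_div, coe_nnnorm, mul_assoc,
      mul_div_cancel₀ _ (NNReal.coe_ne_zero.2 hl), Real.norm_eq_abs, sign_mul_abs]
  have hmass : l * ∑ j, μ (A j) = ∑ j, ‖α j‖ₑ := by
    rw [Finset.mul_sum]
    refine Finset.sum_congr rfl fun j _ ↦ ?_
    rw [hvol, ← ENNReal.coe_mul, mul_div_cancel₀ _ hl, enorm_eq_nnnorm]
  refine ⟨⋃ j, closedBall (x j) (2 * ρ j), .iUnion fun j ↦ measurableSet_closedBall, ?_, ?_⟩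
  · calc l * μ (⋃ j, closedBall (x j) (2 * ρ j))
        ≤ l * (10 ^ finrank ℝ E * ∑ j, μ (A j)) := by
          gcongr
          exact (measure_iUnion_closedBall_two_mul_le μ hρ hcover).trans
            (by gcongr; exact measure_iUnion_fintype_le μ A)
      _ = 10 ^ finrank ℝ E * ∑ j, ‖α j‖ₑ := by rw [← hmass]; ring
  · simpa only [hcα, hmass] using
      hk.setLIntegral_enorm_sum_measureReal_mul_le hρ hAm hdisj hball hl hc

end WeakType

end IsCZKernel

end CalderonZygmund

section LocalizedWeakType

variable {E : Type*} [NormedAddCommGroup E] [NormedSpace ℝ E] [FiniteDimensional ℝ E]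
  [MeasurableSpace E] [BorelSpace E] {ι : Type*} {μ ν : Measure E} [μ.IsAddHaarMeasure]

lemma lintegral_setLIntegral_closedBall [SFinite ν] {F : E → ℝ≥0∞} (hF : Measurable F) (r : ℝ) :
    ∫⁻ c, ∫⁻ x in closedBall c r, F x ∂ν ∂μ = μ (closedBall 0 r) * ∫⁻ x, F x ∂ν := by
  have hS : MeasurableSet {p : E × E | dist p.2 p.1 ≤ r} :=
    (isClosed_le (continuous_snd.dist continuous_fst) continuous_const).measurableSet
  have hm : Measurable (Function.uncurry fun c x : E ↦ (closedBall c r).indicator F x) :=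
    (hF.comp measurable_snd).indicator hS
  have hsymm (c x : E) :
      (closedBall c r).indicator F x = (closedBall x r).indicator (fun _ ↦ F x) c := by
    simp only [indicator, mem_closedBall']
    rw [dist_comm]
  calc ∫⁻ c, ∫⁻ x in closedBall c r, F x ∂ν ∂μ
      = ∫⁻ c, ∫⁻ x, (closedBall c r).indicator F x ∂ν ∂μ := by
        simp only [lintegral_indicator measurableSet_closedBall]
    _ = ∫⁻ x, ∫⁻ c, (closedBall c r).indicator F x ∂μ ∂ν :=
        lintegral_lintegral_swap hm.aemeasurable
    _ = ∫⁻ x, μ (closedBall 0 r) * F x ∂ν := by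
        simp only [hsymm, lintegral_indicator_const measurableSet_closedBall,
          Measure.addHaar_closedBall_center, mul_comm]
    _ = μ (closedBall 0 r) * ∫⁻ x, F x ∂ν := lintegral_const_mul _ hF

namespace IsCZKernel

variable [Nontrivial E] [Fintype ι] {C : ℝ≥0} {k : E → ℝ} {v : E → ℝ≥0∞}

lemma setLIntegral_min_enorm_sum_le (hk : IsCZKernel μ C k) (x : ι → E) (α : ι → ℝ) {t l : ℝ≥0}
    {Q : Set E} (hQ : MeasurableSet Q) (hv : ∀ z ∈ Q, v z ≤ t * l) :
    ∫⁻ z in Q, min (v z) ‖∑ j, α j * k (z - x j)‖ₑ ∂μ ≤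
      (t * 10 ^ finrank ℝ E + 2 * C) * ∑ j, ‖α j‖ₑ + l * μ Q := by
  rcases eq_or_ne l 0 with rfl | hl
  · rw [setLIntegral_congr_fun (g := 0) hQ fun z hz ↦ ?_]
    · simp
    · have hvz : v z = 0 := by simpa using hv z hz
      rw [hvz, zero_min, Pi.zero_apply]
  obtain ⟨Ω, hΩm, hΩ, hsum⟩ := hk.exists_setLIntegral_enorm_sum_le x α hl
  calc ∫⁻ z in Q, min (v z) ‖∑ j, α j * k (z - x j)‖ₑ ∂μ
      = ∫⁻ z in Q ∩ Ω, min (v z) ‖∑ j, α j * k (z - x j)‖ₑ ∂μ +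
          ∫⁻ z in Q \ Ω, min (v z) ‖∑ j, α j * k (z - x j)‖ₑ ∂μ :=
        (lintegral_inter_add_sdiff _ _ hΩm).symm
    _ ≤ ∫⁻ _ in Q ∩ Ω, t * l ∂μ + ∫⁻ z in Q \ Ω, ‖∑ j, α j * k (z - x j)‖ₑ ∂μ :=
        add_le_add
          (setLIntegral_mono' (hQ.inter hΩm) fun z hz ↦ (min_le_left _ _).trans (hv z hz.1))
          (lintegral_mono fun z ↦ min_le_right _ _)
    _ ≤ t * (l * μ Ω) + (l * μ Q + 2 * C * ∑ j, ‖α j‖ₑ) := by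
        rw [setLIntegral_const, mul_assoc]
        gcongr
        · exact inter_subset_right
        · exact hsum Q
    _ ≤ t * (10 ^ finrank ℝ E * ∑ j, ‖α j‖ₑ) + (l * μ Q + 2 * C * ∑ j, ‖α j‖ₑ) := by gcongr
    _ = (t * 10 ^ finrank ℝ E + 2 * C) * ∑ j, ‖α j‖ₑ + l * μ Q := by ring

variable [IsFiniteMeasure ν] {s : ℝ} {b κ : ℝ≥0}

lemma setLIntegral_closedBall_min_enorm_sum_le (hk : IsCZKernel μ C k)
    (hs : 0 < s) (hks : ∀ x, s ≤ ‖x‖ → k x = 0) (hκ : κ ≠ 0)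
    (hv : ∀ x, v x * μ (closedBall 0 s) ≤ b * ν (closedBall x s)) (x : ι → E) (α : ι → ℝ) (c : E) :
    ∫⁻ z in closedBall c s, min (v z) ‖∑ j, α j * k (z - x j)‖ₑ ∂μ ≤
      (b / κ * 10 ^ finrank ℝ E + 2 * C) *
        ∑ j, ‖α j‖ₑ * (closedBall (x j) (2 * s)).indicator 1 c + κ * ν (closedBall c (2 * s)) := by
  classical
  have hW0 : μ (closedBall 0 s) ≠ 0 := (measure_closedBall_pos μ 0 hs).ne'
  have hWtop : μ (closedBall (0 : E) s) ≠ ⊤ := measure_closedBall_lt_top.ne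
  set mc := ν (closedBall c (2 * s))
  set α' : ι → ℝ := fun j ↦ if c ∈ closedBall (x j) (2 * s) then α j else 0
  have hα' : ∑ j, ‖α j‖ₑ * (closedBall (x j) (2 * s)).indicator 1 c = ∑ j, ‖α' j‖ₑ := by
    refine Finset.sum_congr rfl fun j _ ↦ ?_
    by_cases h : c ∈ closedBall (x j) (2 * s)
    · simp only [α', if_pos h, indicator_of_mem h, Pi.one_apply, mul_one]
    · simp only [α', if_neg h, indicator_of_notMem h, mul_zero, enorm_zero]
  have hsum : ∀ z ∈ closedBall c s, ∑ j, α j * k (z - x j) = ∑ j, α' j * k (z - x j) := by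
    refine fun z hz ↦ Finset.sum_congr rfl fun j _ ↦ ?_
    by_cases h : c ∈ closedBall (x j) (2 * s)
    · simp only [α', if_pos h]
    · rw [hks (z - x j), mul_zero, mul_zero]
      rw [mem_closedBall, not_le] at h
      rw [mem_closedBall'] at hz
      rw [← dist_eq_norm]
      linarith [dist_triangle c z (x j)]
  lift κ * mc / μ (closedBall (0 : E) s) to ℝ≥0 using by finiteness with l hl
  have hlW : l * μ (closedBall c s) = κ * mc := by
    rw [hl, Measure.addHaar_closedBall_center μ c, ENNReal.div_mul_cancel hW0 hWtop]
  have hvl : ∀ z ∈ closedBall c s, v z ≤ (b / κ : ℝ≥0) * l := fun z hz ↦ by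
    have hzc : closedBall z s ⊆ closedBall c (2 * s) :=
      closedBall_subset_closedBall' (by linarith [mem_closedBall.1 hz])
    calc v z ≤ b * mc / μ (closedBall (0 : E) s) :=
          ENNReal.le_div_iff_mul_le (.inl hW0) (.inl hWtop) |>.2
            ((hv z).trans (mul_le_mul_right (measure_mono hzc) _))
      _ = (b / κ : ℝ≥0) * l := by
          rw [hl, mul_div_assoc, mul_div_assoc, ← mul_assoc, ← ENNReal.coe_mul,
            div_mul_cancel₀ _ hκ]
  rw [hα', ← hlW, ← ENNReal.coe_div hκ]
  refine le_of_eq_of_le (setLIntegral_congr_fun measurableSet_closedBall fun z hz ↦ ?_)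
    (hk.setLIntegral_min_enorm_sum_le x α' measurableSet_closedBall hvl)
  simp only [hsum z hz]

-- Averaging the localized estimate over all balls of radius `s` replaces the masses
-- `ν (closedBall c (2 * s))` by the total mass of `ν`.
theorem lintegral_min_enorm_sum_le (hk : IsCZKernel μ C k)
    (hs : 0 < s) (hks : ∀ x, s ≤ ‖x‖ → k x = 0) (hκ : κ ≠ 0) (hvm : Measurable v)
    (hv : ∀ x, v x * μ (closedBall 0 s) ≤ b * ν (closedBall x s)) (x : ι → E) (α : ι → ℝ) :
    ∫⁻ z, min (v z) ‖∑ j, α j * k (z - x j)‖ₑ ∂μ ≤ 2 ^ finrank ℝ E *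
      ((b / κ * 10 ^ finrank ℝ E + 2 * C) * ∑ j, ‖α j‖ₑ + κ * ν univ) := by
  have := hk.continuous
  have hF : Measurable fun z ↦ min (v z) ‖∑ j, α j * k (z - x j)‖ₑ :=
    hvm.min (Continuous.measurable (by fun_prop))
  have hdouble : μ (closedBall 0 (2 * s)) = 2 ^ finrank ℝ E * μ (closedBall (0 : E) s) := by
    rw [Measure.addHaar_closedBall_mul μ _ zero_le_two hs.le, ENNReal.ofReal_pow zero_le_two,
      ENNReal.ofReal_ofNat]
  have hν : ∫⁻ c, ν (closedBall c (2 * s)) ∂μ = μ (closedBall 0 (2 * s)) * ν univ := by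
    simpa using lintegral_setLIntegral_closedBall (μ := μ) (ν := ν) (F := 1) measurable_one (2 * s)
  have hind (j : ι) :
      Measurable fun c ↦ ‖α j‖ₑ * (closedBall (x j) (2 * s)).indicator (1 : E → ℝ≥0∞) c :=
    measurable_const.mul (measurable_one.indicator measurableSet_closedBall)
  have hα : ∫⁻ c, ∑ j, ‖α j‖ₑ * (closedBall (x j) (2 * s)).indicator 1 c ∂μ =
      μ (closedBall 0 (2 * s)) * ∑ j, ‖α j‖ₑ := by
    rw [lintegral_finsetSum _ fun j _ ↦ hind j, Finset.mul_sum]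
    refine Finset.sum_congr rfl fun j _ ↦ ?_
    rw [lintegral_const_mul _ (measurable_one.indicator measurableSet_closedBall),
      lintegral_indicator_one measurableSet_closedBall, Measure.addHaar_closedBall_center, mul_comm]
  set D : ℝ≥0∞ := b / κ * 10 ^ finrank ℝ E + 2 * C
  have hsum : Measurable fun c ↦
      D * ∑ j, ‖α j‖ₑ * (closedBall (x j) (2 * s)).indicator (1 : E → ℝ≥0∞) c :=
    (Finset.measurable_fun_sum _ fun j _ ↦ hind j).const_mul D
  rw [← ENNReal.mul_le_mul_iff_right (measure_closedBall_pos μ (0 : E) hs).ne'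
    measure_closedBall_lt_top.ne, ← lintegral_setLIntegral_closedBall hF]
  calc ∫⁻ c, ∫⁻ z in closedBall c s, min (v z) ‖∑ j, α j * k (z - x j)‖ₑ ∂μ ∂μ
      ≤ ∫⁻ c, (D * ∑ j, ‖α j‖ₑ * (closedBall (x j) (2 * s)).indicator 1 c +
          κ * ν (closedBall c (2 * s))) ∂μ :=
        lintegral_mono fun c ↦ hk.setLIntegral_closedBall_min_enorm_sum_le hs hks hκ hv x α c
    _ = D * (μ (closedBall 0 (2 * s)) * ∑ j, ‖α j‖ₑ) +
          κ * (μ (closedBall 0 (2 * s)) * ν univ) := by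
        rw [lintegral_add_left hsum, lintegral_const_mul _
          (Finset.measurable_fun_sum _ fun j _ ↦ hind j), hα,
          lintegral_const_mul' _ _ ENNReal.coe_ne_top, hν]
    _ = _ := by
        rw [hdouble]
        ring

end IsCZKernel

end LocalizedWeakType

section RadialProfile

variable {d ρ : ℝ}

/-- A smooth function which is positive on `[0, ∞)` and the identity on `[1, ∞)`. It replaces the
squared norm in the Newtonian field `x / ‖x‖ ^ d` to remove the singularity at the origin. -/
noncomputable def smoothPosId (ρ : ℝ) : ℝ :=
  ρ + expNegInvGlue (1 - ρ)

lemma smoothPosId_pos (hρ : 0 ≤ ρ) : 0 < smoothPosId ρ := by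
  rcases hρ.eq_or_lt with rfl | hρ
  · simpa [smoothPosId] using expNegInvGlue.pos_of_pos one_pos
  · exact add_pos_of_pos_of_nonneg hρ (expNegInvGlue.nonneg _)

lemma smoothPosId_of_one_le (hρ : 1 ≤ ρ) : smoothPosId ρ = ρ := by
  rw [smoothPosId, expNegInvGlue.zero_of_nonpos (by linarith), add_zero]

lemma contDiff_smoothPosId {k : ℕ∞} : ContDiff ℝ k smoothPosId :=
  contDiff_id.add (expNegInvGlue.contDiff.comp (contDiff_const.sub contDiff_id))

lemma hasDerivAt_smoothPosId :
    HasDerivAt smoothPosId (1 - deriv expNegInvGlue (1 - ρ)) ρ := by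
  have hglue : HasDerivAt expNegInvGlue (deriv expNegInvGlue (1 - ρ)) (1 - ρ) :=
    ((expNegInvGlue.contDiff (n := 1)).differentiable one_ne_zero _).hasDerivAt
  simpa [sub_eq_add_neg] using! (hasDerivAt_id ρ).add (hglue.comp ρ ((hasDerivAt_id ρ).const_sub 1))

lemma deriv_expNegInvGlue_of_nonpos {x : ℝ} (hx : x ≤ 0) : deriv expNegInvGlue x = 0 := by
  refine IsLocalMin.deriv_eq_zero (Eventually.of_forall fun t ↦ ?_)
  rw [expNegInvGlue.zero_of_nonpos hx]
  exact expNegInvGlue.nonneg t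

/-- The profile `q` of the regularised Newtonian field `x ↦ q (‖x‖ ^ 2) • x` in dimension `d`. -/
noncomputable def radialProfile (d ρ : ℝ) : ℝ :=
  smoothPosId ρ ^ (-d / 2)

/-- The divergence in dimension `d` of `x ↦ q (‖x‖ ^ 2) • x`, where `q = radialProfile d`, as a
function of `ρ = ‖x‖ ^ 2`. -/
noncomputable def radialDivergence (d ρ : ℝ) : ℝ :=
  d * radialProfile d ρ + 2 * ρ * deriv (radialProfile d) ρ

lemma contDiffAt_radialProfile {k : ℕ∞} (hρ : 0 ≤ ρ) : ContDiffAt ℝ k (radialProfile d) ρ :=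
  contDiff_smoothPosId.contDiffAt.rpow_const_of_ne (smoothPosId_pos hρ).ne'

lemma radialProfile_of_one_le (hρ : 1 ≤ ρ) : radialProfile d ρ = ρ ^ (-d / 2) := by
  rw [radialProfile, smoothPosId_of_one_le hρ]

lemma radialDivergence_eq (hρ : 0 ≤ ρ) :
    radialDivergence d ρ = d * smoothPosId ρ ^ (-d / 2 - 1) *
      (expNegInvGlue (1 - ρ) + ρ * deriv expNegInvGlue (1 - ρ)) := by
  have hpos := smoothPosId_pos hρ
  have hderiv : deriv (radialProfile d) ρ = (1 - deriv expNegInvGlue (1 - ρ)) * (-d / 2) *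
      smoothPosId ρ ^ (-d / 2 - 1) := (hasDerivAt_smoothPosId.rpow_const (Or.inl hpos.ne')).deriv
  have hprofile : radialProfile d ρ =
      smoothPosId ρ ^ (-d / 2 - 1) * (ρ + expNegInvGlue (1 - ρ)) := by
    rw [← smoothPosId, ← Real.rpow_add_one hpos.ne', sub_add_cancel, radialProfile]
  rw [radialDivergence, hderiv, hprofile]
  ring

lemma radialDivergence_nonneg (hd : 0 ≤ d) (hρ : 0 ≤ ρ) : 0 ≤ radialDivergence d ρ := by
  rw [radialDivergence_eq hρ]
  have hpos := smoothPosId_pos hρ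
  have hglue := expNegInvGlue.nonneg (1 - ρ)
  have hglue' : 0 ≤ deriv expNegInvGlue (1 - ρ) := expNegInvGlue.monotone.deriv_nonneg
  positivity

lemma radialDivergence_of_one_le (hρ : 1 ≤ ρ) : radialDivergence d ρ = 0 := by
  rw [radialDivergence_eq (by linarith), expNegInvGlue.zero_of_nonpos (by linarith),
    deriv_expNegInvGlue_of_nonpos (by linarith)]
  ring

lemma radialDivergence_zero_pos (hd : 0 < d) : 0 < radialDivergence d 0 := by
  have hprofile : 0 < radialProfile d 0 := Real.rpow_pos_of_pos (smoothPosId_pos le_rfl) _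
  simpa [radialDivergence] using mul_pos hd hprofile

end RadialProfile

section RadialField

variable {E : Type*} [NormedAddCommGroup E] [InnerProductSpace ℝ E]

/-- The component along `v` of the regularised Newtonian field `x ↦ q (‖x‖ ^ 2) • x`. -/
noncomputable def radialField (v x : E) : ℝ :=
  radialProfile (finrank ℝ E) (‖x‖ ^ 2) * inner ℝ v x

/-- The divergence of `radialField`: a bump supported in the unit ball. -/
noncomputable def radialBump (x : E) : ℝ :=
  radialDivergence (finrank ℝ E) (‖x‖ ^ 2)

lemma contDiff_radialProfile_norm_sq {d : ℝ} {k : ℕ∞} :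
    ContDiff ℝ k fun x : E ↦ radialProfile d (‖x‖ ^ 2) :=
  contDiff_iff_contDiffAt.2 fun x ↦
    (contDiffAt_radialProfile (sq_nonneg _)).comp x (contDiff_norm_sq ℝ).contDiffAt

lemma contDiff_radialField {k : ℕ∞} (v : E) : ContDiff ℝ k (radialField v) :=
  contDiff_radialProfile_norm_sq.mul (contDiff_const.inner ℝ contDiff_id)

lemma fderiv_radialField (v x w : E) :
    fderiv ℝ (radialField v) x w = radialProfile (finrank ℝ E) (‖x‖ ^ 2) * inner ℝ v w +
      2 * deriv (radialProfile (finrank ℝ E)) (‖x‖ ^ 2) * (inner ℝ v x * inner ℝ w x) := by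
  have hprofile := ((contDiffAt_radialProfile (d := finrank ℝ E) (k := 1)
    (sq_nonneg ‖x‖)).differentiableAt one_ne_zero).hasDerivAt
  have hq := hprofile.comp_hasFDerivAt x (hasStrictFDerivAt_norm_sq x).hasFDerivAt
  have hmul : HasFDerivAt (radialField v)
      (radialProfile (finrank ℝ E) (‖x‖ ^ 2) • innerSL ℝ v +
        inner ℝ v x • deriv (radialProfile (finrank ℝ E)) (‖x‖ ^ 2) • (2 • innerSL ℝ x)) x :=
    hq.mul (innerSL ℝ v).hasFDerivAt
  rw [hmul.fderiv]
  simp only [add_apply, FunLike.coe_smul, Pi.smul_apply, innerSL_apply_apply, smul_eq_mul,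
    two_nsmul, real_inner_comm x w]
  ring

lemma fderiv_radialField_comm (v w x : E) :
    fderiv ℝ (radialField v) x w = fderiv ℝ (radialField w) x v := by
  rw [fderiv_radialField, fderiv_radialField, real_inner_comm, mul_comm (inner ℝ v x)]

lemma sum_fderiv_radialField {ι : Type*} [Fintype ι] (b : OrthonormalBasis ι ℝ E) (x : E) :
    ∑ i, fderiv ℝ (radialField (b i)) x (b i) = radialBump x := by
  have hnorm : ∑ i, inner ℝ (b i) x * inner ℝ (b i) x = ‖x‖ ^ 2 := by
    simpa [← sq] using b.sum_sq_norm_inner_right x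
  simp only [fderiv_radialField, Finset.sum_add_distrib, ← Finset.mul_sum, hnorm,
    real_inner_self_eq_norm_sq, b.norm_eq_one, one_pow, Finset.sum_const, Finset.card_univ,
    ← finrank_eq_card_basis b.toBasis, nsmul_eq_mul, mul_one]
  rw [radialBump, radialDivergence]
  ring

lemma radialField_two_smul {v x : E} (hx : 1 ≤ ‖x‖) :
    2 ^ finrank ℝ E * radialField v ((2 : ℝ) • x) = 2 * radialField v x := by
  have hx₁ : 1 ≤ ‖x‖ ^ 2 := one_le_pow₀ hx
  have hx₂ : ‖(2 : ℝ) • x‖ ^ 2 = 2 ^ (2 : ℝ) * ‖x‖ ^ 2 := by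
    simp [norm_smul, mul_pow]
  have hpow : ((2 : ℝ) ^ (2 : ℝ)) ^ (-(finrank ℝ E : ℝ) / 2) = (2 ^ finrank ℝ E)⁻¹ := by
    rw [← Real.rpow_mul zero_le_two, mul_div_cancel₀ _ two_ne_zero, Real.rpow_neg zero_le_two,
      Real.rpow_natCast]
  rw [radialField, radialField, hx₂, radialProfile_of_one_le hx₁,
    radialProfile_of_one_le (by norm_num; linarith), Real.mul_rpow (by positivity) (by positivity),
    hpow, inner_smul_right]
  field_simp

lemma continuous_radialBump [FiniteDimensional ℝ E] : Continuous (radialBump (E := E)) := by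
  simp only [← funext (sum_fderiv_radialField (stdOrthonormalBasis ℝ E))]
  exact continuous_finsetSum _ fun i _ ↦
    ((contDiff_radialField (k := 1) _).continuous_fderiv one_ne_zero).clm_apply continuous_const

lemma radialBump_nonneg (x : E) : 0 ≤ radialBump x :=
  radialDivergence_nonneg (Nat.cast_nonneg _) (sq_nonneg _)

lemma radialBump_of_one_le_norm {x : E} (hx : 1 ≤ ‖x‖) : radialBump x = 0 :=
  radialDivergence_of_one_le (one_le_pow₀ hx)

lemma radialBump_zero_pos [FiniteDimensional ℝ E] [Nontrivial E] : 0 < radialBump (0 : E) := by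
  have hd : (0 : ℝ) < finrank ℝ E := Nat.cast_pos.2 finrank_pos
  simpa [radialBump] using radialDivergence_zero_pos hd

end RadialField

section HessianKernels

open scoped Convolution

variable {E : Type*} [NormedAddCommGroup E] [NormedSpace ℝ E] [FiniteDimensional ℝ E]
  [MeasurableSpace E] [BorelSpace E] {ν : Measure E} [ν.IsAddHaarMeasure]
  {ι : Type*} {e : ι → E} {f σ : E → ℝ} {K G : ι → E → ℝ}

lemma sq_enorm_integral_mul_le {X : Type*} [MeasurableSpace X] {μ : Measure X} {f g : X → ℝ}
    (hf : Measurable f) (hg : Measurable g) :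
    ‖∫ x, f x * g x ∂μ‖ₑ ^ 2 ≤ (∫⁻ x, ‖f x‖ₑ ∂μ) * ∫⁻ x, ‖f x‖ₑ * ‖g x‖ₑ ^ 2 ∂μ := by
  have holder := ENNReal.lintegral_mul_norm_pow_le (μ := μ) hf.enorm.aemeasurable
    (hf.enorm.mul (hg.enorm.pow_const 2)).aemeasurable (p := 1 / 2) (q := 1 / 2)
    (by norm_num) (by norm_num) (by norm_num)
  have hsplit (x : X) : ‖f x * g x‖ₑ =
      ‖f x‖ₑ ^ (1 / 2 : ℝ) * (‖f x‖ₑ * ‖g x‖ₑ ^ 2) ^ (1 / 2 : ℝ) := by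
    rw [enorm_mul, ENNReal.mul_rpow_of_nonneg _ _ (by norm_num), ← mul_assoc,
      ← ENNReal.rpow_add_of_nonneg _ _ (by norm_num) (by norm_num), ← ENNReal.rpow_natCast,
      ← ENNReal.rpow_mul]
    norm_num
  have hsq (a : ℝ≥0∞) : (a ^ (1 / 2 : ℝ)) ^ 2 = a := by
    rw [← ENNReal.rpow_natCast, ← ENNReal.rpow_mul]
    norm_num
  calc ‖∫ x, f x * g x ∂μ‖ₑ ^ 2
      ≤ (∫⁻ x, ‖f x‖ₑ ^ (1 / 2 : ℝ) * (‖f x‖ₑ * ‖g x‖ₑ ^ 2) ^ (1 / 2 : ℝ) ∂μ) ^ 2 := by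
        gcongr
        simpa only [hsplit] using enorm_integral_le_lintegral_enorm (μ := μ) fun x ↦ f x * g x
    _ ≤ ((∫⁻ x, ‖f x‖ₑ ∂μ) ^ (1 / 2 : ℝ) *
          (∫⁻ x, ‖f x‖ₑ * ‖g x‖ₑ ^ 2 ∂μ) ^ (1 / 2 : ℝ)) ^ 2 := by
        gcongr
        exact holder
    _ = (∫⁻ x, ‖f x‖ₑ ∂μ) * ∫⁻ x, ‖f x‖ₑ * ‖g x‖ₑ ^ 2 ∂μ := by rw [mul_pow, hsq, hsq]

lemma lintegral_enorm_sq_integral_sub_mul_le (hf : Measurable f) (hσ : Measurable σ) :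
    ∫⁻ x, ‖∫ y, f (x - y) * σ y ∂ν‖ₑ ^ 2 ∂ν ≤
      (∫⁻ x, ‖f x‖ₑ ∂ν) ^ 2 * ∫⁻ x, ‖σ x‖ₑ ^ 2 ∂ν := by
  have hmeas : Measurable fun p : E × E ↦ ‖f (p.1 - p.2)‖ₑ * ‖σ p.2‖ₑ ^ 2 := by fun_prop
  calc ∫⁻ x, ‖∫ y, f (x - y) * σ y ∂ν‖ₑ ^ 2 ∂ν
      ≤ ∫⁻ x, (∫⁻ y, ‖f (x - y)‖ₑ ∂ν) * ∫⁻ y, ‖f (x - y)‖ₑ * ‖σ y‖ₑ ^ 2 ∂ν ∂ν :=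
        lintegral_mono fun x ↦ sq_enorm_integral_mul_le (by fun_prop) hσ
    _ = (∫⁻ x, ‖f x‖ₑ ∂ν) * ∫⁻ x, ∫⁻ y, ‖f (x - y)‖ₑ * ‖σ y‖ₑ ^ 2 ∂ν ∂ν := by
        simp only [lintegral_sub_left_eq_self fun y ↦ ‖f y‖ₑ]
        exact lintegral_const_mul _ hmeas.lintegral_prod_right'
    _ = (∫⁻ x, ‖f x‖ₑ ∂ν) * ∫⁻ y, (∫⁻ x, ‖f x‖ₑ ∂ν) * ‖σ y‖ₑ ^ 2 ∂ν := by
        rw [lintegral_lintegral_swap hmeas.aemeasurable]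
        congr! with y
        rw [lintegral_mul_const _ (by fun_prop), lintegral_sub_right_eq_self (fun x ↦ ‖f x‖ₑ)]
    _ = (∫⁻ x, ‖f x‖ₑ ∂ν) ^ 2 * ∫⁻ x, ‖σ x‖ₑ ^ 2 ∂ν := by
        rw [lintegral_const_mul _ (hσ.enorm.pow_const 2), sq, mul_assoc]

lemma integral_fderiv_mul_fderiv_comm {F H : E → ℝ} (hF : ContDiff ℝ 2 F) (hH : ContDiff ℝ 1 H)
    (hHc : HasCompactSupport H) (v w : E) :
    ∫ x, fderiv ℝ F x v * fderiv ℝ H x w ∂ν = ∫ x, fderiv ℝ F x w * fderiv ℝ H x v ∂ν := by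
  have hF' : ContDiff ℝ 1 (fderiv ℝ F) := hF.fderiv_right one_add_one_eq_two.le
  have hFv (v : E) : ContDiff ℝ 1 fun x ↦ fderiv ℝ F x v := hF'.clm_apply contDiff_const
  have hparts (v w : E) : ∫ x, fderiv ℝ F x v * fderiv ℝ H x w ∂ν =
      -∫ x, fderiv ℝ (fun x ↦ fderiv ℝ F x v) x w * H x ∂ν := by
    refine integral_mul_fderiv_eq_neg_fderiv_mul_of_integrable ?_ ?_ ?_
      (fun x _ ↦ (hFv v).differentiable one_ne_zero x) fun x _ ↦ hH.differentiable one_ne_zero x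
    · exact ((((hFv v).continuous_fderiv one_ne_zero).clm_apply continuous_const).mul
        hH.continuous).integrable_of_hasCompactSupport hHc.mul_left
    · exact ((hFv v).continuous.mul ((hH.continuous_fderiv one_ne_zero).clm_apply
        continuous_const)).integrable_of_hasCompactSupport (hHc.fderiv_apply ℝ w).mul_left
    · exact ((hFv v).continuous.mul hH.continuous).integrable_of_hasCompactSupport hHc.mul_left
  have hsymm (x : E) : fderiv ℝ (fun x ↦ fderiv ℝ F x v) x w =
      fderiv ℝ (fun x ↦ fderiv ℝ F x w) x v := by
    have hd := hF'.differentiable one_ne_zero x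
    have hsecond : IsSymmSndFDerivAt ℝ F x := hF.contDiffAt.isSymmSndFDerivAt (by simp)
    simpa [fderiv_clm_apply hd (differentiableAt_const _)] using hsecond w v
  simp only [hparts, hsymm]

lemma lintegral_enorm_sq_fderiv_le [Fintype ι] (hG : ∀ i, ContDiff ℝ 2 (G i))
    (hGc : ∀ i, HasCompactSupport (G i))
    (hsym : ∀ i j x, fderiv ℝ (G i) x (e j) = fderiv ℝ (G j) x (e i)) (i j : ι) :
    ∫⁻ x, ‖fderiv ℝ (G i) x (e j)‖ₑ ^ 2 ∂ν ≤ ∫⁻ x, ‖∑ i, fderiv ℝ (G i) x (e i)‖ₑ ^ 2 ∂ν := by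
  have hint (i j v w) : Integrable (fun x ↦ fderiv ℝ (G i) x v * fderiv ℝ (G j) x w) ν :=
    ((((hG i).continuous_fderiv two_ne_zero).clm_apply continuous_const).mul
      (((hG j).continuous_fderiv two_ne_zero).clm_apply
        continuous_const)).integrable_of_hasCompactSupport ((hGc j).fderiv_apply ℝ w).mul_left
  have hint_sum : Integrable (fun x ↦ (∑ i, fderiv ℝ (G i) x (e i)) ^ 2) ν := by
    simp only [sq, Finset.sum_mul_sum]
    exact integrable_finsetSum _ fun i _ ↦ integrable_finsetSum _ fun j _ ↦ hint i j _ _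
  have hdiv : ∫ x, (∑ i, fderiv ℝ (G i) x (e i)) ^ 2 ∂ν =
      ∑ i, ∑ j, ∫ x, fderiv ℝ (G i) x (e j) ^ 2 ∂ν := by
    simp only [sq, Finset.sum_mul_sum]
    rw [integral_finsetSum _ fun i _ ↦ integrable_finsetSum _ fun j _ ↦ hint i j _ _]
    refine Finset.sum_congr rfl fun i _ ↦ ?_
    rw [integral_finsetSum _ fun j _ ↦ hint i j _ _]
    refine Finset.sum_congr rfl fun j _ ↦ ?_
    rw [integral_fderiv_mul_fderiv_comm (hG i) ((hG j).of_le one_le_two) (hGc j)]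
    simp only [hsym j i]
  have hle : ∫ x, fderiv ℝ (G i) x (e j) ^ 2 ∂ν ≤ ∫ x, (∑ i, fderiv ℝ (G i) x (e i)) ^ 2 ∂ν := by
    have hnonneg (i j) : 0 ≤ ∫ x, fderiv ℝ (G i) x (e j) ^ 2 ∂ν :=
      integral_nonneg fun _ ↦ sq_nonneg _
    rw [hdiv]
    exact (Finset.single_le_sum (fun j _ ↦ hnonneg i j) (Finset.mem_univ j)).trans
      (Finset.single_le_sum (f := fun i ↦ ∑ j, ∫ x, fderiv ℝ (G i) x (e j) ^ 2 ∂ν)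
        (fun i _ ↦ Finset.sum_nonneg fun j _ ↦ hnonneg i j) (Finset.mem_univ i))
  have hlint {F : E → ℝ} (hF : Integrable (fun x ↦ F x ^ 2) ν) :
      ∫⁻ x, ‖F x‖ₑ ^ 2 ∂ν = ENNReal.ofReal (∫ x, F x ^ 2 ∂ν) := by
    simp only [ofReal_integral_eq_lintegral_ofReal hF (Eventually.of_forall fun _ ↦ sq_nonneg _),
      Real.enorm_eq_ofReal_abs, ← ENNReal.ofReal_pow (abs_nonneg _), sq_abs]
  rw [hlint (by simpa only [sq] using hint i i _ _), hlint hint_sum]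
  exact ENNReal.ofReal_le_ofReal hle

lemma integrable_comp_sub_mul (hf : Continuous f) (hfc : HasCompactSupport f)
    (hσ : LocallyIntegrable σ ν) (x : E) : Integrable (fun y ↦ f (x - y) * σ y) ν :=
  (hfc.convolutionExists_left (ContinuousLinearMap.lsmul ℝ ℝ) hf hσ x).integrable_swap

lemma fderiv_convolution_lsmul_apply (hf : ContDiff ℝ 1 f) (hfc : HasCompactSupport f)
    (hσ : LocallyIntegrable σ ν) (x v : E) :
    fderiv ℝ (f ⋆[ContinuousLinearMap.lsmul ℝ ℝ, ν] σ) x v =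
      ∫ y, fderiv ℝ f (x - y) v * σ y ∂ν := by
  have hint := ((hfc.fderiv ℝ).convolutionExists_left
    ((ContinuousLinearMap.lsmul ℝ ℝ).precompL E) (hf.continuous_fderiv one_ne_zero) hσ
    x).integrable_swap
  rw [(hfc.hasFDerivAt_convolution_left _ hf hσ x).fderiv, convolution_eq_swap,
    ContinuousLinearMap.integral_apply hint]
  rfl

lemma lintegral_enorm_sq_integral_fderiv_sub_mul_le [Fintype ι] (hK : ∀ i, ContDiff ℝ 2 (K i))
    (hKc : ∀ i, HasCompactSupport (K i))
    (hsym : ∀ i j x, fderiv ℝ (K i) x (e j) = fderiv ℝ (K j) x (e i)) (hσ : Measurable σ)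
    (hσb : ∃ B, ∀ x, |σ x| ≤ B) (hσc : HasCompactSupport σ) (i j : ι) :
    ∫⁻ x, ‖∫ y, fderiv ℝ (K i) (x - y) (e j) * σ y ∂ν‖ₑ ^ 2 ∂ν ≤
      (∫⁻ x, ‖∑ i, fderiv ℝ (K i) x (e i)‖ₑ ∂ν) ^ 2 * ∫⁻ x, ‖σ x‖ₑ ^ 2 ∂ν := by
  obtain ⟨B, hB⟩ := hσb
  have hσl : LocallyIntegrable σ ν := fun x ↦
    ⟨closedBall x 1, closedBall_mem_nhds x one_pos, Measure.integrableOn_of_bounded (M := B)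
      measure_closedBall_lt_top.ne hσ.aestronglyMeasurable (Eventually.of_forall hB)⟩
  have hderiv (i) (v) : Continuous fun x ↦ fderiv ℝ (K i) x v :=
    ((hK i).continuous_fderiv two_ne_zero).clm_apply continuous_const
  let G (i : ι) : E → ℝ := K i ⋆[ContinuousLinearMap.lsmul ℝ ℝ, ν] σ
  have hG (i) : ContDiff ℝ 2 (G i) := (hKc i).contDiff_convolution_left (n := 2) _ (hK i) hσl
  have hGc (i) : HasCompactSupport (G i) := (hKc i).convolution _ hσc
  have hconv (i) (x v : E) : fderiv ℝ (G i) x v = ∫ y, fderiv ℝ (K i) (x - y) v * σ y ∂ν :=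
    fderiv_convolution_lsmul_apply ((hK i).of_le one_le_two) (hKc i) hσl x v
  have hdiv (x : E) : ∑ i, fderiv ℝ (G i) x (e i) =
      ∫ y, (∑ i, fderiv ℝ (K i) (x - y) (e i)) * σ y ∂ν := by
    simp only [hconv, Finset.sum_mul]
    exact (integral_finsetSum _ fun i _ ↦ integrable_comp_sub_mul (hderiv i _)
      ((hKc i).fderiv_apply ℝ _) hσl x).symm
  calc ∫⁻ x, ‖∫ y, fderiv ℝ (K i) (x - y) (e j) * σ y ∂ν‖ₑ ^ 2 ∂ν
      = ∫⁻ x, ‖fderiv ℝ (G i) x (e j)‖ₑ ^ 2 ∂ν := by simp only [hconv]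
    _ ≤ ∫⁻ x, ‖∑ i, fderiv ℝ (G i) x (e i)‖ₑ ^ 2 ∂ν :=
        lintegral_enorm_sq_fderiv_le hG hGc (fun i j x ↦ by simp only [hconv, hsym i j]) i j
    _ = ∫⁻ x, ‖∫ y, (∑ i, fderiv ℝ (K i) (x - y) (e i)) * σ y ∂ν‖ₑ ^ 2 ∂ν := by simp only [hdiv]
    _ ≤ (∫⁻ x, ‖∑ i, fderiv ℝ (K i) x (e i)‖ₑ ∂ν) ^ 2 * ∫⁻ x, ‖σ x‖ₑ ^ 2 ∂ν :=
        lintegral_enorm_sq_integral_sub_mul_le (f := fun x ↦ ∑ i, fderiv ℝ (K i) x (e i))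
          (continuous_finsetSum _ fun i _ ↦ hderiv i _).measurable hσ

end HessianKernels

lemma sum_range_ite_two_pow_mul_lt_one_le {c : ℝ} (hc : 0 ≤ c) (M : ℕ) :
    ∑ m ∈ Finset.range M, (if 2 ^ m * c < 1 then 2 ^ m * c else 0) ≤ 2 := by
  suffices h : ∑ m ∈ Finset.range M, (if 2 ^ m * c < 1 then 2 ^ m * c else 0) ≤ min 2 (2 ^ M * c)
    from h.trans (min_le_left _ _)
  induction M with
  | zero => simp [hc]
  | succ M ih =>
    rw [le_min_iff] at ih
    have hpos : 0 ≤ 2 ^ M * c := by positivity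
    rw [Finset.sum_range_succ, le_min_iff, pow_succ]
    split_ifs with h <;> constructor <;> linarith

lemma sum_range_div_two_pow_le {s : ℝ} (hs : 0 ≤ s) (M : ℕ) :
    ∑ m ∈ Finset.range M, s / 2 ^ m ≤ 2 * s := by
  calc ∑ m ∈ Finset.range M, s / 2 ^ m = s * ∑ m ∈ Finset.range M, (1 / (2 : ℝ)) ^ m := by
        simp only [Finset.mul_sum, one_div, ← inv_pow, div_eq_mul_inv s]
    _ ≤ s * 2 := by gcongr; exact sum_geometric_two_le M
    _ = 2 * s := mul_comm s 2

lemma setLIntegral_enorm_sub_comp_sub_le {E : Type*} [NormedAddCommGroup E] [MeasurableSpace E]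
    [BorelSpace E] (ν : Measure E) {θ : E → ℝ} {r : ℝ} {w : E} {L : ℝ≥0} (hL : LipschitzWith L θ)
    (hθ : ∀ x, 1 ≤ ‖x‖ → θ x = 0) (hw : ‖w‖ ≤ r / 2) :
    ∫⁻ x in {x | r ≤ ‖x‖}, ‖θ x - θ (x - w)‖ₑ ∂ν ≤
      ENNReal.ofReal (if r / 2 < 1 then r / 2 else 0) * (L * ν (closedBall 0 2)) := by
  have htri (x : E) : ‖x‖ - r / 2 ≤ ‖x - w‖ := by linarith [norm_sub_norm_le x w]
  split_ifs with hr
  · have hpt (x : E) : ‖θ x - θ (x - w)‖ₑ ≤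
        (closedBall 0 2).indicator (fun _ ↦ ENNReal.ofReal (r / 2) * L) x := by
      by_cases hx : x ∈ closedBall 0 2
      · rw [indicator_of_mem hx, ← edist_eq_enorm_sub, mul_comm]
        refine (hL x (x - w)).trans ?_
        rw [edist_dist, dist_eq_norm, sub_sub_cancel]
        gcongr
      · rw [mem_closedBall_zero_iff, not_le] at hx
        simp [hθ x (by linarith), hθ (x - w) (by linarith [htri x])]
    calc ∫⁻ x in {x | r ≤ ‖x‖}, ‖θ x - θ (x - w)‖ₑ ∂ν
        ≤ ∫⁻ x, (closedBall 0 2).indicator (fun _ ↦ ENNReal.ofReal (r / 2) * L) x ∂ν :=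
          (setLIntegral_le_lintegral _ _).trans (lintegral_mono hpt)
      _ = ENNReal.ofReal (r / 2) * (L * ν (closedBall 0 2)) := by
          rw [lintegral_indicator_const measurableSet_closedBall, mul_assoc]
  · rw [ENNReal.ofReal_zero, zero_mul, nonpos_iff_eq_zero]
    refine setLIntegral_eq_zero (measurableSet_le measurable_const measurable_norm) fun x hx ↦ ?_
    rw [mem_ofPred_eq] at hx
    simp [hθ x (by linarith), hθ (x - w) (by linarith [htri x])]

section L1Dilation

variable {E : Type*} [NormedAddCommGroup E] [NormedSpace ℝ E] {f θ : E → ℝ} {r s t : ℝ} {v w x : E}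

/-- The dilation `x ↦ t ^ d * f (t • x)` of `f` by the factor `t`, in dimension `d`, normalised so
as to preserve the `L¹` norm. -/
noncomputable def l1Dilation (f : E → ℝ) (t : ℝ) (x : E) : ℝ :=
  t ^ finrank ℝ E * f (t • x)

lemma l1Dilation_l1Dilation (f : E → ℝ) (s t : ℝ) :
    l1Dilation (l1Dilation f s) t = l1Dilation f (s * t) := by
  funext x
  simp only [l1Dilation, smul_smul, mul_pow]
  ring

lemma l1Dilation_eq_zero (hf : ∀ x, 1 ≤ ‖x‖ → f x = 0) (ht : 0 < t) (hx : t⁻¹ ≤ ‖x‖) :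
    l1Dilation f t x = 0 := by
  have hnorm : 1 ≤ ‖t • x‖ := by
    rwa [norm_smul, Real.norm_of_nonneg ht.le, ← inv_le_iff_one_le_mul₀' ht]
  rw [l1Dilation, hf _ hnorm, mul_zero]

lemma contDiff_l1Dilation {k : ℕ∞} (hf : ContDiff ℝ k f) (t : ℝ) :
    ContDiff ℝ k (l1Dilation f t) :=
  contDiff_const.mul (hf.comp (contDiff_const_smul t))

lemma continuous_l1Dilation (hf : Continuous f) (t : ℝ) : Continuous (l1Dilation f t) :=
  continuous_const.mul (hf.comp (continuous_const_smul t))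

lemma fderiv_l1Dilation (f : E → ℝ) (t : ℝ) (v x : E) :
    fderiv ℝ (l1Dilation f t) x v = t * l1Dilation (fun y ↦ fderiv ℝ f y v) t x := by
  have hsmul : l1Dilation f t = t ^ finrank ℝ E • fun x ↦ f (t • x) := rfl
  rw [hsmul, fderiv_const_smul_field, Pi.smul_apply, fderiv_comp_smul]
  simp only [l1Dilation, FunLike.coe_smul, Pi.smul_apply, smul_eq_mul]
  ring

lemma fderiv_eq_zero_of_le_norm (hf : ContDiff ℝ 1 f) (hs : s ≠ 0)
    (hfs : ∀ x, s ≤ ‖x‖ → f x = 0) (hx : s ≤ ‖x‖) : fderiv ℝ f x = 0 := by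
  have hclosed : IsClosed {x | fderiv ℝ f x = 0} :=
    isClosed_eq (hf.continuous_fderiv one_ne_zero) continuous_const
  have hsub : (closedBall 0 s)ᶜ ⊆ {x | fderiv ℝ f x = 0} := fun y hy ↦ by
    have hzero : f =ᶠ[𝓝 y] fun _ ↦ 0 := by
      filter_upwards [isClosed_closedBall.isOpen_compl.mem_nhds hy] with z hz
      exact hfs z (not_le.1 fun h ↦ hz (mem_closedBall_zero_iff.2 h)).le
    rw [mem_ofPred_eq, hzero.fderiv_eq, fderiv_fun_const, Pi.zero_apply]
  refine closure_minimal hsub hclosed ?_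
  rw [closure_compl, interior_closedBall _ hs, mem_compl_iff, mem_ball_zero_iff, not_lt]
  exact hx

lemma hasCompactSupport_of_le_norm [FiniteDimensional ℝ E] (hf : ∀ x, s ≤ ‖x‖ → f x = 0) :
    HasCompactSupport f :=
  HasCompactSupport.intro (isCompact_closedBall 0 s) fun x hx ↦
    hf x (not_le.1 fun h ↦ hx (mem_closedBall_zero_iff.2 h)).le

variable [FiniteDimensional ℝ E] [MeasurableSpace E] [BorelSpace E] (ν : Measure E)
  [ν.IsAddHaarMeasure]

lemma setLIntegral_enorm_l1Dilation (f : E → ℝ) (ht : 0 < t) (S : Set E) :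
    ∫⁻ x in {x | t • x ∈ S}, ‖l1Dilation f t x‖ₑ ∂ν = ∫⁻ x in S, ‖f x‖ₑ ∂ν := by
  have htd : 0 < t ^ finrank ℝ E := pow_pos ht _
  have hemb := measurableEmbedding_const_smul₀ (α := E) ht.ne'
  have hscale : ∫⁻ x in {x | t • x ∈ S}, ‖f (t • x)‖ₑ ∂ν =
      ENNReal.ofReal (t ^ finrank ℝ E)⁻¹ * ∫⁻ x in S, ‖f x‖ₑ ∂ν := by
    rw [← abs_of_pos (inv_pos.2 htd), ← smul_eq_mul, ← lintegral_smul_measure,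
      ← Measure.restrict_smul, ← Measure.map_addHaar_smul ν ht.ne', hemb.restrict_map,
      hemb.lintegral_map]
    rfl
  simp only [l1Dilation, enorm_mul, Real.enorm_of_nonneg htd.le]
  rw [lintegral_const_mul' _ _ ENNReal.ofReal_ne_top, hscale, ← mul_assoc,
    ← ENNReal.ofReal_mul htd.le, mul_inv_cancel₀ htd.ne', ENNReal.ofReal_one, one_mul]

lemma lintegral_enorm_l1Dilation (f : E → ℝ) (ht : 0 < t) :
    ∫⁻ x, ‖l1Dilation f t x‖ₑ ∂ν = ∫⁻ x, ‖f x‖ₑ ∂ν := by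
  simpa using setLIntegral_enorm_l1Dilation ν f ht univ

lemma setLIntegral_enorm_l1Dilation_sub_comp_sub_le {L : ℝ≥0} (hL : LipschitzWith L θ)
    (hθ : ∀ x, 1 ≤ ‖x‖ → θ x = 0) (ht : 0 < t) (hw : ‖w‖ ≤ r / 2) :
    ∫⁻ x in {x | r ≤ ‖x‖}, ‖l1Dilation θ t x - l1Dilation θ t (x - w)‖ₑ ∂ν ≤
      ENNReal.ofReal (if t * (r / 2) < 1 then t * (r / 2) else 0) * (L * ν (closedBall 0 2)) := by
  have hdil (x : E) : l1Dilation θ t x - l1Dilation θ t (x - w) =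
      l1Dilation (fun y ↦ θ y - θ (y - t • w)) t x := by
    simp only [l1Dilation, smul_sub, mul_sub]
  have hset : {x : E | r ≤ ‖x‖} = {x | t • x ∈ {y : E | t * r ≤ ‖y‖}} := by
    ext x
    simp [norm_smul, abs_of_pos ht, ht]
  have hw' : ‖t • w‖ ≤ t * r / 2 := by
    rw [norm_smul, Real.norm_of_nonneg ht.le, mul_div_assoc]
    gcongr
  simp only [hdil]
  rw [hset, setLIntegral_enorm_l1Dilation ν _ ht, ← mul_div_assoc]
  exact setLIntegral_enorm_sub_comp_sub_le ν hL hθ hw'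

end L1Dilation

section TransportKernel

variable {E : Type*} [NormedAddCommGroup E] [InnerProductSpace ℝ E] {s : ℝ} {M : ℕ} {v w x : E}

/-- The difference of two consecutive dilations of `radialField v`. It is supported in the unit
ball, since outside of it `radialField v` is homogeneous of degree `1 - d`. -/
noncomputable def annularField (v x : E) : ℝ :=
  2⁻¹ * l1Dilation (radialField v) 2 x - radialField v x

lemma contDiff_annularField {k : ℕ∞} (v : E) : ContDiff ℝ k (annularField v) :=
  (contDiff_const.mul (contDiff_l1Dilation (contDiff_radialField v) 2)).sub
    (contDiff_radialField v)

lemma annularField_eq_zero (hx : 1 ≤ ‖x‖) : annularField v x = 0 := by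
  rw [annularField, l1Dilation, radialField_two_smul hx, inv_mul_cancel_left₀ two_ne_zero, sub_self]

lemma fderiv_annularField (v x w : E) :
    fderiv ℝ (annularField v) x w = l1Dilation (fun y ↦ fderiv ℝ (radialField v) y w) 2 x -
      fderiv ℝ (radialField v) x w := by
  have hd := (contDiff_radialField (k := 1) v).differentiable one_ne_zero x
  have hdil := (contDiff_l1Dilation (contDiff_radialField (k := 1) v) 2).differentiable
    one_ne_zero x
  have hsub : annularField v = (fun x ↦ 2⁻¹ * l1Dilation (radialField v) 2 x) - radialField v := rfl
  rw [hsub, fderiv_sub (hdil.const_mul _) hd, fderiv_const_mul hdil]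
  simp only [sub_apply, FunLike.coe_smul, Pi.smul_apply, fderiv_l1Dilation, smul_eq_mul]
  rw [inv_mul_cancel_left₀ two_ne_zero]

/-- A kernel supported in the ball of radius `s` whose divergence is the difference of the bumps at
the scales `s / 2 ^ M` and `s`. -/
noncomputable def transportKernel (s : ℝ) (M : ℕ) (v x : E) : ℝ :=
  ∑ m ∈ Finset.range M, s / 2 ^ m * l1Dilation (annularField v) (2 ^ m / s) x

lemma contDiff_transportKernel {k : ℕ∞} (s : ℝ) (M : ℕ) (v : E) :
    ContDiff ℝ k (transportKernel s M v) :=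
  ContDiff.sum fun _ _ ↦ contDiff_const.mul (contDiff_l1Dilation (contDiff_annularField v) _)

lemma continuous_fderiv_transportKernel_apply (s : ℝ) (M : ℕ) (v w : E) :
    Continuous fun x ↦ fderiv ℝ (transportKernel s M v) x w :=
  ((contDiff_transportKernel (k := 1) s M v).continuous_fderiv one_ne_zero).clm_apply
    continuous_const

lemma transportKernel_eq_zero (hs : 0 < s) (hx : s ≤ ‖x‖) : transportKernel s M v x = 0 := by
  refine Finset.sum_eq_zero fun m _ ↦ ?_
  rw [l1Dilation_eq_zero (fun _ ↦ annularField_eq_zero) (by positivity), mul_zero]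
  rw [inv_div]
  exact (div_le_self hs.le (one_le_pow₀ one_le_two)).trans hx

lemma fderiv_transportKernel (hs : s ≠ 0) (v x w : E) :
    fderiv ℝ (transportKernel s M v) x w = ∑ m ∈ Finset.range M,
      l1Dilation (fun y ↦ fderiv ℝ (annularField v) y w) (2 ^ m / s) x := by
  have hd (m : ℕ) := (contDiff_l1Dilation (contDiff_annularField (k := 1) v)
    (2 ^ m / s)).differentiable one_ne_zero x
  have hsum : fderiv ℝ (transportKernel s M v) x = ∑ m ∈ Finset.range M,
      (s / 2 ^ m) • fderiv ℝ (l1Dilation (annularField v) (2 ^ m / s)) x := by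
    simp only [← fderiv_const_mul (hd _)]
    exact fderiv_fun_sum fun m _ ↦ (hd m).const_mul _
  rw [hsum, sum_apply]
  refine Finset.sum_congr rfl fun m _ ↦ ?_
  rw [FunLike.coe_smul, Pi.smul_apply, fderiv_l1Dilation, smul_eq_mul, ← mul_assoc]
  field_simp

lemma fderiv_transportKernel_comm (hs : s ≠ 0) (v w x : E) :
    fderiv ℝ (transportKernel s M v) x w = fderiv ℝ (transportKernel s M w) x v := by
  simp only [fderiv_transportKernel hs, fderiv_annularField, fderiv_radialField_comm v w]

lemma sum_fderiv_transportKernel {ι : Type*} [Fintype ι] (b : OrthonormalBasis ι ℝ E)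
    (hs : s ≠ 0) (x : E) : ∑ i, fderiv ℝ (transportKernel s M (b i)) x (b i) =
      l1Dilation radialBump (2 ^ M / s) x - l1Dilation radialBump s⁻¹ x := by
  have hannular (y : E) : ∑ i, fderiv ℝ (annularField (b i)) y (b i) =
      l1Dilation radialBump 2 y - radialBump y := by
    simp only [fderiv_annularField, Finset.sum_sub_distrib, sum_fderiv_radialField, l1Dilation,
      ← Finset.mul_sum]
  have hscale (m : ℕ) : ∑ i, l1Dilation (fun y ↦ fderiv ℝ (annularField (b i)) y (b i))
      (2 ^ m / s) x = l1Dilation radialBump (2 ^ (m + 1) / s) x -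
        l1Dilation radialBump (2 ^ m / s) x := by
    have hdouble : (2 : ℝ) ^ (m + 1) / s = 2 * (2 ^ m / s) := by ring
    rw [hdouble, ← l1Dilation_l1Dilation]
    simp only [l1Dilation, ← Finset.mul_sum, hannular, mul_sub]
  simp only [fderiv_transportKernel hs]
  rw [Finset.sum_comm, Finset.sum_congr rfl fun m _ ↦ hscale m,
    Finset.sum_range_sub fun m ↦ l1Dilation radialBump (2 ^ m / s) x, pow_zero, one_div]

variable [FiniteDimensional ℝ E] [MeasurableSpace E] [BorelSpace E] (ν : Measure E)
  [ν.IsAddHaarMeasure]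

lemma lintegral_enorm_transportKernel_le (hs : 0 < s) (M : ℕ) (v : E) :
    ∫⁻ x, ‖transportKernel s M v x‖ₑ ∂ν ≤
      ENNReal.ofReal (2 * s) * ∫⁻ x, ‖annularField v x‖ₑ ∂ν := by
  have hmeas (m : ℕ) : Measurable (l1Dilation (annularField v) (2 ^ m / s)) :=
    (contDiff_l1Dilation (contDiff_annularField (k := 0) v) _).continuous.measurable
  have hterm (m : ℕ) : ∫⁻ x, ‖s / 2 ^ m * l1Dilation (annularField v) (2 ^ m / s) x‖ₑ ∂ν =
      ENNReal.ofReal (s / 2 ^ m) * ∫⁻ x, ‖annularField v x‖ₑ ∂ν := by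
    simp only [enorm_mul, Real.enorm_of_nonneg (div_nonneg hs.le (pow_nonneg zero_le_two m))]
    rw [lintegral_const_mul' _ _ ENNReal.ofReal_ne_top, lintegral_enorm_l1Dilation ν _
      (by positivity)]
  calc ∫⁻ x, ‖transportKernel s M v x‖ₑ ∂ν
      ≤ ∫⁻ x, ∑ m ∈ Finset.range M, ‖s / 2 ^ m * l1Dilation (annularField v) (2 ^ m / s) x‖ₑ ∂ν :=
        lintegral_mono fun x ↦ enorm_sum_le _ _
    _ = ENNReal.ofReal (∑ m ∈ Finset.range M, s / 2 ^ m) * ∫⁻ x, ‖annularField v x‖ₑ ∂ν := by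
        rw [lintegral_finsetSum _ fun m _ ↦ ((hmeas m).const_mul _).enorm,
          ENNReal.ofReal_sum_of_nonneg fun m _ ↦ by positivity, Finset.sum_mul]
        exact Finset.sum_congr rfl fun m _ ↦ hterm m
    _ ≤ ENNReal.ofReal (2 * s) * ∫⁻ x, ‖annularField v x‖ₑ ∂ν := by
        gcongr
        exact sum_range_div_two_pow_le hs.le M

lemma setLIntegral_enorm_fderiv_transportKernel_sub_le {L : ℝ≥0} {r : ℝ} {u : E} (hs : 0 < s)
    (hL : LipschitzWith L fun x ↦ fderiv ℝ (annularField v) x w) (hr : 0 ≤ r)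
    (hu : ‖u‖ ≤ r / 2) : ∫⁻ x in {x | r ≤ ‖x‖}, ‖fderiv ℝ (transportKernel s M v) x w -
      fderiv ℝ (transportKernel s M v) (x - u) w‖ₑ ∂ν ≤ 2 * (L * ν (closedBall 0 2)) := by
  set θ : E → ℝ := fun x ↦ fderiv ℝ (annularField v) x w
  have hθ (x : E) (hx : 1 ≤ ‖x‖) : θ x = 0 := by
    simp only [θ, fderiv_eq_zero_of_le_norm (contDiff_annularField v) one_ne_zero
      (fun _ ↦ annularField_eq_zero) hx, zero_apply]
  have hmeas (m : ℕ) : Measurable fun x ↦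
      ‖l1Dilation θ (2 ^ m / s) x - l1Dilation θ (2 ^ m / s) (x - u)‖ₑ := by
    have := (continuous_l1Dilation hL.continuous (2 ^ m / s)).measurable
    fun_prop
  simp only [fderiv_transportKernel hs.ne', ← Finset.sum_sub_distrib]
  calc ∫⁻ x in {x | r ≤ ‖x‖}, ‖∑ m ∈ Finset.range M,
        (l1Dilation θ (2 ^ m / s) x - l1Dilation θ (2 ^ m / s) (x - u))‖ₑ ∂ν
      ≤ ∫⁻ x in {x | r ≤ ‖x‖}, ∑ m ∈ Finset.range M,
          ‖l1Dilation θ (2 ^ m / s) x - l1Dilation θ (2 ^ m / s) (x - u)‖ₑ ∂ν :=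
        lintegral_mono fun x ↦ enorm_sum_le _ _
    _ ≤ ∑ m ∈ Finset.range M, ENNReal.ofReal
          (if 2 ^ m * (r / (2 * s)) < 1 then 2 ^ m * (r / (2 * s)) else 0) *
            (L * ν (closedBall 0 2)) := by
        rw [lintegral_finsetSum _ fun m _ ↦ hmeas m]
        refine Finset.sum_le_sum fun m _ ↦ ?_
        have hm : (2 : ℝ) ^ m * (r / (2 * s)) = 2 ^ m / s * (r / 2) := by ring
        rw [hm]
        exact setLIntegral_enorm_l1Dilation_sub_comp_sub_le ν hL hθ (by positivity) hu
    _ ≤ 2 * (L * ν (closedBall 0 2)) := by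
        rw [← Finset.sum_mul, ← ENNReal.ofReal_sum_of_nonneg fun m _ ↦ by split_ifs <;> positivity]
        gcongr
        exact ENNReal.ofReal_le_ofNat.2 (sum_range_ite_two_pow_mul_lt_one_le (by positivity) M)

lemma lintegral_enorm_sum_fderiv_transportKernel_le {ι : Type*} [Fintype ι]
    (b : OrthonormalBasis ι ℝ E) (hs : 0 < s) (M : ℕ) :
    ∫⁻ x, ‖∑ i, fderiv ℝ (transportKernel s M (b i)) x (b i)‖ₑ ∂ν ≤
      2 * ∫⁻ x : E, ‖radialBump x‖ₑ ∂ν := by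
  simp only [sum_fderiv_transportKernel b hs.ne']
  calc ∫⁻ x, ‖l1Dilation radialBump (2 ^ M / s) x - l1Dilation radialBump s⁻¹ x‖ₑ ∂ν
      ≤ ∫⁻ x, ‖l1Dilation radialBump (2 ^ M / s) x‖ₑ + ‖l1Dilation radialBump s⁻¹ x‖ₑ ∂ν :=
        lintegral_mono fun x ↦ enorm_sub_le
    _ = 2 * ∫⁻ x, ‖radialBump x‖ₑ ∂ν := by
        rw [lintegral_add_left (continuous_l1Dilation continuous_radialBump _).measurable.enorm,
          lintegral_enorm_l1Dilation ν _ (by positivity), lintegral_enorm_l1Dilation ν _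
          (by positivity), two_mul]

theorem exists_isCZKernel_fderiv_transportKernel {ι : Type*} [Fintype ι]
    (b : OrthonormalBasis ι ℝ E) : ∃ C : ℝ≥0, ∀ s > 0, ∀ M i j,
      IsCZKernel ν C fun x ↦ fderiv ℝ (transportKernel s M (b i)) x (b j) := by
  have hbump : ∫⁻ x : E, ‖radialBump x‖ₑ ∂ν ≠ ⊤ :=
    (continuous_radialBump.integrable_of_hasCompactSupport (μ := ν) (hasCompactSupport_of_le_norm
      fun _ ↦ radialBump_of_one_le_norm)).2.ne
  have hlip (p : ι × ι) : ∃ L, LipschitzWith L fun x ↦ fderiv ℝ (annularField (b p.1)) x (b p.2) :=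
    ContDiff.lipschitzWith_of_hasCompactSupport (𝕂 := ℝ) (n := 1)
      ((hasCompactSupport_of_le_norm fun _ ↦ annularField_eq_zero).fderiv_apply ℝ _)
      (((contDiff_annularField (k := 2) _).fderiv_right one_add_one_eq_two.le).clm_apply
        contDiff_const) one_ne_zero
  choose L hL using hlip
  obtain ⟨Λ, hΛ⟩ := Finite.exists_le L
  have hfin : (2 * ∫⁻ x : E, ‖radialBump x‖ₑ ∂ν) ^ 2 + 2 * (Λ * ν (closedBall 0 2)) ≠ ⊤ :=
    ENNReal.add_ne_top.2 ⟨ENNReal.pow_ne_top (ENNReal.mul_ne_top ENNReal.ofNat_ne_top hbump),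
      ENNReal.mul_ne_top ENNReal.ofNat_ne_top
        (ENNReal.mul_ne_top ENNReal.coe_ne_top measure_closedBall_lt_top.ne)⟩
  refine ⟨((2 * ∫⁻ x : E, ‖radialBump x‖ₑ ∂ν) ^ 2 + 2 * (Λ * ν (closedBall 0 2))).toNNReal,
    fun s hs M i j ↦ ?_⟩
  have hK (v : E) : HasCompactSupport (transportKernel s M v) :=
    hasCompactSupport_of_le_norm fun _ ↦ transportKernel_eq_zero hs
  constructor
  · exact continuous_fderiv_transportKernel_apply s M _ _
  · exact (hK _).fderiv_apply ℝ _
  · intro σ hσ hσb hσc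
    refine (lintegral_enorm_sq_integral_fderiv_sub_mul_le
      (fun i ↦ contDiff_transportKernel s M (b i)) (fun i ↦ hK (b i))
      (fun i j ↦ fderiv_transportKernel_comm hs.ne' (b i) (b j)) hσ hσb hσc
      i j).trans ?_
    rw [ENNReal.coe_toNNReal hfin]
    gcongr
    refine le_trans ?_ le_self_add
    gcongr
    exact lintegral_enorm_sum_fderiv_transportKernel_le ν b hs M
  · intro r u hr hu
    rw [ENNReal.coe_toNNReal hfin]
    exact (setLIntegral_enorm_fderiv_transportKernel_sub_le ν hs ((hL (i, j)).weaken (hΛ _)) hr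
      hu).trans le_add_self

end TransportKernel

section Mollification

lemma lintegral_enorm_sub_lintegral_enorm_le {X : Type*} [MeasurableSpace X] {μ : Measure X}
    {f g : X → ℝ} (hf : Integrable f μ) (hg : Integrable g μ) (hf0 : 0 ≤ f) (hg0 : 0 ≤ g) :
    ∫⁻ x, ‖f x‖ₑ ∂μ - ∫⁻ x, ‖g x‖ₑ ∂μ ≤ ‖∫ x, (g x - f x) ∂μ‖ₑ := by
  have hofReal {h : X → ℝ} (hh : Integrable h μ) (hh0 : 0 ≤ h) :
      ∫⁻ x, ‖h x‖ₑ ∂μ = ‖∫ x, h x ∂μ‖ₑ := by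
    rw [Real.enorm_of_nonneg (integral_nonneg hh0),
      ofReal_integral_eq_lintegral_ofReal hh (.of_forall hh0)]
    exact lintegral_congr fun x ↦ Real.enorm_of_nonneg (hh0 x)
  rw [hofReal hf hf0, hofReal hg hg0, integral_sub hg hf, tsub_le_iff_left, ← enorm_neg (_ - _),
    neg_sub]
  simpa using enorm_add_le (∫ x, g x ∂μ) (∫ x, f x ∂μ - ∫ x, g x ∂μ)

variable {E : Type*} [NormedAddCommGroup E] [NormedSpace ℝ E] [MeasurableSpace E]
  {φ : E → ℝ} {μ : Measure E} {A : Set E} {s t : ℝ} {x : E}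

/-- The mollification of the measure `μ` at scale `t⁻¹` by the absolute value of `φ`, as an extended
nonnegative function. -/
noncomputable def mollification (φ : E → ℝ) (μ : Measure E) (t : ℝ) (x : E) : ℝ≥0∞ :=
  ∫⁻ y, ‖l1Dilation φ t (x - y)‖ₑ ∂μ

lemma mollification_eq_zero (hφ : ∀ x, 1 ≤ ‖x‖ → φ x = 0) (ht : 0 < t) (hA : μ Aᶜ = 0)
    (hx : ∀ y ∈ A, t⁻¹ ≤ dist x y) : mollification φ μ t x = 0 := by
  refine lintegral_eq_zero_of_ae_eq_zero ?_
  filter_upwards [mem_ae_iff.2 hA] with y hy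
  simp [l1Dilation_eq_zero hφ ht (dist_eq_norm x y ▸ hx y hy)]

lemma tendsto_mollification_atTop (hφ : ∀ x, 1 ≤ ‖x‖ → φ x = 0) (hA : IsClosed A)
    (hμA : μ Aᶜ = 0) (hx : x ∉ A) : Tendsto (fun t ↦ mollification φ μ t x) atTop (𝓝 0) := by
  obtain ⟨ε, hε, hball⟩ := Metric.isOpen_iff.1 hA.isOpen_compl x hx
  refine tendsto_const_nhds.congr' ?_
  filter_upwards [eventually_ge_atTop ε⁻¹] with t ht
  have ht0 : 0 < t := (inv_pos.2 hε).trans_le ht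
  refine (mollification_eq_zero hφ ht0 hμA fun y hy ↦ ?_).symm
  by_contra! hlt
  exact hball (mem_ball'.2 (hlt.trans_le (inv_le_of_inv_le₀ hε ht))) hy

variable [FiniteDimensional ℝ E] [BorelSpace E]

lemma measurable_enorm_l1Dilation_sub (hφ : Continuous φ) (t : ℝ) :
    Measurable fun p : E × E ↦ ‖l1Dilation φ t (p.1 - p.2)‖ₑ :=
  ((continuous_l1Dilation hφ t).comp (continuous_fst.sub continuous_snd)).measurable.enorm

lemma measurable_mollification [SFinite μ] (hφ : Continuous φ) (t : ℝ) :
    Measurable (mollification φ μ t) :=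
  (measurable_enorm_l1Dilation_sub hφ t).lintegral_prod_right'

variable (ν : Measure E) [ν.IsAddHaarMeasure]

lemma lintegral_mollification [SFinite μ] (hφ : Continuous φ) (ht : 0 < t) :
    ∫⁻ x, mollification φ μ t x ∂ν = (∫⁻ x, ‖φ x‖ₑ ∂ν) * μ univ := by
  unfold mollification
  rw [lintegral_lintegral_swap (measurable_enorm_l1Dilation_sub hφ t).aemeasurable]
  simp only [lintegral_sub_right_eq_self (fun x ↦ ‖l1Dilation φ t x‖ₑ),
    lintegral_enorm_l1Dilation ν φ ht, lintegral_const]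

lemma exists_mollification_mul_measure_closedBall_le (hφc : Continuous φ)
    (hφ : ∀ x, 1 ≤ ‖x‖ → φ x = 0) : ∃ b : ℝ≥0, ∀ (μ : Measure E) (s : ℝ) (x : E), 0 < s →
      mollification φ μ s⁻¹ x * ν (closedBall 0 s) ≤ b * μ (closedBall x s) := by
  obtain ⟨B, hB⟩ := hφc.bounded_above_of_compact_support (hasCompactSupport_of_le_norm hφ)
  have hfin : ENNReal.ofReal B * ν (closedBall 0 1) ≠ ⊤ :=
    ENNReal.mul_ne_top ENNReal.ofReal_ne_top measure_closedBall_lt_top.ne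
  refine ⟨(ENNReal.ofReal B * ν (closedBall 0 1)).toNNReal, fun μ s x hs ↦ ?_⟩
  rw [ENNReal.coe_toNNReal hfin]
  have hd : 0 ≤ s⁻¹ ^ finrank ℝ E := by positivity
  have hmoll : mollification φ μ s⁻¹ x ≤
      ENNReal.ofReal (s⁻¹ ^ finrank ℝ E) * ENNReal.ofReal B * μ (closedBall x s) := by
    rw [← lintegral_indicator_const isClosed_closedBall.measurableSet]
    refine lintegral_mono fun y ↦ ?_
    by_cases hy : y ∈ closedBall x s
    · rw [indicator_of_mem hy, ← ENNReal.ofReal_mul hd, ← ofReal_norm, l1Dilation, norm_mul,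
        Real.norm_of_nonneg hd]
      gcongr
      exact hB _
    · rw [mem_closedBall', not_le, dist_eq_norm] at hy
      simp [l1Dilation_eq_zero hφ (inv_pos.2 hs) (by simpa using hy.le)]
  have hscale : ENNReal.ofReal (s⁻¹ ^ finrank ℝ E) * ν (closedBall 0 s) = ν (closedBall 0 1) := by
    rw [← mul_one s, Measure.addHaar_closedBall_mul ν 0 hs.le zero_le_one, ← mul_assoc,
      ← ENNReal.ofReal_mul (by positivity), mul_one, inv_pow, inv_mul_cancel₀ (by positivity),
      ENNReal.ofReal_one, one_mul]
  calc mollification φ μ s⁻¹ x * ν (closedBall 0 s)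
      ≤ ENNReal.ofReal (s⁻¹ ^ finrank ℝ E) * ENNReal.ofReal B * μ (closedBall x s) *
          ν (closedBall 0 s) := by gcongr
    _ = ENNReal.ofReal B * (ENNReal.ofReal (s⁻¹ ^ finrank ℝ E) * ν (closedBall 0 s)) *
          μ (closedBall x s) := by ring
    _ = ENNReal.ofReal B * ν (closedBall 0 1) * μ (closedBall x s) := by rw [hscale]

-- The minimum of the coarse and a fine mollification is dominated by the former and tends to zero
-- off the null set `A`, so that its integral is negligible.
theorem lintegral_mul_measure_univ_le_of_lintegral_mollification_sub_le [IsFiniteMeasure μ]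
    (hφc : Continuous φ) (hφ : ∀ x, 1 ≤ ‖x‖ → φ x = 0) (hA : IsClosed A) (hνA : ν A = 0)
    (hμA : μ Aᶜ = 0) (hs : 0 < s) {τ : ℕ → ℝ} (hτ : Tendsto τ atTop atTop) {D : ℝ≥0∞}
    (hD : ∀ M, ∫⁻ x, (mollification φ μ s⁻¹ x - mollification φ μ (τ M) x) ∂ν ≤ D) :
    (∫⁻ x, ‖φ x‖ₑ ∂ν) * μ univ ≤ D := by
  have hφint : ∫⁻ x, ‖φ x‖ₑ ∂ν ≠ ⊤ :=
    (hφc.integrable_of_hasCompactSupport (hasCompactSupport_of_le_norm hφ)).2.ne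
  have hmass : ∫⁻ x, mollification φ μ s⁻¹ x ∂ν = (∫⁻ x, ‖φ x‖ₑ ∂ν) * μ univ :=
    lintegral_mollification ν hφc (inv_pos.2 hs)
  have hmin (M : ℕ) :
      Measurable fun x ↦ min (mollification φ μ s⁻¹ x) (mollification φ μ (τ M) x) :=
    (measurable_mollification hφc _).min (measurable_mollification hφc _)
  have hlim : Tendsto
      (fun M ↦ ∫⁻ x, min (mollification φ μ s⁻¹ x) (mollification φ μ (τ M) x) ∂ν)
      atTop (𝓝 (∫⁻ _, 0 ∂ν)) := by
    refine tendsto_lintegral_of_dominated_convergence (mollification φ μ s⁻¹) hmin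
      (fun M ↦ .of_forall fun x ↦ min_le_left _ _) ?_ ?_
    · rw [hmass]
      exact ENNReal.mul_ne_top hφint (measure_ne_top _ _)
    · filter_upwards [compl_mem_ae_iff.2 hνA] with x hx
      exact tendsto_of_tendsto_of_tendsto_of_le_of_le tendsto_const_nhds
        ((tendsto_mollification_atTop hφ hA hμA hx).comp hτ) (fun _ ↦ zero_le)
        fun M ↦ min_le_right _ _
  rw [lintegral_zero] at hlim
  refine ge_of_tendsto' (by simpa using hlim.const_add D) fun M ↦ ?_
  rw [← hmass]
  calc ∫⁻ x, mollification φ μ s⁻¹ x ∂ν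
      = ∫⁻ x, (mollification φ μ s⁻¹ x - mollification φ μ (τ M) x) +
          min (mollification φ μ s⁻¹ x) (mollification φ μ (τ M) x) ∂ν := by
        simp only [tsub_add_min]
    _ ≤ D + ∫⁻ x, min (mollification φ μ s⁻¹ x) (mollification φ μ (τ M) x) ∂ν := by
        rw [lintegral_add_right _ (hmin M)]
        gcongr
        exact hD M

end Mollification

section Defect

lemma min_sum_le_sum_min {ι : Type*} (t : Finset ι) (v : ℝ≥0∞) (f : ι → ℝ≥0∞) :
    min v (∑ i ∈ t, f i) ≤ ∑ i ∈ t, min v (f i) :=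
  Finset.le_sum_of_subadditive (min v) (min_le_right _ _)
    (fun x y ↦ (min_add_distrib v x y).trans_le (min_le_right _ _)) t f

lemma min_enorm_le_sum_min_enorm_add {ι : Type*} [Fintype ι] {v : ℝ≥0∞} {r z : ℝ} {T : ι → ℝ}
    {η : ℝ≥0} (h : |r - (∑ i, T i + z)| ≤ η) :
    min v ‖r‖ₑ ≤ ∑ i, min v ‖T i‖ₑ + ‖z‖ₑ + η := by
  have hη : ‖r - (∑ i, T i + z)‖ₑ ≤ η := by
    rw [Real.enorm_eq_ofReal_abs]
    exact ENNReal.ofReal_le_of_le_toReal h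
  have hr : ‖r‖ₑ ≤ ∑ i, ‖T i‖ₑ + (‖z‖ₑ + η) := by
    calc ‖r‖ₑ = ‖∑ i, T i + z + (r - (∑ i, T i + z))‖ₑ := by rw [add_sub_cancel]
      _ ≤ ‖∑ i, T i‖ₑ + ‖z‖ₑ + ‖r - (∑ i, T i + z)‖ₑ := enorm_add₃_le
      _ ≤ ∑ i, ‖T i‖ₑ + ‖z‖ₑ + η := by
          gcongr
          exact enorm_sum_le _ _
      _ = ∑ i, ‖T i‖ₑ + (‖z‖ₑ + η) := add_assoc _ _ _
  calc min v ‖r‖ₑ ≤ min v (∑ i, ‖T i‖ₑ + (‖z‖ₑ + η)) := by gcongr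
    _ ≤ min v (∑ i, ‖T i‖ₑ) + min v (‖z‖ₑ + η) :=
        (min_add_distrib _ _ _).trans_le (min_le_right _ _)
    _ ≤ ∑ i, min v ‖T i‖ₑ + (‖z‖ₑ + η) :=
        add_le_add (min_sum_le_sum_min _ _ _) (min_le_right _ _)
    _ = ∑ i, min v ‖T i‖ₑ + ‖z‖ₑ + η := (add_assoc _ _ _).symm

lemma exists_pos_forall_dist_le_norm_sub_le {X F : Type*} [PseudoMetricSpace X]
    [NormedAddCommGroup F] {f : X → F} (hf : Continuous f) (hfc : HasCompactSupport f) {η : ℝ}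
    (hη : 0 < η) : ∃ τ > 0, ∀ x y, dist x y ≤ τ → ‖f x - f y‖ ≤ η := by
  obtain ⟨τ, hτ, h⟩ :=
    Metric.uniformContinuous_iff.1 (hfc.uniformContinuous_of_continuous hf) η hη
  refine ⟨τ / 2, half_pos hτ, fun x y hxy ↦ ?_⟩
  rw [← dist_eq_norm]
  exact (h (hxy.trans_lt (half_lt_self hτ))).le

lemma lintegral_enorm_sum_mul_comp_sub_le {E ι : Type*} [NormedAddCommGroup E] [MeasurableSpace E]
    [BorelSpace E] (ν : Measure E) [ν.IsAddHaarMeasure] [Fintype ι] {f : E → ℝ} (hf : Measurable f)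
    (x : ι → E) (β : ι → ℝ) :
    ∫⁻ z, ‖∑ j, β j * f (z - x j)‖ₑ ∂ν ≤ (∑ j, ‖β j‖ₑ) * ∫⁻ z, ‖f z‖ₑ ∂ν := by
  calc ∫⁻ z, ‖∑ j, β j * f (z - x j)‖ₑ ∂ν
      ≤ ∫⁻ z, ∑ j, ‖β j‖ₑ * ‖f (z - x j)‖ₑ ∂ν :=
        lintegral_mono fun z ↦ (enorm_sum_le _ _).trans_eq (by simp only [enorm_mul])
    _ = (∑ j, ‖β j‖ₑ) * ∫⁻ z, ‖f z‖ₑ ∂ν := by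
        rw [lintegral_finsetSum _ fun j _ ↦ by fun_prop, Finset.sum_mul]
        refine Finset.sum_congr rfl fun j _ ↦ ?_
        rw [lintegral_const_mul' _ _ enorm_ne_top,
          lintegral_sub_right_eq_self (fun z ↦ ‖f z‖ₑ) (x j)]

lemma fderiv_comp_const_sub {E F : Type*} [NormedAddCommGroup E] [NormedSpace ℝ E]
    [NormedAddCommGroup F] [NormedSpace ℝ F] {f : E → F} (hf : Differentiable ℝ f) (x y : E) :
    fderiv ℝ (fun z ↦ f (x - z)) y = -fderiv ℝ f (x - y) := by
  have hcomp : HasFDerivAt (fun z ↦ f (x - z)) _ y :=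
    (hf (x - y)).hasFDerivAt.comp y ((hasFDerivAt_id y).const_sub x)
  ext v
  simp [hcomp.fderiv]

variable {E ι : Type*} [NormedAddCommGroup E] [InnerProductSpace ℝ E] [Fintype ι]

lemma map_eq_sum_apply_orthonormalBasis (b : OrthonormalBasis ι ℝ E)
    (α : (E →L[ℝ] ℝ) →ₗ[ℝ] ℝ) (L : E →L[ℝ] ℝ) : α L = ∑ i, α (innerSL ℝ (b i)) * L (b i) := by
  have hL : L = ∑ i, L (b i) • innerSL ℝ (b i) := by
    ext x
    conv_lhs => rw [← b.sum_repr' x]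
    simp [mul_comm]
  conv_lhs => rw [hL]
  simp [mul_comm]

variable [MeasurableSpace E] [BorelSpace E] {μ ν : Measure E} {e : E} {k : E → ℝ} {s R η : ℝ}

lemma IsDerivBound.exists_discretization [FiniteDimensional ℝ E] [IsFiniteMeasureOnCompacts μ]
    {a c : ℝ} (hμ : IsDerivBound μ e a c) (ha : 0 ≤ a)
    (hc : 0 ≤ c) (b : OrthonormalBasis ι ℝ E) (hk : ContDiff ℝ 1 k)
    (hks : ∀ x, s ≤ ‖x‖ → k x = 0) (R : ℝ) (hη : 0 < η) :
    ∃ (t : Finset E) (α : ι → t → ℝ) (β : t → ℝ), (∀ i, ∑ z, |α i z| ≤ a) ∧ ∑ z, |β z| ≤ c ∧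
      ∀ x ∈ closedBall 0 R, |∫ y, fderiv ℝ k (x - y) e ∂μ -
        (∑ i, ∑ z, α i z * fderiv ℝ k (x - z) (b i) + ∑ z, β z * k (x - z))| ≤ η := by
  have hkc := hasCompactSupport_of_le_norm hks
  set ζ : ℝ := η / (a + c + 1)
  have hζ : 0 < ζ := by positivity
  have hζη : (a + c) * ζ ≤ η := by
    rw [mul_div_left_comm]
    exact mul_le_of_le_one_right hη.le ((div_le_one (by positivity)).2 (by linarith))
  obtain ⟨τ₁, hτ₁, hfderiv⟩ := exists_pos_forall_dist_le_norm_sub_le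
    (hk.continuous_fderiv one_ne_zero) (hkc.fderiv ℝ) hζ
  obtain ⟨τ₂, hτ₂, hval⟩ := exists_pos_forall_dist_le_norm_sub_le hk.continuous hkc hζ
  obtain ⟨t, α, β, hα, hβ, happrox⟩ := hμ.exists_finset_approx ha hc
    (isCompact_closedBall 0 (R + s)) (lt_min hτ₁ hτ₂)
  refine ⟨t, fun i z ↦ α z (innerSL ℝ (b i)), fun z ↦ -β z, fun i ↦ ?_, by simpa using hβ,
    fun x hx ↦ ?_⟩
  · simpa using hα (innerSL ℝ (b i))
  have hw : (fun y ↦ k (x - y)) ∈ testFunctions (closedBall 0 (R + s)) := by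
    refine ⟨hk.comp (contDiff_const.sub contDiff_id), fun y hy ↦ hks _ ?_⟩
    rw [mem_closedBall_zero_iff] at hx hy
    linarith [norm_sub_norm_le y x, norm_sub_rev y x]
  have hw' (y : E) : fderiv ℝ (fun z ↦ k (x - z)) y = -fderiv ℝ k (x - y) :=
    fderiv_comp_const_sub (hk.differentiable one_ne_zero) x y
  have hswap : ∑ i, ∑ z, α z (innerSL ℝ (b i)) * fderiv ℝ k (x - z) (b i) =
      ∑ z, α z (fderiv ℝ k (x - z)) := by
    rw [Finset.sum_comm]
    exact Finset.sum_congr rfl fun z _ ↦ (map_eq_sum_apply_orthonormalBasis b _ _).symm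
  have hmain := happrox _ hw ζ hζ.le
    (fun y z hyz ↦ by
      rw [hw', hw', neg_sub_neg, norm_sub_rev]
      exact hfderiv _ _ ((dist_sub_left x y z).trans_le (hyz.trans (min_le_left _ _))))
    (fun y z hyz ↦ hval _ _ ((dist_sub_left x y z).trans_le (hyz.trans (min_le_right _ _))))
  simp only [hw', neg_apply, integral_neg, map_neg, Finset.sum_neg_distrib] at hmain
  rw [hswap, abs_sub_comm]
  simp only [neg_mul, Finset.sum_neg_distrib]
  refine (le_of_eq (congrArg _ ?_)).trans (hmain.trans hζη)
  ring

variable [FiniteDimensional ℝ E] [ν.IsAddHaarMeasure]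

lemma IsDerivBound.lintegral_min_enorm_le_add [Nontrivial E] [IsFiniteMeasure μ] {a c B C κ : ℝ≥0}
    (hμ : IsDerivBound μ e a c) (b : OrthonormalBasis ι ℝ E)
    (hk : ContDiff ℝ 1 k) (hs : 0 < s) (hks : ∀ x, s ≤ ‖x‖ → k x = 0)
    (hcz : ∀ i, IsCZKernel ν C fun x ↦ fderiv ℝ k x (b i)) {v : E → ℝ≥0∞} (hvm : Measurable v)
    (hv : ∀ x, v x * ν (closedBall 0 s) ≤ B * μ (closedBall x s))
    (hvR : ∀ x ∉ closedBall 0 R, v x = 0) (hκ : κ ≠ 0) {η : ℝ≥0} (hη : η ≠ 0) :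
    ∫⁻ x, min (v x) ‖∫ y, fderiv ℝ k (x - y) e ∂μ‖ₑ ∂ν ≤
      Fintype.card ι * (2 ^ finrank ℝ E *
        ((B / κ * 10 ^ finrank ℝ E + 2 * C) * a + κ * μ univ)) + c * ∫⁻ x, ‖k x‖ₑ ∂ν +
        η * ν (closedBall 0 R) := by
  obtain ⟨t, α, β, hα, hβ, happrox⟩ :=
    hμ.exists_discretization a.2 c.2 b hk hks R (NNReal.coe_pos.2 (pos_iff_ne_zero.2 hη))
  have henorm {f : t → ℝ} {r : ℝ≥0} (hf : ∑ z, |f z| ≤ r) : ∑ z, ‖f z‖ₑ ≤ r := by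
    simp only [Real.enorm_eq_ofReal_abs]
    rw [← ENNReal.ofReal_sum_of_nonneg fun z _ ↦ abs_nonneg _]
    exact ENNReal.ofReal_le_of_le_toReal hf
  set T : ι → E → ℝ := fun i x ↦ ∑ z, α i z * fderiv ℝ k (x - z) (b i)
  set Z : E → ℝ := fun x ↦ ∑ z, β z * k (x - z)
  have hTm (i : ι) : Measurable (T i) := Finset.measurable_fun_sum _ fun z _ ↦
    (((hcz i).continuous.comp (continuous_sub_right _)).measurable).const_mul _
  have hZm : Measurable Z := Finset.measurable_fun_sum _ fun z _ ↦
    ((hk.continuous.comp (continuous_sub_right _)).measurable).const_mul _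
  have hpt (x : E) : min (v x) ‖∫ y, fderiv ℝ k (x - y) e ∂μ‖ₑ ≤
      ∑ i, min (v x) ‖T i x‖ₑ + ‖Z x‖ₑ + (closedBall 0 R).indicator (fun _ ↦ (η : ℝ≥0∞)) x := by
    by_cases hx : x ∈ closedBall 0 R
    · simpa only [indicator_of_mem hx] using min_enorm_le_sum_min_enorm_add (happrox x hx)
    · simp [hvR x hx]
  have hTint (i : ι) : ∫⁻ x, min (v x) ‖T i x‖ₑ ∂ν ≤ 2 ^ finrank ℝ E *
      ((B / κ * 10 ^ finrank ℝ E + 2 * C) * a + κ * μ univ) := by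
    refine ((hcz i).lintegral_min_enorm_sum_le hs (fun x hx ↦ ?_) hκ hvm hv _ _).trans ?_
    · rw [fderiv_eq_zero_of_le_norm hk hs.ne' hks hx, zero_apply]
    · gcongr
      exact henorm (hα i)
  calc ∫⁻ x, min (v x) ‖∫ y, fderiv ℝ k (x - y) e ∂μ‖ₑ ∂ν
      ≤ ∫⁻ x, ∑ i, min (v x) ‖T i x‖ₑ + ‖Z x‖ₑ +
          (closedBall 0 R).indicator (fun _ ↦ (η : ℝ≥0∞)) x ∂ν := lintegral_mono hpt
    _ = ∑ i, ∫⁻ x, min (v x) ‖T i x‖ₑ ∂ν + ∫⁻ x, ‖Z x‖ₑ ∂ν + η * ν (closedBall 0 R) := by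
        rw [lintegral_add_right _
            (measurable_const.indicator isClosed_closedBall.measurableSet),
          lintegral_indicator_const isClosed_closedBall.measurableSet,
          lintegral_add_right _ hZm.enorm,
          lintegral_finsetSum _ fun i _ ↦ hvm.min (hTm i).enorm]
    _ ≤ _ := by
        gcongr
        · exact (Finset.sum_le_sum fun i _ ↦ hTint i).trans_eq (by simp)
        · refine (lintegral_enorm_sum_mul_comp_sub_le ν hk.continuous.measurable _ β).trans ?_
          gcongr
          exact henorm hβ

theorem IsDerivBound.lintegral_min_enorm_le [Nontrivial E] [IsFiniteMeasure μ] {a c B C κ : ℝ≥0}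
    (hμ : IsDerivBound μ e a c) (b : OrthonormalBasis ι ℝ E)
    (hk : ContDiff ℝ 1 k) (hs : 0 < s) (hks : ∀ x, s ≤ ‖x‖ → k x = 0)
    (hcz : ∀ i, IsCZKernel ν C fun x ↦ fderiv ℝ k x (b i)) {v : E → ℝ≥0∞} (hvm : Measurable v)
    (hv : ∀ x, v x * ν (closedBall 0 s) ≤ B * μ (closedBall x s))
    (hvR : ∀ x ∉ closedBall 0 R, v x = 0) (hκ : κ ≠ 0) :
    ∫⁻ x, min (v x) ‖∫ y, fderiv ℝ k (x - y) e ∂μ‖ₑ ∂ν ≤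
      Fintype.card ι * (2 ^ finrank ℝ E *
        ((B / κ * 10 ^ finrank ℝ E + 2 * C) * a + κ * μ univ)) + c * ∫⁻ x, ‖k x‖ₑ ∂ν := by
  set D : ℝ≥0∞ := Fintype.card ι * (2 ^ finrank ℝ E *
    ((B / κ * 10 ^ finrank ℝ E + 2 * C) * a + κ * μ univ)) + c * ∫⁻ x, ‖k x‖ₑ ∂ν
  have hη : Tendsto (fun η : ℝ≥0 ↦ (η : ℝ≥0∞)) (𝓝[>] 0) (𝓝 0) :=
    ENNReal.tendsto_coe.2 (tendsto_nhdsWithin_of_tendsto_nhds tendsto_id)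
  have hlim : Tendsto (fun η : ℝ≥0 ↦ D + η * ν (closedBall 0 R)) (𝓝[>] 0) (𝓝 D) := by
    simpa using (ENNReal.Tendsto.mul_const hη (.inr measure_closedBall_lt_top.ne)).const_add D
  refine ge_of_tendsto hlim ?_
  filter_upwards [self_mem_nhdsWithin] with η hη0
  exact hμ.lintegral_min_enorm_le_add b hk hs hks hcz hvm hv hvR hκ hη0.ne'

end Defect

lemma integrable_comp_const_sub {E : Type*} [NormedAddCommGroup E] [MeasurableSpace E]
    [BorelSpace E] {μ : Measure E} [IsFiniteMeasure μ] {f : E → ℝ} (hf : Continuous f)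
    (hfc : HasCompactSupport f) (x : E) : Integrable (fun y ↦ f (x - y)) μ := by
  obtain ⟨B, hB⟩ := hf.bounded_above_of_compact_support hfc
  exact .of_bound (hf.comp (continuous_sub_left x)).aestronglyMeasurable B
    (.of_forall fun y ↦ hB _)

lemma measurable_integral_comp_sub {E : Type*} [NormedAddCommGroup E] [MeasurableSpace E]
    [BorelSpace E] [SecondCountableTopology E] {μ : Measure E} [SFinite μ] {f : E → ℝ}
    (hf : Continuous f) : Measurable fun x ↦ ∫ y, f (x - y) ∂μ :=
  (hf.comp continuous_sub).stronglyMeasurable.integral_prod_right'.measurable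

section Rigidity

variable {E ι : Type*} [NormedAddCommGroup E] [InnerProductSpace ℝ E] [FiniteDimensional ℝ E]
  [MeasurableSpace E] [BorelSpace E] [Fintype ι] {μ : Measure E} [IsFiniteMeasure μ]

lemma mollification_radialBump_sub_le {s : ℝ} (hs : 0 < s) (M : ℕ) (b : OrthonormalBasis ι ℝ E)
    (x : E) :
    mollification radialBump μ s⁻¹ x - mollification radialBump μ (2 ^ M / s) x ≤
      ∑ i, min (mollification radialBump μ s⁻¹ x)
        ‖∫ y, fderiv ℝ (transportKernel s M (b i)) (x - y) (b i) ∂μ‖ₑ := by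
  have hpos {t : ℝ} (ht : 0 ≤ t) : 0 ≤ fun y ↦ l1Dilation radialBump t (x - y) :=
    fun y ↦ mul_nonneg (pow_nonneg ht _) (radialBump_nonneg _)
  have hint (i : ι) :
      Integrable (fun y ↦ fderiv ℝ (transportKernel s M (b i)) (x - y) (b i)) μ :=
    integrable_comp_const_sub (continuous_fderiv_transportKernel_apply s M _ _)
      ((hasCompactSupport_of_le_norm fun _ ↦ transportKernel_eq_zero hs).fderiv_apply ℝ _) x
  have hdil {t : ℝ} (ht : 0 < t) : Integrable (fun y ↦ l1Dilation radialBump t (x - y)) μ :=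
    integrable_comp_const_sub (continuous_l1Dilation continuous_radialBump t)
      (hasCompactSupport_of_le_norm fun _ ↦ l1Dilation_eq_zero (fun _ ↦ radialBump_of_one_le_norm)
        ht) x
  refine le_trans (le_min tsub_le_self ?_) (min_sum_le_sum_min _ _ _)
  calc mollification radialBump μ s⁻¹ x - mollification radialBump μ (2 ^ M / s) x
      ≤ ‖∫ y, (l1Dilation radialBump (2 ^ M / s) (x - y) -
          l1Dilation radialBump s⁻¹ (x - y)) ∂μ‖ₑ :=
        lintegral_enorm_sub_lintegral_enorm_le (hdil (by positivity)) (hdil (by positivity))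
          (hpos (by positivity)) (hpos (by positivity))
    _ = ‖∑ i, ∫ y, fderiv ℝ (transportKernel s M (b i)) (x - y) (b i) ∂μ‖ₑ := by
        simp only [← sum_fderiv_transportKernel b hs.ne']
        rw [integral_finsetSum _ fun i _ ↦ hint i]
    _ ≤ ∑ i, ‖∫ y, fderiv ℝ (transportKernel s M (b i)) (x - y) (b i) ∂μ‖ₑ := enorm_sum_le _ _

variable (ν : Measure E) [ν.IsAddHaarMeasure]

lemma lintegral_mollification_radialBump_sub_le [Nontrivial E] {s R : ℝ} {a c A B C κ : ℝ≥0} {M : ℕ}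
    (b : OrthonormalBasis ι ℝ E) (hμ : ∀ i, IsDerivBound μ (b i) a c) (hs : 0 < s)
    (hμR : μ (closedBall 0 R)ᶜ = 0)
    (hA : ∀ i, ∫⁻ x, ‖annularField (b i) x‖ₑ ∂ν ≤ A)
    (hB : ∀ x, mollification radialBump μ s⁻¹ x * ν (closedBall 0 s) ≤ B * μ (closedBall x s))
    (hC : ∀ i j, IsCZKernel ν C fun x ↦ fderiv ℝ (transportKernel s M (b i)) x (b j))
    (hκ : κ ≠ 0) :
    ∫⁻ x, (mollification radialBump μ s⁻¹ x - mollification radialBump μ (2 ^ M / s) x) ∂ν ≤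
      Fintype.card ι * (Fintype.card ι * (2 ^ finrank ℝ E *
        ((B / κ * 10 ^ finrank ℝ E + 2 * C) * a + κ * μ univ)) +
          c * (ENNReal.ofReal (2 * s) * A)) := by
  have hVm : Measurable (mollification radialBump μ s⁻¹) :=
    measurable_mollification continuous_radialBump _
  have hVR (x : E) (hx : x ∉ closedBall 0 (R + s)) : mollification radialBump μ s⁻¹ x = 0 := by
    refine mollification_eq_zero (fun _ ↦ radialBump_of_one_le_norm) (inv_pos.2 hs) hμR
      fun y hy ↦ ?_
    rw [mem_closedBall_zero_iff] at hx hy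
    rw [inv_inv, dist_eq_norm]
    linarith [norm_sub_norm_le x y]
  have hdir (i : ι) : ∫⁻ x, min (mollification radialBump μ s⁻¹ x)
      ‖∫ y, fderiv ℝ (transportKernel s M (b i)) (x - y) (b i) ∂μ‖ₑ ∂ν ≤
      Fintype.card ι * (2 ^ finrank ℝ E *
        ((B / κ * 10 ^ finrank ℝ E + 2 * C) * a + κ * μ univ)) +
          c * (ENNReal.ofReal (2 * s) * A) := by
    refine ((hμ i).lintegral_min_enorm_le b (contDiff_transportKernel (k := 1) s M _) hs
      (fun x ↦ transportKernel_eq_zero hs) (hC i) hVm hB hVR hκ).trans ?_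
    gcongr
    refine (lintegral_enorm_transportKernel_le ν hs M _).trans ?_
    gcongr
    exact hA i
  calc ∫⁻ x, (mollification radialBump μ s⁻¹ x - mollification radialBump μ (2 ^ M / s) x) ∂ν
      ≤ ∫⁻ x, ∑ i, min (mollification radialBump μ s⁻¹ x)
          ‖∫ y, fderiv ℝ (transportKernel s M (b i)) (x - y) (b i) ∂μ‖ₑ ∂ν :=
        lintegral_mono fun x ↦ mollification_radialBump_sub_le hs M b x
    _ = ∑ i, ∫⁻ x, min (mollification radialBump μ s⁻¹ x)
          ‖∫ y, fderiv ℝ (transportKernel s M (b i)) (x - y) (b i) ∂μ‖ₑ ∂ν :=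
        lintegral_finsetSum _ fun i _ ↦ hVm.min
          (measurable_integral_comp_sub (continuous_fderiv_transportKernel_apply s M _ _)).enorm
    _ ≤ _ := (Finset.sum_le_sum fun i _ ↦ hdir i).trans_eq
        (by rw [Finset.sum_const, Finset.card_univ, nsmul_eq_mul])

theorem exists_lintegral_mollification_radialBump_sub_le [Nontrivial E] {R : ℝ}
    (b : OrthonormalBasis ι ℝ E) (hμR : μ (closedBall 0 R)ᶜ = 0) :
    ∃ D : ℝ≥0, ∀ {a c κ s : ℝ≥0} (M : ℕ), (∀ i, IsDerivBound μ (b i) a c) → κ ≠ 0 → s ≠ 0 →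
      ∫⁻ x, (mollification radialBump μ s⁻¹ x - mollification radialBump μ (2 ^ M / s) x) ∂ν ≤
        D * (a / κ + a + κ + c * s) := by
  have hannular (i : ι) : ∃ A : ℝ≥0, ∫⁻ x, ‖annularField (b i) x‖ₑ ∂ν ≤ A := by
    have hint : Integrable (annularField (b i)) ν :=
      (contDiff_annularField (k := 0) _).continuous.integrable_of_hasCompactSupport
        (hasCompactSupport_of_le_norm fun _ ↦ annularField_eq_zero)
    exact ⟨_, (ENNReal.coe_toNNReal hint.2.ne).ge⟩
  choose A' hA' using hannular
  obtain ⟨A, hA⟩ := Finite.exists_le A'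
  obtain ⟨B, hB⟩ := exists_mollification_mul_measure_closedBall_le ν continuous_radialBump
    fun _ ↦ radialBump_of_one_le_norm
  obtain ⟨C, hC⟩ := exists_isCZKernel_fderiv_transportKernel ν b
  obtain ⟨m, hm⟩ : ∃ m : ℝ≥0, μ univ = m := ⟨_, (ENNReal.coe_toNNReal (measure_ne_top μ _)).symm⟩
  set p := Fintype.card ι
  set d := finrank ℝ E
  refine ⟨p * (p * (2 ^ d * (B * 10 ^ d + 2 * C + m)) + 2 * A), fun {a c κ s} M hμ hκ hs ↦ ?_⟩
  have hs0 : (0 : ℝ) < s := NNReal.coe_pos.2 (pos_iff_ne_zero.2 hs)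
  set S : ℝ≥0∞ := a / κ + a + κ + c * s
  calc ∫⁻ x, (mollification radialBump μ s⁻¹ x - mollification radialBump μ (2 ^ M / s) x) ∂ν
      ≤ p * (p * (2 ^ d * ((B / κ * 10 ^ d + 2 * C) * a + κ * μ univ)) +
          c * (ENNReal.ofReal (2 * s) * A)) :=
        lintegral_mollification_radialBump_sub_le ν b hμ hs0 hμR
          (fun i ↦ (hA' i).trans (by exact_mod_cast hA i)) (fun x ↦ hB μ s x hs0) (hC s hs0 M) hκ
    _ = p * (p * (2 ^ d * (B * 10 ^ d * (a / κ) + 2 * C * a + m * κ)) + 2 * A * (c * s)) := by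
        rw [hm, ENNReal.ofReal_mul zero_le_two, ENNReal.ofReal_ofNat, ENNReal.ofReal_coe_nnreal]
        simp only [div_eq_mul_inv]
        ring
    _ ≤ p * (p * (2 ^ d * (B * 10 ^ d * S + 2 * C * S + m * S)) + 2 * A * S) := by
        gcongr
        · exact le_self_add.trans (le_self_add.trans le_self_add)
        · exact le_add_self.trans (le_self_add.trans le_self_add)
        · exact le_add_self.trans le_self_add
        · exact le_add_self
    _ = _ := by
        push_cast
        ring

lemma lintegral_enorm_radialBump_ne_zero [Nontrivial E] :
    ∫⁻ x : E, ‖radialBump x‖ₑ ∂ν ≠ 0 := by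
  rw [Ne, lintegral_eq_zero_iff continuous_radialBump.measurable.enorm]
  intro h
  have hzero : radialBump =ᵐ[ν] (fun _ ↦ 0 : E → ℝ) := h.mono fun x hx ↦ by simpa using hx
  rw [continuous_radialBump.ae_eq_iff_eq ν continuous_const] at hzero
  exact radialBump_zero_pos.ne' (congrFun hzero (0 : E))

theorem measure_univ_eq_zero_of_isDerivBound [Nontrivial E] {A : Set E}
    (b : OrthonormalBasis ι ℝ E) (hA : IsCompact A) (hνA : ν A = 0) (hμA : μ Aᶜ = 0)
    (hμ : ∀ a : ℝ≥0, a ≠ 0 → ∃ c : ℝ≥0, ∀ i, IsDerivBound μ (b i) a c) : μ univ = 0 := by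
  obtain ⟨R, hR⟩ := hA.isBounded.subset_closedBall 0
  obtain ⟨D, hD⟩ := exists_lintegral_mollification_radialBump_sub_le ν b
    (measure_mono_null (compl_subset_compl.2 hR) hμA)
  have hbound {κ : ℝ≥0} (hκ : 0 < κ) (hκ1 : κ < 1) :
      (∫⁻ x : E, ‖radialBump x‖ₑ ∂ν) * μ univ ≤ D * (4 * κ) := by
    obtain ⟨c, hc⟩ := hμ (κ ^ 2) (pow_ne_zero _ hκ.ne')
    set s : ℝ≥0 := κ / (c + 1)
    have hs : 0 < s := by positivity
    refine lintegral_mul_measure_univ_le_of_lintegral_mollification_sub_le ν continuous_radialBump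
      (fun _ ↦ radialBump_of_one_le_norm) hA.isClosed hνA hμA (NNReal.coe_pos.2 hs)
      ((tendsto_pow_atTop_atTop_of_one_lt one_lt_two).atTop_div_const (NNReal.coe_pos.2 hs))
      fun M ↦ (hD M hc hκ.ne' hs.ne').trans ?_
    have hcs : c * s ≤ κ := by
      rw [mul_div_left_comm]
      exact mul_le_of_le_one_right' (div_le_one_of_le₀ le_self_add zero_le)
    have hsum : κ ^ 2 / κ + κ ^ 2 + κ + c * s ≤ 4 * κ := by
      have hsq : κ ^ 2 ≤ κ := pow_le_of_le_one zero_le hκ1.le two_ne_zero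
      have hdiv : κ ^ 2 / κ = κ := by field_simp
      rw [hdiv]
      linarith
    gcongr
    rw [← ENNReal.coe_div hκ.ne']
    exact_mod_cast hsum
  have hlim : Tendsto (fun κ : ℝ≥0 ↦ (D * (4 * κ) : ℝ≥0∞)) (𝓝[>] 0) (𝓝 0) := by
    have hcont : Continuous fun κ : ℝ≥0 ↦ D * (4 * κ) := by fun_prop
    simpa using ENNReal.tendsto_coe.2 ((hcont.tendsto 0).mono_left nhdsWithin_le_nhds)
  have hzero : (∫⁻ x : E, ‖radialBump x‖ₑ ∂ν) * μ univ ≤ 0 := by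
    refine ge_of_tendsto hlim ?_
    filter_upwards [Ioo_mem_nhdsGT one_pos] with κ hκ using hbound hκ.1 hκ.2
  refine (mul_eq_zero.1 (nonpos_iff_eq_zero.1 hzero)).resolve_left ?_
  exact lintegral_enorm_radialBump_ne_zero ν

end Rigidity

section General

variable {E : Type*} [NormedAddCommGroup E] [InnerProductSpace ℝ E] [FiniteDimensional ℝ E]
  [MeasurableSpace E] [BorelSpace E]

lemma IsDiffSpace.exists_isDerivBound [Nontrivial E] {m μ : Measure E} [IsFiniteMeasure μ] {e : E}
    (hm : IsDiffSpace m) (hμm : μ ≪ m) (he : ‖e‖ = 1) {a : ℝ≥0} (ha : a ≠ 0) :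
    ∃ c : ℝ≥0, IsDerivBound μ e a c := by
  obtain ⟨ε, hε, hempty⟩ : ∃ ε : ℝ≥0, ε ≠ 0 ∧ steepFunctions μ e a ε = ∅ := by
    by_contra! hne
    obtain ⟨K, c, g, hK, hμK, hc, hg⟩ := exists_isVanishingSteepSeq (μ := μ)
      (NNReal.coe_pos.2 (pos_iff_ne_zero.2 ha)) he.le fun ε hε ↦
        hne ⟨ε, hε.le⟩ (NNReal.coe_ne_zero.1 hε.ne')
    exact hμK.ne' (hμm (hm.measure_eq_zero hK.measurableSet
      (hg.hasIndependentFamilies hK hc he)))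
  exact ⟨a / ε, by
    simpa using isDerivBound_of_steepFunctions_eq_empty (by positivity) (by positivity) hempty⟩

theorem stmt12_general (ν : Measure E) [ν.IsAddHaarMeasure] (m : Measure E)
    [IsFiniteMeasureOnCompacts m] (hdiff : IsDiffSpace m) : m ≪ ν := by
  refine .mk fun A hA hνA ↦ ?_
  rcases subsingleton_or_nontrivial E with _ | _
  · rcases A.eq_empty_or_nonempty with rfl | hne
    · exact measure_empty
    · exact absurd (hνA.symm.trans (by rw [hne.eq_univ])) (NeZero.ne' _)
  by_contra hmA
  obtain ⟨K, hKA, hK, hmK⟩ := hA.exists_lt_isCompact (pos_iff_ne_zero.2 hmA)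
  set b := stdOrthonormalBasis ℝ E
  have : IsFiniteMeasure (m.restrict K) := isFiniteMeasure_restrict.2 hK.measure_lt_top.ne
  have hμ {a : ℝ≥0} (ha : a ≠ 0) : ∃ c : ℝ≥0, ∀ i, IsDerivBound (m.restrict K) (b i) a c := by
    choose c hc using fun i ↦ hdiff.exists_isDerivBound (μ := m.restrict K)
      Measure.restrict_le_self.absolutelyContinuous (b.norm_eq_one i) ha
    obtain ⟨c', hc'⟩ := Finite.exists_le c
    exact ⟨c', fun i ↦ (hc i).mono (hc' i)⟩
  refine hmK.ne' ?_
  rw [← Measure.restrict_apply_univ]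
  exact measure_univ_eq_zero_of_isDerivBound ν b hK (measure_mono_null hKA hνA)
    (by rw [Measure.restrict_apply hK.measurableSet.compl, compl_inter_self, measure_empty])
    fun a ↦ hμ

end General

/-- Rigidity Theorem I: if `(ℝⁿ, d_Euclid, m)` is a Lipschitz differentiability space for a
Radon measure `m`, then `m` is absolutely continuous w.r.t. the Lebesgue measure. -/
theorem stmt12 (n : ℕ) (m : Measure (EuclideanSpace ℝ (Fin n)))
    [IsFiniteMeasureOnCompacts m] [m.Regular]
    (hdiff : IsDiffSpace m) :
    m ≪ (volume : Measure (EuclideanSpace ℝ (Fin n))) :=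
  stmt12_general volume m hdiff
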